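/- Let V ⊆ ℂ^n be an irreducible variety of dimension d, and let P_1,…,P_{n−d} be polynomials such that for every 1 ≤ i ≤ n−d: deg(P_i) = δ_i(V), the maximal dimension of an irreducible component of Z(P_1,…,P_i) containing V is n−i, and Z(P_1,…,P_i) contains an (n−i)-minimal variety of V. Then for every 1 ≤ m ≤ n−d, every irreducible component W of Z(P_1,…,P_m) that has dimension n−m and contains V satisfies deg(W) ∼_n ∏_{i=1}^m δ_i(V) and δ_i(W) ∼_n δ_i(V) for every 1 ≤ i ≤ m, where X ∼_n Y means c(n)·Y ≤ X ≤ C(n)·Y for constants 0 < c(n) ≤ C(n) depending only on n. -/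

import Mathlib

open MvPolynomial Set

noncomputable section

namespace Paper

variable (n : ℕ)

/-- The zero locus in `ℂⁿ` of a set of polynomials. -/
def zeroLocus (I : Set (MvPolynomial (Fin n) ℂ)) : Set (Fin n → ℂ) :=
  {x | ∀ f ∈ I, eval x f = 0}

/-- A subset of `ℂⁿ` is algebraic if it is the zero locus of a set of polynomials. -/
def IsAlgebraicSet (V : Set (Fin n → ℂ)) : Prop :=
  ∃ I : Set (MvPolynomial (Fin n) ℂ), V = zeroLocus n I

/-- An irreducible (affine) variety in `ℂⁿ`: a nonempty algebraic set that is not covered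
by two algebraic sets unless it is contained in one of them. -/
def IsIrredVariety (V : Set (Fin n → ℂ)) : Prop :=
  IsAlgebraicSet n V ∧ V.Nonempty ∧
    ∀ V₁ V₂ : Set (Fin n → ℂ), IsAlgebraicSet n V₁ → IsAlgebraicSet n V₂ →
      V ⊆ V₁ ∪ V₂ → V ⊆ V₁ ∨ V ⊆ V₂

/-- There is a strictly increasing chain of `d + 1` irreducible varieties inside `V`. -/
def HasChain (V : Set (Fin n → ℂ)) (d : ℕ) : Prop :=
  ∃ W : Fin (d + 1) → Set (Fin n → ℂ),
    (∀ i, IsIrredVariety n (W i)) ∧ (∀ i j : Fin (d + 1), i < j → W i ⊂ W j) ∧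
      W (Fin.last d) ⊆ V

/-- The (Krull) dimension of a subset of `ℂⁿ`, as the length of the longest chain of
irreducible subvarieties. -/
def dim (V : Set (Fin n → ℂ)) : ℕ := sSup {d | HasChain n V d}

/-- `W` is an irreducible component of `X`: an irreducible subvariety that is maximal among
irreducible subvarieties of `X`. -/
def IsIrredComponent (W X : Set (Fin n → ℂ)) : Prop :=
  IsIrredVariety n W ∧ W ⊆ X ∧
    ∀ W', IsIrredVariety n W' → W ⊆ W' → W' ⊆ X → W' = W

/-- The degree of an irreducible variety `V ⊆ ℂⁿ` of dimension `d` (i.e. the degree of its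
projective closure): the largest finite number of points in which an affine-linear subspace of
dimension `n - d` meets `V`. -/
def degree (V : Set (Fin n → ℂ)) : ℕ :=
  sSup { m | ∃ L : AffineSubspace ℂ (Fin n → ℂ),
    Module.finrank ℂ L.direction = n - dim n V ∧ (V ∩ ↑L).Finite ∧ (V ∩ ↑L).ncard = m }

/-- The degree of an algebraic set: the sum of the degrees of its irreducible components. -/
def degreeSum (X : Set (Fin n → ℂ)) : ℕ :=
  ∑ᶠ W ∈ {W | IsIrredComponent n W X}, degree n W

/-- The maximal dimension of an irreducible component of `X` containing `V` equals `e`. -/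
def MaxCompDimEq (X V : Set (Fin n → ℂ)) (e : ℕ) : Prop :=
  (∃ W, IsIrredComponent n W X ∧ V ⊆ W ∧ dim n W = e) ∧
    ∀ W, IsIrredComponent n W X → V ⊆ W → dim n W ≤ e

/-- The partial degrees `δ_i(V)` of an irreducible variety `V`:  the minimal `δ` such that there
are polynomials of degree at most `δ` cutting out an algebraic set containing `V` whose
irreducible components containing `V` have maximal dimension `n - i`.  By convention
`δ_0(V) = 0`. -/
def partialDeg (V : Set (Fin n → ℂ)) (i : ℕ) : ℕ :=
  if i = 0 then 0
  else sInf { δ | ∃ I : Finset (MvPolynomial (Fin n) ℂ),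
    (∀ f ∈ I, f.totalDegree ≤ δ) ∧ V ⊆ zeroLocus n ↑I ∧
      MaxCompDimEq n (zeroLocus n ↑I) V (n - i) }

/-- The partial degrees as extended naturals, with the convention `δ_i(V) = ∞` for
`i > n - dim V`. -/
def partialDegE (V : Set (Fin n → ℂ)) (i : ℕ) : ℕ∞ :=
  if i ≤ n - dim n V then (partialDeg n V i : ℕ∞) else ⊤

/-- `δ(V)` for an irreducible variety `V`: the minimal `δ` such that `V` is an irreducible
component of the zero set of a finite family of polynomials of degree at most `δ`. -/
def deltaIrr (V : Set (Fin n → ℂ)) : ℕ :=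
  sInf { δ | ∃ I : Finset (MvPolynomial (Fin n) ℂ),
    (∀ f ∈ I, f.totalDegree ≤ δ) ∧ IsIrredComponent n V (zeroLocus n ↑I) }

/-- `δ(V)` for a general algebraic set `V`: the minimal `δ` such that every irreducible
component of `V` is an irreducible component of the zero set of a finite family of polynomials
of degree at most `δ`. -/
def deltaSet (V : Set (Fin n → ℂ)) : ℕ :=
  sInf { δ | ∃ I : Finset (MvPolynomial (Fin n) ℂ),
    (∀ f ∈ I, f.totalDegree ≤ δ) ∧
      ∀ W, IsIrredComponent n W V → IsIrredComponent n W (zeroLocus n ↑I) }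

/-- An algebraic set all of whose irreducible components have dimension `d`. -/
def IsAlgSetOfDim (V : Set (Fin n → ℂ)) (d : ℕ) : Prop :=
  IsAlgebraicSet n V ∧ V.Nonempty ∧ ∀ W, IsIrredComponent n W V → dim n W = d

/-- `Δ_i(V) = max (deg V / (δ_{i+1}(V) ⋯ δ_{n-d}(V))) 1`. -/
def Delta (V : Set (Fin n → ℂ)) (i : ℕ) : ℝ :=
  max ((degree n V : ℝ) / ∏ j ∈ Finset.Icc (i + 1) (n - dim n V), (partialDeg n V j : ℝ)) 1

/-- `i` is admissible with respect to `V` if `δ_{i+1}(V) > 2 i δ_i(V)` (with the convention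
`δ_i(V) = ∞` for `i > n - dim V`). -/
def Admissible (V : Set (Fin n → ℂ)) (i : ℕ) : Prop :=
  ((2 * i : ℕ) : ℕ∞) * partialDegE n V i < partialDegE n V (i + 1)

/-- The interval `ℛ_i(V) = [c₁ δ_i(V)^{n-i} Δ_i(V), (c₀/2) δ_{i+1}(V)^{n-i} Δ_i(V)]`,
where `δ_{n-d+1}(V) = ∞` makes the last interval a half-line. -/
def RSet (c0 c1 : ℝ) (V : Set (Fin n → ℂ)) (i : ℕ) : Set ℝ :=
  if i = n - dim n V then
    Set.Ici (c1 * (partialDeg n V i : ℝ) ^ (n - i) * Delta n V i)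
  else
    Set.Icc (c1 * (partialDeg n V i : ℝ) ^ (n - i) * Delta n V i)
      ((c0 / 2) * (partialDeg n V (i + 1) : ℝ) ^ (n - i) * Delta n V i)

/-- The interval `ℛ^l_{s,τ}(V) = [τ δ_s(V)^{n-(s+l)} Δ_s(V), τ δ_{s+1}(V)^{n-(s+l)} Δ_s(V)]`,
where `δ_{n-d+1}(V) = ∞` makes the last interval a half-line. -/
def RlSet (τ : ℝ) (l : ℕ) (V : Set (Fin n → ℂ)) (s : ℕ) : Set ℝ :=
  if s = n - dim n V then
    Set.Ici (τ * (partialDeg n V s : ℝ) ^ (n - (s + l)) * Delta n V s)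
  else
    Set.Icc (τ * (partialDeg n V s : ℝ) ^ (n - (s + l)) * Delta n V s)
      (τ * (partialDeg n V (s + 1) : ℝ) ^ (n - (s + l)) * Delta n V s)

/-- The ideal `I(V)` of polynomials vanishing on `V ⊆ ℂⁿ`. -/
def vanishingIdeal (V : Set (Fin n → ℂ)) : Ideal (MvPolynomial (Fin n) ℂ) where
  carrier := {f | ∀ x ∈ V, eval x f = 0}
  add_mem' := by
    intro a b ha hb x hx
    simp [ha x hx, hb x hx]
  zero_mem' := by
    intro x hx
    simp
  smul_mem' := by
    intro c f hf x hx
    simp [smul_eq_mul, hf x hx]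

/-- The ideal `I_ℝ(V)` of real polynomials vanishing on `V ⊆ ℂⁿ`. -/
def vanishingIdealR (V : Set (Fin n → ℂ)) : Ideal (MvPolynomial (Fin n) ℝ) :=
  (vanishingIdeal n V).comap (MvPolynomial.map (algebraMap ℝ ℂ))

/-- The affine Hilbert function `H_{I(V)}(m) = dim_ℂ ℂ[x]_{≤ m} / I(V)_{≤ m}`, realised as the
dimension of the image of the space of polynomials of total degree at most `m` in the quotient
ring `ℂ[x]/I(V)`. -/
def hilbert (V : Set (Fin n → ℂ)) (m : ℕ) : ℕ :=
  Module.finrank ℂ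
    (Submodule.map (Ideal.Quotient.mkₐ ℂ (vanishingIdeal n V)).toLinearMap
      (restrictTotalDegree (Fin n) ℂ m))

/-- The real affine Hilbert function `H_{I(V),ℝ}(m) = dim_ℝ ℝ[x]_{≤ m} / I_ℝ(V)_{≤ m}`. -/
def hilbertR (V : Set (Fin n → ℂ)) (m : ℕ) : ℕ :=
  Module.finrank ℝ
    (Submodule.map (Ideal.Quotient.mkₐ ℝ (vanishingIdealR n V)).toLinearMap
      (restrictTotalDegree (Fin n) ℝ m))

/-- The inclusion `ℝⁿ → ℂⁿ`. -/
def toC (x : Fin n → ℝ) : Fin n → ℂ := fun i => (x i : ℂ)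

/-- The set of real points of `V ⊆ ℂⁿ`. -/
def realPts (V : Set (Fin n → ℂ)) : Set (Fin n → ℝ) := {x | toC n x ∈ V}

/-- The real zero set of a real polynomial. -/
def zeroSetR (g : MvPolynomial (Fin n) ℝ) : Set (Fin n → ℝ) := {x | eval x g = 0}

/-- The zero locus of the polynomials `P 1, …, P i` (the first `i` members of a tuple of
polynomials indexed from `1`). -/
def zeroLocusUpTo (P : ℕ → MvPolynomial (Fin n) ℂ) (i : ℕ) : Set (Fin n → ℂ) :=
  zeroLocus n {f | ∃ j : ℕ, 1 ≤ j ∧ j ≤ i ∧ f = P j}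

/-- `V'` is an `(n-s)`-minimal variety of the irreducible variety `V`. -/
def IsMinimalVariety (V V' : Set (Fin n → ℂ)) (s : ℕ) : Prop :=
  IsIrredVariety n V' ∧ V ⊆ V' ∧ dim n V' = n - s ∧
    ∀ f ∈ vanishingIdeal n V, f ∉ vanishingIdeal n V' →
      partialDegE n V (s + 1) ≤ (f.totalDegree : ℕ∞)

/-- `S` is `(k,b)`-free with respect to `T`, for the incidence relation `R`. -/
def KBFree {α β : Type*} (R : α → β → Prop) (S : Finset α) (T : Finset β) (k b : ℕ) : Prop :=
  ¬ ∃ (P : Finset α) (B : Finset β), P ⊆ S ∧ B ⊆ T ∧ P.card = k ∧ B.card = b ∧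
      ∀ s ∈ P, ∀ t ∈ B, R s t

/-- The number of incidences between a finite set of points and a finite family of sets. -/
def incCountAbs {α : Type*} (S : Finset α) (T : Finset (Set α)) : ℕ :=
  ∑ t ∈ T, (↑S ∩ t).ncard

/-- The number of incidences between a finite set of real points and a finite family of
subsets of `ℂⁿ`. -/
def incCount (S : Finset (Fin n → ℝ)) (T : Finset (Set (Fin n → ℂ))) : ℕ :=
  ∑ t ∈ T, (↑S ∩ toC n ⁻¹' t).ncard

/-- The total degree `deg T = ∑_{t ∈ T} deg t` of a finite family of algebraic sets. -/
def degFamily (T : Finset (Set (Fin n → ℂ))) : ℕ := ∑ t ∈ T, degreeSum n t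

/-- The total degree of a finite family of irreducible varieties. -/
def degFamilyIrred (T : Finset (Set (Fin n → ℂ))) : ℕ := ∑ t ∈ T, degree n t

/-- `α_k(d)`. -/
def alpha (k d : ℕ) : ℝ :=
  if k = 1 ∧ d = 1 then 0 else (k : ℝ) * ((d : ℝ) - 1) / ((d : ℝ) * (k : ℝ) - 1)

/-- `β_k(d)`. -/
def beta (k d : ℕ) : ℝ :=
  if k = 1 ∧ d = 1 then 1 else (d : ℝ) * ((k : ℝ) - 1) / ((d : ℝ) * (k : ℝ) - 1)

/-- `τ_d(b,k) = b^{1-β_k(d)} k^{1-α_k(d)}`. -/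
def tauC (d b k : ℕ) : ℝ := (b : ℝ) ^ (1 - beta k d) * (k : ℝ) ^ (1 - alpha k d)

/-- The Chardin–Philippon property of the constant `c₀`: for every pure-dimensional algebraic
set `W ⊆ ℂⁿ` and every `m ≥ 2 (n - dim W) δ(W)` one has `H_{I(W)}(m) ≥ c₀ m^{dim W} deg W`. -/
def ChardinPhilippon (c0 : ℝ) : Prop :=
  ∀ (W : Set (Fin n → ℂ)) (e : ℕ), IsAlgSetOfDim n W e →
    ∀ m : ℕ, 2 * (n - e) * deltaSet n W ≤ m →
      c0 * (m : ℝ) ^ e * (degreeSum n W : ℝ) ≤ (hilbert n W m : ℝ)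

/-- The defining property of the constant `c₁`: for every irreducible variety `V`, every
positive integer lies in some interval `ℛ_i(V)` with `i` admissible with respect to `V`. -/
def CoversPositiveIntegers (c0 c1 : ℝ) : Prop :=
  ∀ V : Set (Fin n → ℂ), IsIrredVariety n V →
    ∀ m : ℕ, 0 < m → ∃ i, Admissible n V i ∧ (m : ℝ) ∈ RSet n c0 c1 V i

/-- `i_V(M)`: the smallest admissible `i` such that `M^{n-i} Δ_i(V) ∈ ℛ_i(V)`. -/
def iV (c0 c1 : ℝ) (V : Set (Fin n → ℂ)) (M : ℕ) : ℕ :=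
  sInf {i | Admissible n V i ∧ (M : ℝ) ^ (n - i) * Delta n V i ∈ RSet n c0 c1 V i}

/-- A real polynomial bisects a finite set `S ⊆ ℝⁿ` if it is positive on at most half of `S`
and negative on at most half of `S`. -/
def Bisects (g : MvPolynomial (Fin n) ℝ) (S : Finset (Fin n → ℝ)) : Prop :=
  ((↑S ∩ {x | 0 < eval x g}).ncard : ℝ) ≤ (S.card : ℝ) / 2 ∧
    ((↑S ∩ {x | eval x g < 0}).ncard : ℝ) ≤ (S.card : ℝ) / 2

/-- The set of `r`-rich points of a family `T`: points lying in at least `r` members of `T`. -/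
def richPts (T : Finset (Set (Fin n → ℂ))) (r : ℕ) : Set (Fin n → ℂ) :=
  {x | r ≤ ({t | t ∈ T ∧ x ∈ t} : Set (Set (Fin n → ℂ))).ncard}

/-- A real hypersurface of degree at most `D`: the real zero set of a nonzero real polynomial
of degree at most `D`. -/
def IsRealHypersurfaceDegLE (t : Set (Fin n → ℝ)) (D : ℕ) : Prop :=
  ∃ p : MvPolynomial (Fin n) ℝ, p ≠ 0 ∧ t = zeroSetR n p ∧ p.totalDegree ≤ D

/-- Lexicographic comparison of the tuples `(f 1, …, f m)` and `(g 1, …, g m)`. -/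
def LexLE (m : ℕ) (f g : ℕ → ℕ) : Prop :=
  (∀ j ∈ Finset.Icc 1 m, f j = g j) ∨
    ∃ i ∈ Finset.Icc 1 m, (∀ j, 1 ≤ j → j < i → f j = g j) ∧ f i < g i

open scoped Pointwise in
theorem cd_prod {G : Type*} [CommGroup G] [IsMulTorsionFree G] [DecidableEq G]
    {ι : Type*} (s : Finset ι) (F : ι → Finset G) (j : ℕ) (hF : ∀ i ∈ s, j + 1 ≤ (F i).card) :
    s.card * j + 1 ≤ (∏ i ∈ s, F i).card := by
  classical
  induction s using Finset.induction_on with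
  | empty => simp
  | insert a s ha ih =>
    rw [Finset.prod_insert ha, Finset.card_insert_of_notMem ha]
    have h1 := ih (fun i hi => hF i (Finset.mem_insert_of_mem hi))
    have h2 := hF a (Finset.mem_insert_self _ _)
    have hc := cauchy_davenport_of_isMulTorsionFree (s := F a) (t := ∏ i ∈ s, F i)
      (Finset.card_pos.1 (by omega)) (Finset.card_pos.1 (by omega))
    have : (s.card + 1) * j + 1 = s.card * j + j + 1 := by ring
    omega

def pureClosure {G : Type*} [CommGroup G] (g : G) : Subgroup G where
  carrier := {h | ∃ m : ℕ, 0 < m ∧ h ^ m ∈ Subgroup.zpowers g}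
  one_mem' := ⟨1, one_pos, by simp⟩
  mul_mem' := by
    rintro a b ⟨m, hm, ha⟩ ⟨k, hk, hb⟩
    refine ⟨m * k, Nat.mul_pos hm hk, ?_⟩
    rw [mul_pow]
    refine mul_mem ?_ ?_
    · rw [pow_mul]; exact pow_mem ha _
    · rw [mul_comm, pow_mul]; exact pow_mem hb _
  inv_mem' := by
    rintro a ⟨m, hm, ha⟩
    exact ⟨m, hm, by rw [inv_pow]; exact inv_mem ha⟩

theorem pureClosure_tf {G : Type*} [CommGroup G] (g : G) : IsMulTorsionFree (G ⧸ pureClosure g) := by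
  rw [isMulTorsionFree_iff_not_isOfFinOrder]
  intro a ha hfin
  obtain ⟨h, rfl⟩ := QuotientGroup.mk_surjective a
  obtain ⟨m, hm, hh⟩ := isOfFinOrder_iff_pow_eq_one.1 hfin
  rw [← QuotientGroup.mk_pow, QuotientGroup.eq_one_iff] at hh
  obtain ⟨k, hk, hh⟩ := hh
  apply ha
  rw [QuotientGroup.eq_one_iff]
  exact ⟨m * k, Nat.mul_pos hm hk, by rwa [pow_mul]⟩

theorem layer {α β : Type*} [DecidableEq β] (X : Finset α) (f : α → β) (k N : ℕ) (hk : 0 < k)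
    (hN : X.card ≤ N) :
    k * ∑ j ∈ Finset.Icc 1 N, ((X.image f).filter (fun z => k * j ≤ (X.filter (fun x => f x = z)).card)).card
      ≤ X.card ∧ (k = 1 → ∑ j ∈ Finset.Icc 1 N, ((X.image f).filter (fun z => k * j ≤ (X.filter (fun x => f x = z)).card)).card
      = X.card) := by
  have e1 : X.card = ∑ z ∈ X.image f, (X.filter (fun x => f x = z)).card :=
    Finset.card_eq_sum_card_image f X
  have e2 : ∑ j ∈ Finset.Icc 1 N, ((X.image f).filter (fun z => k * j ≤ (X.filter (fun x => f x = z)).card)).card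
     = ∑ z ∈ X.image f, (X.filter (fun x => f x = z)).card / k := by
    simp_rw [Finset.card_filter _ (X.image f)]
    rw [Finset.sum_comm]
    refine Finset.sum_congr rfl fun z _ => ?_
    rw [← Finset.card_filter]
    set c := (X.filter (fun x => f x = z)).card with hc
    have hcN : c ≤ N := (Finset.card_filter_le _ _).trans hN
    have : (Finset.Icc 1 N).filter (fun j => k * j ≤ c) = Finset.Icc 1 (c / k) := by
      ext j
      simp only [Finset.mem_filter, Finset.mem_Icc, Nat.le_div_iff_mul_le hk]
      constructor
      · rintro ⟨⟨h1, h2⟩, h3⟩; exact ⟨h1, by linarith⟩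
      · rintro ⟨h1, h3⟩
        have : j ≤ j * k := Nat.le_mul_of_pos_right _ hk
        exact ⟨⟨h1, by omega⟩, by linarith⟩
    rw [this]; simp
  rw [e2]
  constructor
  · conv_rhs => rw [e1]
    rw [Finset.mul_sum]
    exact Finset.sum_le_sum fun z _ => Nat.mul_div_le _ _
  · rintro rfl
    simp [← e1]

open scoped Pointwise in
theorem freiman (e : ℕ) : ∀ {G : Type*} [CommGroup G] [IsMulTorsionFree G]
    (g : Fin e → G) (_ : ∀ a : Fin e → ℤ, ∏ i, g i ^ a i = 1 → a = 0) (k : ℕ) (_ : 0 < k)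
    (X Y : Finset G)
    (_ : ∀ x : Fin k → G, (∀ i, x i ∈ X) → ∀ a : Fin e → ℕ, (∀ i, a i ≤ k) →
      (∏ i, x i) * (∏ i, g i ^ a i) ∈ Y), k ^ e * X.card ≤ Y.card := by
  classical
  induction e with
  | zero =>
    intro G _ _ g hg k hk X Y h
    simp only [pow_zero, one_mul]
    refine Finset.card_le_card_of_injOn (fun x => x ^ k) ?_ ?_
    · intro x hx
      have := h (fun _ => x) (fun _ => hx) (fun _ => 0) (by simp)
      simpa using this
    · intro x _ y _ hxy
      exact (pow_left_injective hk.ne') hxy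
  | succ e ih =>
    intro G _ _ g hg k hk X Y h
    set N := pureClosure (g 0) with hNdef
    haveI : IsMulTorsionFree (G ⧸ N) := pureClosure_tf (g 0)
    set π : G → G ⧸ N := fun x => (x : G ⧸ N) with hπ
    have hg0 : π (g 0) = 1 := by
      simp only [hπ]; rw [QuotientGroup.eq_one_iff]
      exact ⟨1, one_pos, by simp⟩
    have hind : ∀ a : Fin e → ℤ, ∏ i, (π (g i.succ)) ^ a i = 1 → a = 0 := by
      intro a ha
      have : ((∏ i, g i.succ ^ a i : G) : G ⧸ N) = 1 := by
        rw [← ha]; simp [hπ]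
      rw [QuotientGroup.eq_one_iff] at this
      obtain ⟨m, hm, b, hb⟩ := this
      have h2 := hg (Fin.cons (-b) (fun i => a i * m)) (by
        rw [Fin.prod_univ_succ]
        simp only [Fin.cons_zero, Fin.cons_succ, zpow_mul, zpow_natCast]
        rw [Finset.prod_pow, ← hb]; simp)
      funext i
      have h3 := congrFun h2 i.succ
      simp only [Fin.cons_succ, Pi.zero_apply, mul_eq_zero] at h3
      rcases h3 with h3 | h3
      · exact h3
      · exfalso; have : m = 0 := by exact_mod_cast h3
        omega
    have hinj : Function.Injective (fun b : ℕ => g 0 ^ b) := by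
      intro b c hbc
      have h2 := hg (Fin.cons ((b : ℤ) - c) 0) (by
        rw [Fin.prod_univ_succ]
        simp only [Fin.cons_zero, Fin.cons_succ, Pi.zero_apply, zpow_zero, Finset.prod_const_one, mul_one]
        rw [zpow_sub]; simp only [zpow_natCast]; simp only at hbc; rw [hbc]; simp)
      have h3 := congrFun h2 0
      simp at h3; omega
    have hL := (layer X π 1 (X.card + Y.card) one_pos (by omega)).2 rfl
    have hR := (layer Y π k (X.card + Y.card) hk (by omega)).1
    rw [← hL]
    refine le_trans ?_ hR
    rw [pow_succ, mul_comm (k ^ e) k, mul_assoc]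
    refine Nat.mul_le_mul_left _ ?_
    rw [Finset.mul_sum]
    refine Finset.sum_le_sum fun j hj => ?_
    rw [Finset.mem_Icc] at hj
    refine ih (fun i => π (g i.succ)) hind k hk _ _ ?_
    intro z hz a ha
    simp only [Finset.mem_filter, Finset.mem_image, one_mul] at hz
    set w := (∏ i, z i) * ∏ i, π (g i.succ) ^ a i with hw
    set T : Finset G := (∏ i, X.filter (fun x => π x = z i)) *
      ({∏ i, g i.succ ^ a i} * (Finset.range (k + 1)).image (fun b => g 0 ^ b)) with hT
    have hTsub : T ⊆ Y.filter (fun y => π y = w) := by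
      intro t ht
      rw [hT, Finset.mem_mul] at ht
      obtain ⟨p, hp, q, hq, rfl⟩ := ht
      rw [Finset.mem_mul] at hq
      obtain ⟨q1, hq1, q2, hq2, rfl⟩ := hq
      rw [Finset.mem_singleton] at hq1
      obtain ⟨b, hb, rfl⟩ := Finset.mem_image.1 hq2
      subst hq1
      have hp' : p ∈ (∏ i, ((X.filter (fun x => π x = z i) : Finset G) : Set G)) := by
        rw [← Finset.coe_prod]; exact hp
      obtain ⟨x, hx, hx2⟩ := (Set.mem_fintype_prod _ _).1 hp'
      subst hx2
      rw [Finset.mem_filter]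
      constructor
      · have := h x (fun i => (Finset.mem_filter.1 (hx i)).1) (Fin.cons b a) (by
          intro i; refine Fin.cases ?_ ?_ i
          · simp at hb ⊢; omega
          · intro i; simpa using ha i)
        rw [Fin.prod_univ_succ] at this
        simp only [Fin.cons_zero, Fin.cons_succ] at this
        rwa [mul_comm (g 0 ^ b)] at this
      · have h5 : ∀ i, π (x i) = z i := fun i => (Finset.mem_filter.1 (hx i)).2
        have h6 : π ((∏ i, x i) * ((∏ i, g i.succ ^ a i) * g 0 ^ b)) =
          (∏ i, π (x i)) * ((∏ i, π (g i.succ) ^ a i) * π (g 0) ^ b) := by simp [hπ]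
        rw [h6, hg0, hw]; simp [h5]
    have hTcard : k * j ≤ T.card := by
      have c1 := cd_prod Finset.univ (fun i => X.filter (fun x => π x = z i)) (j - 1) (by
        intro i _; have := (hz i).2; omega)
      have c2 : (({∏ i, g i.succ ^ a i} : Finset G) * (Finset.range (k + 1)).image (fun b => g 0 ^ b)).card = k + 1 := by
        rw [Finset.card_singleton_mul, Finset.card_image_of_injective _ hinj, Finset.card_range]
      have c3 := cauchy_davenport_of_isMulTorsionFree (s := ∏ i, X.filter (fun x => π x = z i))
        (t := ({∏ i, g i.succ ^ a i} : Finset G) * (Finset.range (k + 1)).image (fun b => g 0 ^ b))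
        (Finset.card_pos.1 (by omega)) (Finset.card_pos.1 (by omega))
      rw [c2, ← hT] at c3
      rw [Finset.card_univ, Fintype.card_fin] at c1
      obtain ⟨j', rfl⟩ : ∃ j', j = j' + 1 := ⟨j - 1, by omega⟩
      simp only [Nat.add_sub_cancel] at c1
      have : k * (j' + 1) = k * j' + k := by ring
      omega
    have hcard := hTcard.trans (Finset.card_le_card hTsub)
    rw [Finset.mem_filter, Finset.mem_image]
    refine ⟨?_, hcard⟩
    have : 0 < (Y.filter (fun y => π y = w)).card := lt_of_lt_of_le (Nat.mul_pos hk (by omega)) hcard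
    obtain ⟨y, hy⟩ := Finset.card_pos.1 this
    exact ⟨y, (Finset.mem_filter.1 hy).1, (Finset.mem_filter.1 hy).2⟩

section Val
variable {K : Type*} [Field K] [Algebra ℂ K] {e : ℕ} (y : Fin e → K)

def ymon (α : Fin e →₀ ℕ) : K := aeval y (monomial α (1 : ℂ))

theorem ymon_add (α β : Fin e →₀ ℕ) : ymon y (α + β) = ymon y α * ymon y β := by
  unfold ymon
  rw [← map_mul, monomial_mul, one_mul]

theorem ymon_ne (hy : AlgebraicIndependent ℂ y) (α : Fin e →₀ ℕ) : ymon y α ≠ 0 := by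
  unfold ymon
  intro h
  have := hy (h.trans (map_zero _).symm)
  simp at this

def valA (y : Fin e → K) : Subring K where
  carrier := {x | ∃ (β : Fin e →₀ ℕ) (f : MvPolynomial (Fin e) ℂ),
    (∀ α ∈ f.support, MonomialOrder.lex.toSyn α ≤ MonomialOrder.lex.toSyn β) ∧
      x * ymon y β = aeval y f}
  mul_mem' := by
    rintro a b ⟨β, f, hf, h1⟩ ⟨γ, g, hg, h2⟩
    refine ⟨β + γ, f * g, ?_, ?_⟩
    · intro α hα
      have := MvPolynomial.support_mul f g hα
      obtain ⟨u, hu, w, hw, rfl⟩ := Finset.mem_add.1 this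
      rw [map_add, map_add]
      exact add_le_add (hf u hu) (hg w hw)
    · rw [map_mul, ← h1, ← h2, ymon_add]; ring
  one_mem' := ⟨0, 1, by
    intro α hα
    have : α = 0 := by
      by_contra hne
      simp at hα; exact hne hα
    rw [this], by simp [ymon]⟩
  add_mem' := by
    rintro a b ⟨β, f, hf, h1⟩ ⟨γ, g, hg, h2⟩
    refine ⟨β + γ, f * monomial γ 1 + g * monomial β 1, ?_, ?_⟩
    · intro α hα
      rcases Finset.mem_union.1 (MvPolynomial.support_add hα) with h | h
      · obtain ⟨u, hu, w, hw, rfl⟩ := Finset.mem_add.1 (MvPolynomial.support_mul _ _ h)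
        have := Finset.mem_singleton.1 (support_monomial_subset hw)
        subst this
        rw [map_add, map_add]
        exact add_le_add_left (hf u hu) _
      · obtain ⟨u, hu, w, hw, rfl⟩ := Finset.mem_add.1 (MvPolynomial.support_mul _ _ h)
        have := Finset.mem_singleton.1 (support_monomial_subset hw)
        subst this
        rw [add_comm w, map_add, map_add]
        exact add_le_add_left (hg u hu) _
    · rw [map_add, map_mul, map_mul, ← h1, ← h2, ymon_add]; unfold ymon; ring
  zero_mem' := ⟨0, 0, by simp, by simp⟩
  neg_mem' := by
    rintro a ⟨β, f, hf, h1⟩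
    exact ⟨β, -f, by rwa [support_neg], by rw [map_neg, ← h1]; ring⟩

def valI (y : Fin e → K) : Ideal (valA y) where
  carrier := {x | ∃ (β : Fin e →₀ ℕ) (f : MvPolynomial (Fin e) ℂ),
    (∀ α ∈ f.support, MonomialOrder.lex.toSyn α < MonomialOrder.lex.toSyn β) ∧
      (x : K) * ymon y β = aeval y f}
  smul_mem' := by
    rintro ⟨a, ha⟩ ⟨b, hb⟩ ⟨γ, g, hg, h2⟩
    obtain ⟨β, f, hf, h1⟩ := id ha
    refine ⟨β + γ, f * g, ?_, ?_⟩
    · intro α hα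
      have := MvPolynomial.support_mul f g hα
      obtain ⟨u, hu, w, hw, rfl⟩ := Finset.mem_add.1 this
      rw [map_add, map_add]
      exact add_lt_add_of_le_of_lt (hf u hu) (hg w hw)
    · rw [map_mul, ← h1, ← h2, ymon_add]; simp; ring
  add_mem' := by
    rintro ⟨a, ha⟩ ⟨b, hb⟩ ⟨β, f, hf, h1⟩ ⟨γ, g, hg, h2⟩
    refine ⟨β + γ, f * monomial γ 1 + g * monomial β 1, ?_, ?_⟩
    · intro α hα
      rcases Finset.mem_union.1 (MvPolynomial.support_add hα) with h | h
      · obtain ⟨u, hu, w, hw, rfl⟩ := Finset.mem_add.1 (MvPolynomial.support_mul _ _ h)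
        have := Finset.mem_singleton.1 (support_monomial_subset hw)
        subst this
        rw [map_add, map_add]
        exact add_lt_add_left (hf u hu) _
      · obtain ⟨u, hu, w, hw, rfl⟩ := Finset.mem_add.1 (MvPolynomial.support_mul _ _ h)
        have := Finset.mem_singleton.1 (support_monomial_subset hw)
        subst this
        rw [add_comm w, map_add, map_add]
        exact add_lt_add_left (hg u hu) _
    · rw [map_add, map_mul, map_mul, ← h1, ← h2, ymon_add]; unfold ymon; simp; ring
  zero_mem' := ⟨0, 0, by simp, by simp⟩

theorem valI_ne (hy : AlgebraicIndependent ℂ y) : valI y ≠ ⊤ := by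
  rw [Ideal.ne_top_iff_one]
  rintro ⟨β, f, hf, h⟩
  have h2 : aeval y (monomial β (1:ℂ)) = aeval y f := by
    rw [← h]; simp [ymon]
  have h3 := hy h2
  have : β ∈ f.support := by rw [← h3]; simp
  exact lt_irrefl _ (hf β this)

theorem exists_val (hy : AlgebraicIndependent ℂ y)
    (halg : ∀ r : K, ∃ p : Polynomial (MvPolynomial (Fin e) ℂ), p ≠ 0 ∧
      p.eval₂ (aeval y : MvPolynomial (Fin e) ℂ →ₐ[ℂ] K).toRingHom r = 0) :
    ∃ B : ValuationSubring K, (∀ c : ℂ, c ≠ 0 → B.valuation (algebraMap ℂ K c) = 1) ∧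
      (∀ α β, α ≠ β → B.valuation (ymon y α) ≠ B.valuation (ymon y β)) ∧
      ∀ r, B.valuation r = 1 → ∃ c : ℂ, B.valuation (r - algebraMap ℂ K c) < 1 := by
  obtain ⟨B, hB, hI⟩ := Ideal.image_subset_nonunits_valuationSubring (valI y) (valI_ne y hy)
  have hlt : ∀ (x : K) (β : Fin e →₀ ℕ) (f : MvPolynomial (Fin e) ℂ),
    (∀ α ∈ f.support, MonomialOrder.lex.toSyn α < MonomialOrder.lex.toSyn β) →
      x * ymon y β = aeval y f → B.valuation x < 1 := by
    intro x β f hf h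
    have hx : x ∈ valA y := ⟨β, f, fun a ha => (hf a ha).le, h⟩
    rw [← ValuationSubring.mem_nonunits_iff]
    exact hI ⟨⟨x, hx⟩, ⟨β, f, hf, h⟩, rfl⟩
  have hC : ∀ c : ℂ, algebraMap ℂ K c ∈ B := by
    intro c
    refine hB ⟨0, C c, ?_, by simp [ymon]⟩
    intro α hα
    have := Finset.mem_singleton.1 (support_monomial_subset (R := ℂ) (s := (0 : Fin e →₀ ℕ)) (a := c) hα)
    rw [this]
  have hCle : ∀ c : ℂ, B.valuation (algebraMap ℂ K c) ≤ 1 := fun c =>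
    (ValuationSubring.valuation_le_one_iff _ _).2 (hC c)
  have hC1 : ∀ c : ℂ, c ≠ 0 → B.valuation (algebraMap ℂ K c) = 1 := by
    intro c hc
    refine le_antisymm (hCle c) ?_
    have h1 := hCle c⁻¹
    rw [map_inv₀, map_inv₀] at h1
    have h0 : B.valuation (algebraMap ℂ K c) ≠ 0 := by simp [hc]
    exact (inv_le_one₀ (zero_lt_iff.2 h0)).1 h1
  refine ⟨B, hC1, ?_, ?_⟩
  · have key : ∀ α β : Fin e →₀ ℕ, MonomialOrder.lex.toSyn α < MonomialOrder.lex.toSyn β → 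
        B.valuation (ymon y α) < B.valuation (ymon y β) := by
      intro α β h
      have h0 : B.valuation (ymon y β) ≠ 0 := by simp [ymon_ne y hy]
      have := hlt (ymon y α / ymon y β) β (monomial α 1) (by
        intro γ hγ
        rw [Finset.mem_singleton.1 (support_monomial_subset hγ)]; exact h) (by
        rw [div_mul_cancel₀ _ (ymon_ne y hy β)]; rfl)
      rw [map_div₀] at this
      exact (div_lt_one₀ (zero_lt_iff.2 h0)).1 this
    intro α β hne
    rcases lt_trichotomy (MonomialOrder.lex.toSyn α) (MonomialOrder.lex.toSyn β) with h | h | h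
    · exact (key _ _ h).ne
    · exact absurd (MonomialOrder.lex.toSyn.injective h) hne
    · exact (key _ _ h).ne'
  · intro r hr
    obtain ⟨p, hp, hpr⟩ := halg r
    -- max degree
    have hsupp : p.support.Nonempty := Polynomial.support_nonempty.2 hp
    obtain ⟨i0, hi0, hmax⟩ := Finset.exists_max_image p.support
      (fun i => MonomialOrder.lex.toSyn (MonomialOrder.lex.degree (p.coeff i))) hsupp
    set β := MonomialOrder.lex.degree (p.coeff i0) with hβ
    have hdeg : ∀ i, ∀ α ∈ (p.coeff i).support, MonomialOrder.lex.toSyn α ≤ MonomialOrder.lex.toSyn β := by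
      intro i α hα
      by_cases hi : i ∈ p.support
      · exact (MonomialOrder.lex.le_degree hα).trans (hmax i hi)
      · simp [Polynomial.notMem_support_iff.1 hi] at hα
    set q : Polynomial ℂ := ∑ i ∈ p.support, Polynomial.monomial i ((p.coeff i).coeff β) with hq
    have hqc : q.coeff i0 ≠ 0 := by
      rw [hq, Polynomial.finsetSum_coeff]
      simp only [Polynomial.coeff_monomial]
      rw [Finset.sum_ite_eq' p.support i0]
      rw [if_pos hi0, hβ]
      exact (MonomialOrder.lex.coeff_degree_ne_zero_iff).2 (Polynomial.mem_support_iff.1 hi0)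
    have hq0 : q ≠ 0 := fun h => hqc (by simp [h])
    have hv : B.valuation (Polynomial.aeval r q) < 1 := by
      have e1 : Polynomial.aeval r q = ∑ i ∈ p.support,
          (algebraMap ℂ K ((p.coeff i).coeff β) - aeval y (p.coeff i) / ymon y β) * r ^ i := by
        rw [Polynomial.eval₂_eq_sum, Polynomial.sum_def] at hpr
        simp only [sub_mul, Finset.sum_sub_distrib]
        have : ∑ i ∈ p.support, aeval y (p.coeff i) / ymon y β * r ^ i = 0 := by
          simp only [div_mul_eq_mul_div]
          rw [← Finset.sum_div]
          rw [div_eq_zero_iff]; left; exact hpr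
        rw [this, sub_zero, hq]
        simp [Polynomial.aeval_monomial]
      rw [e1]
      refine Valuation.map_sum_lt _ one_ne_zero ?_
      intro i hi
      rw [map_mul, map_pow, hr, one_pow, mul_one]
      refine hlt _ β (monomial β ((p.coeff i).coeff β) - p.coeff i) ?_ ?_
      · intro α hα
        have hne : α ≠ β := by
          rintro rfl
          simp at hα
        have h2 : α ∈ (p.coeff i).support := by
          rw [mem_support_iff] at hα ⊢
          simpa [coeff_monomial, Ne.symm hne] using hα
        exact lt_of_le_of_ne (hdeg i α h2) (fun h => hne (MonomialOrder.lex.toSyn.injective h))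
      · rw [sub_mul, div_mul_cancel₀ _ (ymon_ne y hy β), map_sub]
        congr 1
        unfold ymon
        rw [aeval_monomial, aeval_monomial, map_one, one_mul]
    by_contra hcon
    push Not at hcon
    have h1 : 1 ≤ B.valuation (Polynomial.aeval r q) := by
      rw [(IsAlgClosed.splits q).eq_prod_roots]
      rw [map_mul, map_mul, Polynomial.aeval_C, hC1 _ (Polynomial.leadingCoeff_ne_zero.2 hq0), one_mul,
        map_multiset_prod, map_multiset_prod, Multiset.map_map, Multiset.map_map]
      refine Multiset.one_le_prod ?_
      intro x hx
      obtain ⟨c, hc, rfl⟩ := Multiset.mem_map.1 hx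
      simpa using hcon c
    exact absurd hv (not_lt.2 h1)

end Val

section ValC
variable {K : Type*} [Field K] [Algebra ℂ K] {Γ : Type*} [LinearOrderedCommGroupWithZero Γ]
  (v : Valuation K Γ)

def valSet (A : Submodule ℂ K) : Set Γˣ := {γ | ∃ a ∈ A, v a = γ}

theorem valSet_card_le (hC : ∀ c : ℂ, c ≠ 0 → v (algebraMap ℂ K c) = 1)
    (A : Submodule ℂ K) [FiniteDimensional ℂ A] (X : Finset Γˣ) (hX : ↑X ⊆ valSet v A) :
    X.card ≤ Module.finrank ℂ A := by
  classical
  have hX' : ∀ γ ∈ X, ∃ a ∈ A, v a = γ := fun γ h => hX h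
  choose! f hfA hfv using hX'
  have hli : LinearIndependent ℂ (fun γ : X => (⟨f γ, hfA γ γ.2⟩ : A)) := by
    apply LinearIndependent.of_comp A.subtype
    change LinearIndependent ℂ (fun γ : X => f γ)
    rw [linearIndependent_iff']
    intro s g hs
    by_contra hcon
    push Not at hcon
    obtain ⟨i, his, hi⟩ := hcon
    obtain ⟨j, hj, hmax⟩ := Finset.exists_max_image (s.filter (fun i => g i ≠ 0)) (fun i => (i : Γˣ))
      ⟨i, by simp [his, hi]⟩
    rw [Finset.mem_filter] at hj
    have hval : ∀ i : X, g i ≠ 0 → v (g i • f i) = ((i : Γˣ) : Γ) := by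
      intro i hi
      rw [Algebra.smul_def, map_mul, hC _ hi, one_mul, hfv i i.2]
    have h2 : v (∑ i ∈ s.erase j, g i • f i) < v (g j • f j) := by
      refine Valuation.map_sum_lt _ ?_ ?_
      · rw [hval j hj.2]; exact Units.ne_zero _
      · intro i hi
        rw [Finset.mem_erase] at hi
        by_cases h0 : g i = 0
        · rw [h0, zero_smul, map_zero, hval j hj.2]; exact zero_lt_iff.2 (Units.ne_zero _)
        · rw [hval j hj.2, hval i h0, Units.val_lt_val]
          exact lt_of_le_of_ne (hmax i (by simp [hi.2, h0])) (fun h => hi.1 (Subtype.ext h))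
    have h3 : g j • f j = - ∑ i ∈ s.erase j, g i • f i := by
      rw [← Finset.add_sum_erase s _ hj.1] at hs
      exact eq_neg_of_add_eq_zero_left hs
    rw [h3, Valuation.map_neg] at h2
    exact lt_irrefl _ h2
  simpa using hli.fintype_card_le_finrank

theorem valSet_finite (hC : ∀ c : ℂ, c ≠ 0 → v (algebraMap ℂ K c) = 1)
    (A : Submodule ℂ K) [FiniteDimensional ℂ A] : (valSet v A).Finite := by
  by_contra h
  obtain ⟨t, ht, hc⟩ := Set.Infinite.exists_subset_card_eq h (Module.finrank ℂ A + 1)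
  have := valSet_card_le v hC A t ht
  omega

theorem valSet_exists (hC : ∀ c : ℂ, c ≠ 0 → v (algebraMap ℂ K c) = 1)
    (hleaf : ∀ r, v r = 1 → ∃ c : ℂ, v (r - algebraMap ℂ K c) < 1) (N : ℕ) :
    ∀ (A : Submodule ℂ K) [FiniteDimensional ℂ A], Module.finrank ℂ A = N →
      ∃ X : Finset Γˣ, ↑X ⊆ valSet v A ∧ N ≤ X.card := by
  classical
  induction N using Nat.strong_induction_on with
  | _ N ih =>
  intro A _ hA
  rcases Nat.eq_zero_or_pos N with h0 | hpos
  · exact ⟨∅, by simp, by simp [h0]⟩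
  have hne : (valSet v A).Nonempty := by
    have : A ≠ ⊥ := by rintro rfl; simp at hA; omega
    obtain ⟨a, ha, ha0⟩ := A.ne_bot_iff.1 this
    exact ⟨Units.mk0 (v a) ((Valuation.ne_zero_iff _).2 ha0), a, ha, rfl⟩
  obtain ⟨γ, ⟨a, haA, hav⟩, hmax⟩ := Set.exists_max_image _ id (valSet_finite v hC A) hne
  have ha0 : a ≠ 0 := by rintro rfl; rw [map_zero] at hav; exact Units.ne_zero γ hav.symm
  let A' : Submodule ℂ K :=
    { carrier := {x | x ∈ A ∧ v x < γ}
      add_mem' := fun {x y} hx hy => ⟨A.add_mem hx.1 hy.1, Valuation.map_add_lt v hx.2 hy.2⟩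
      zero_mem' := ⟨A.zero_mem, by rw [map_zero]; exact zero_lt_iff.2 (Units.ne_zero _)⟩
      smul_mem' := fun c x hx => ⟨A.smul_mem c hx.1, by
        by_cases h : c = 0
        · rw [h, zero_smul, map_zero]; exact zero_lt_iff.2 (Units.ne_zero _)
        · rw [Algebra.smul_def, map_mul, hC _ h, one_mul]; exact hx.2⟩ }
  have hA'A : A' ≤ A := fun x hx => hx.1
  have : FiniteDimensional ℂ A' := Submodule.finiteDimensional_of_le hA'A
  have hlt : A' < A := lt_of_le_of_ne hA'A (by
    intro h
    have : a ∈ A' := by rw [h]; exact haA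
    exact absurd this.2 (by rw [hav]; exact lt_irrefl _))
  have hle : A ≤ A' ⊔ ℂ ∙ a := by
    intro x hx
    have hxv : v x ≤ γ := by
      by_cases hx0 : x = 0
      · rw [hx0, map_zero]; exact zero_le
      · have := hmax (Units.mk0 (v x) ((Valuation.ne_zero_iff _).2 hx0)) ⟨x, hx, rfl⟩
        exact Units.val_le_val.2 this
    rcases hxv.lt_or_eq with h | h
    · exact Submodule.mem_sup_left ⟨hx, h⟩
    · obtain ⟨c, hc⟩ := hleaf (x / a) (by rw [map_div₀, h, hav]; exact div_self (Units.ne_zero _))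
      have hx' : x - c • a ∈ A' := by
        refine ⟨A.sub_mem hx (A.smul_mem _ haA), ?_⟩
        have : x - c • a = (x / a - algebraMap ℂ K c) * a := by
          rw [sub_mul, div_mul_cancel₀ _ ha0, Algebra.smul_def]
        rw [this, map_mul, hav]
        exact (mul_lt_mul_of_pos_right hc (zero_lt_iff.2 (Units.ne_zero γ))).trans_eq (one_mul _)
      have := Submodule.add_mem_sup hx' (Submodule.smul_mem _ c (Submodule.mem_span_singleton_self a))
      simpa using this
  have hfr : Module.finrank ℂ A ≤ Module.finrank ℂ A' + 1 := by
    have h1 := Submodule.finrank_mono hle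
    have h2 := Submodule.finrank_add_le_finrank_add_finrank A' (ℂ ∙ a)
    rw [finrank_span_singleton ha0] at h2
    omega
  have hfr2 := Submodule.finrank_lt_finrank_of_lt hlt
  obtain ⟨X, hX, hXc⟩ := ih _ (hA ▸ hfr2) A' rfl
  refine ⟨insert γ X, ?_, ?_⟩
  · intro g hg
    rw [Finset.coe_insert] at hg
    rcases hg with rfl | hg
    · exact ⟨a, haA, hav⟩
    · obtain ⟨b, hb, hb2⟩ := hX hg
      exact ⟨b, hb.1, hb2⟩
  · rw [Finset.card_insert_of_notMem]
    · omega
    · intro h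
      obtain ⟨b, hb, hb2⟩ := hX h
      exact absurd hb.2 (by rw [hb2]; exact lt_irrefl _)

end ValC

theorem growth {K : Type*} [Field K] [Algebra ℂ K] {e : ℕ} (y : Fin e → K)
    (hy : AlgebraicIndependent ℂ y)
    (halg : ∀ r : K, ∃ p : Polynomial (MvPolynomial (Fin e) ℂ), p ≠ 0 ∧
      p.eval₂ (aeval y : MvPolynomial (Fin e) ℂ →ₐ[ℂ] K).toRingHom r = 0)
    (k : ℕ) (hk : 0 < k)
    (A C : Submodule ℂ K) [FiniteDimensional ℂ A] [FiniteDimensional ℂ C]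
    (h : ∀ x : Fin k → K, (∀ i, x i ∈ A) → ∀ a : Fin e → ℕ, (∀ i, a i ≤ k) →
      (∏ i, x i) * (∏ i, y i ^ a i) ∈ C) :
    k ^ e * Module.finrank ℂ A ≤ Module.finrank ℂ C := by
  classical
  obtain ⟨B, hC, hinj, hleaf⟩ := exists_val y hy halg
  set v := B.valuation with hv
  obtain ⟨X, hX, hXc⟩ := valSet_exists v hC hleaf _ A rfl
  set Y := (valSet_finite v hC C).toFinset with hY
  have hYc : Y.card ≤ Module.finrank ℂ C := valSet_card_le v hC C Y (by simp [hY])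
  have hy0 : ∀ i, y i ≠ 0 := fun i => hy.ne_zero i
  have hvy0 : ∀ i, v (y i) ≠ 0 := fun i => (Valuation.ne_zero_iff _).2 (hy0 i)
  set g : Fin e → (B.ValueGroup)ˣ := fun i => Units.mk0 (v (y i)) (hvy0 i) with hg
  have hgv : ∀ a : Fin e → ℕ, ((∏ i, g i ^ a i : (B.ValueGroup)ˣ) : B.ValueGroup) = v (∏ i, y i ^ a i) := by
    intro a; rw [map_prod]; simp [hg]
  have hym : ∀ a : Fin e → ℕ, ∏ i, y i ^ a i = ymon y (Finsupp.equivFunOnFinite.symm a) := by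
    intro a
    unfold ymon
    rw [aeval_monomial, map_one, one_mul, Finsupp.prod_fintype]
    · rfl
    · simp
  have hind : ∀ a : Fin e → ℤ, ∏ i, g i ^ a i = 1 → a = 0 := by
    intro a ha
    have h1 : ∏ i, g i ^ (a i).toNat = ∏ i, g i ^ (-a i).toNat := by
      rw [← div_eq_one, ← Finset.prod_div_distrib, ← ha]
      refine Finset.prod_congr rfl fun i _ => ?_
      rw [← zpow_natCast, ← zpow_natCast, div_eq_mul_inv, ← zpow_sub]
      congr 1
      omega
    have h2 := congrArg (Units.val) h1
    rw [hgv (fun i => (a i).toNat), hgv (fun i => (-a i).toNat), hym, hym] at h2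
    by_contra hne
    refine hinj _ _ ?_ h2
    intro h3
    apply hne
    have h4 := Finsupp.equivFunOnFinite.symm.injective h3
    funext i
    have := congrFun h4 i
    simp only [Pi.zero_apply] at this ⊢
    omega
  have := freiman e g hind k hk X Y (by
    intro x hx a ha
    rw [hY, Set.Finite.mem_toFinset]
    choose b hbA hbv using fun i => hX (hx i)
    refine ⟨_, h b hbA a ha, ?_⟩
    rw [map_mul, Units.val_mul, hgv, map_prod]
    congr 1
    rw [Units.coe_prod]
    exact Finset.prod_congr rfl fun i _ => hbv i)
  calc _ ≤ k ^ e * X.card := Nat.mul_le_mul_left _ hXc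
    _ ≤ Y.card := this
    _ ≤ _ := hYc

section LNN
variable {R : Type*} [CommRing R] [Algebra ℂ R]

def Lam {N : ℕ} (l : Fin N → R) : Submodule ℂ R := Submodule.span ℂ (insert 1 (Set.range l))

theorem one_mem_Lam {N : ℕ} (l : Fin N → R) : (1 : R) ∈ Lam l :=
  Submodule.subset_span (Set.mem_insert _ _)

theorem mem_Lam {N : ℕ} (l : Fin N → R) (i : Fin N) : l i ∈ Lam l :=
  Submodule.subset_span (Set.mem_insert_of_mem _ ⟨i, rfl⟩)

theorem Lam_fd {N : ℕ} (l : Fin N → R) : FiniteDimensional ℂ (Lam l) :=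
  FiniteDimensional.span_of_finite ℂ ((Set.finite_range l).insert 1)

theorem pow_fd {R : Type*} [CommRing R] [Algebra ℂ R] (M : Submodule ℂ R) (h : FiniteDimensional ℂ M) (D : ℕ) :
    FiniteDimensional ℂ ↥(M ^ D) := by
  have h' := (Submodule.fg_iff_finiteDimensional M).2 h
  exact (Submodule.fg_iff_finiteDimensional _).1 (h'.pow D)

theorem mul_fd {R : Type*} [CommRing R] [Algebra ℂ R] (M N : Submodule ℂ R) (h : FiniteDimensional ℂ M)
    (h2 : FiniteDimensional ℂ N) :
    FiniteDimensional ℂ ↥(M * N) := by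
  have h' := (Submodule.fg_iff_finiteDimensional M).2 h
  have h2' := (Submodule.fg_iff_finiteDimensional N).2 h2
  exact (Submodule.fg_iff_finiteDimensional _).1 (h'.mul h2')

theorem sml {M N P : Submodule ℂ R} (h : M ≤ N) : M * P ≤ N * P := mul_le_mul' h le_rfl

theorem smr {M N P : Submodule ℂ R} (h : M ≤ N) : P * M ≤ P * N := mul_le_mul' le_rfl h

theorem pow_le_pow_of_one {M : Submodule ℂ R} (h : (1 : R) ∈ M) {a b : ℕ} (hab : a ≤ b) : M ^ a ≤ M ^ b :=
  pow_le_pow_right₀ (Submodule.one_le.2 h) hab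

theorem lnn_congr {N : ℕ} (u : Fin N → R) (b : Fin N → ℂ) (w : R) (L' L : Submodule ℂ R)
    (hu : ∀ i, u i ∈ L) (hw : w ∈ L) (hub : ∀ i, u i - b i • w ∈ L') (s : Multiset (Fin N)) :
    (s.map u).prod ∈ L ^ (Multiset.card s) ∧
    (s.map u).prod - (s.map b).prod • w ^ (Multiset.card s) ∈ L' * L ^ (Multiset.card s - 1) := by
  induction s using Multiset.induction_on with
  | empty => simp [Submodule.one_le.1 le_rfl]
  | cons i s ih =>
    obtain ⟨ih1, ih2⟩ := ih
    simp only [Multiset.map_cons, Multiset.prod_cons, Multiset.card_cons]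
    constructor
    · rw [pow_succ']; exact Submodule.mul_mem_mul (hu i) ih1
    · have e : u i * (s.map u).prod - (b i * (s.map b).prod) • w ^ (Multiset.card s + 1) =
        (u i - b i • w) * (s.map u).prod + b i • (w * ((s.map u).prod - (s.map b).prod • w ^ (Multiset.card s))) := by
        simp only [Algebra.smul_def, map_mul]; ring
      rw [e]
      simp only [Nat.add_sub_cancel]
      refine Submodule.add_mem _ (Submodule.mul_mem_mul (hub i) ih1) (Submodule.smul_mem _ _ ?_)
      rcases Nat.eq_zero_or_pos (Multiset.card s) with h0 | h0
      · have : s = 0 := Multiset.card_eq_zero.1 h0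
        subst this; simp
      · have : L ^ (Multiset.card s) = L * L ^ (Multiset.card s - 1) := by
          rw [← pow_succ']; congr 1; omega
        rw [this, mul_left_comm]
        exact Submodule.mul_mem_mul hw ih2

theorem lnn_top {N : ℕ} (u : Fin N → R) (b : Fin N → ℂ) (w : R) (L' L : Submodule ℂ R)
    (hu : ∀ i, u i ∈ L) (hw : w ∈ L) (h1 : (1 : R) ∈ L') (h1L : (1 : R) ∈ L) (hub : ∀ i, u i - b i • w ∈ L')
    (g : MvPolynomial (Fin N) ℂ) (hg : aeval u g = 0) (hpos : 0 < g.totalDegree)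
    (hb : eval b (homogeneousComponent g.totalDegree g) ≠ 0) :
    w ^ g.totalDegree ∈ L' * L ^ (g.totalDegree - 1) := by
  classical
  set d := g.totalDegree with hd
  have key : aeval u g - (eval b (homogeneousComponent d g)) • w ^ d ∈ L' * L ^ (d - 1) := by
    have e1 : aeval u g = ∑ α ∈ g.support, g.coeff α • ((Finsupp.toMultiset α).map u).prod := by
      rw [aeval_def, eval₂_eq]
      refine Finset.sum_congr rfl fun α _ => ?_
      rw [Algebra.smul_def, Finsupp.toMultiset_map, Finsupp.prod_toMultiset, Finsupp.prod_mapDomain_index]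
      · rfl
      · simp
      · intros; rw [pow_add]
    have e2 : eval b (homogeneousComponent d g) = ∑ α ∈ g.support,
        if α.degree = d then g.coeff α * ((Finsupp.toMultiset α).map b).prod else 0 := by
      rw [homogeneousComponent_apply, map_sum, Finset.sum_filter]
      refine Finset.sum_congr rfl fun α _ => ?_
      split_ifs
      · rw [eval_monomial, Finsupp.toMultiset_map, Finsupp.prod_toMultiset, Finsupp.prod_mapDomain_index]
        · simp
        · intros; rw [pow_add]
      · rfl
    rw [e1, e2, Finset.sum_smul, ← Finset.sum_sub_distrib]
    refine Submodule.sum_mem _ fun α hα => ?_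
    have hc : Multiset.card (Finsupp.toMultiset α) = α.degree := by
      rw [Finsupp.card_toMultiset]; rfl
    have hle : α.degree ≤ d := by
      rw [hd, ← hc]
      have := le_totalDegree hα
      rwa [Finsupp.card_toMultiset]
    obtain ⟨c1, c2⟩ := lnn_congr u b w L' L hu hw hub (Finsupp.toMultiset α)
    rw [hc] at c1 c2
    split_ifs with h
    · rw [mul_smul, ← smul_sub]
      rw [h] at c2
      exact Submodule.smul_mem _ _ c2
    · rw [zero_smul, sub_zero]
      refine Submodule.smul_mem _ _ ?_
      have h5 : L ^ α.degree ≤ L' * L ^ (d - 1) := by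
        calc L ^ α.degree ≤ L ^ (d - 1) := pow_le_pow_of_one h1L (by omega)
          _ = 1 * L ^ (d - 1) := (one_mul _).symm
          _ ≤ _ := sml (Submodule.one_le.2 h1)
      exact h5 c1
  rw [hg, zero_sub, Submodule.neg_mem_iff] at key
  exact (Submodule.smul_mem_iff _ hb).1 key

theorem lnn_pow (w : R) (L' L : Submodule ℂ R) (h1L : (1 : R) ∈ L)
    (hL' : L' ≤ L) (hL : L ≤ L' ⊔ ℂ ∙ w) (hwL : w ∈ L) (d : ℕ) (hd : 0 < d) (hw : w ^ d ∈ L' * L ^ (d - 1)) (D : ℕ) :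
    L ^ D ≤ L' ^ D * L ^ (d - 1) := by
  have c1 : ∀ k, L ^ (k + 1) ≤ L' * L ^ k ⊔ ℂ ∙ w ^ (k + 1) := by
    intro k
    induction k with
    | zero => simpa using hL
    | succ k ih =>
      rw [pow_succ' L (k + 1)]
      refine (sml hL).trans ?_
      rw [Submodule.sup_mul]
      refine sup_le le_sup_left ?_
      refine (smr ih).trans ?_
      rw [Submodule.mul_sup]
      refine sup_le ?_ ?_
      · refine le_trans ?_ le_sup_left
        rw [mul_left_comm, pow_succ' L k]
        refine smr (sml ?_)
        rwa [Submodule.span_singleton_le_iff_mem]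
      · refine le_trans ?_ le_sup_right
        rw [Submodule.span_mul_span, Set.singleton_mul_singleton, ← pow_succ']
  have c2 : L ^ d ≤ L' * L ^ (d - 1) := by
    have := c1 (d - 1)
    rw [Nat.sub_add_cancel hd] at this
    refine this.trans (sup_le le_rfl ?_)
    rwa [Submodule.span_singleton_le_iff_mem]
  have c3 : ∀ D, L ^ (D + (d - 1)) ≤ L' ^ D * L ^ (d - 1) := by
    intro D
    induction D with
    | zero => simp
    | succ D ih =>
      have : D + 1 + (d - 1) = d + D := by omega
      rw [this, pow_add, pow_succ', mul_assoc]
      refine (sml c2).trans ?_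
      rw [mul_assoc, ← pow_add, add_comm (d - 1) D]
      exact smr ih
  exact (pow_le_pow_of_one h1L (Nat.le_add_right _ _)).trans (c3 D)

theorem lnn [Nontrivial R] (N : ℕ) : ∀ (l : Fin N → R), ∃ e ≤ N, ∃ y : Fin e → R, (∀ i, y i ∈ Lam l) ∧
    AlgebraicIndependent ℂ y ∧ ∃ B : Submodule ℂ R, FiniteDimensional ℂ B ∧ (1 : R) ∈ B ∧
      ∀ D, Lam l ^ D ≤ Lam y ^ D * B := by
  induction N with
  | zero =>
    intro l
    refine ⟨0, le_rfl, l, fun i => i.elim0, ?_, 1, ?_, Submodule.one_le.1 le_rfl, by simp⟩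
    · rw [algebraicIndependent_empty_type_iff]
      exact FaithfulSMul.algebraMap_injective ℂ R
    · rw [Submodule.one_eq_span]; infer_instance
  | succ N ih =>
    intro l
    by_cases hl : AlgebraicIndependent ℂ l
    · refine ⟨N + 1, le_rfl, l, mem_Lam l, hl, 1, ?_, Submodule.one_le.1 le_rfl, by simp⟩
      rw [Submodule.one_eq_span]; infer_instance
    · rw [algebraicIndependent_iff] at hl
      push Not at hl
      obtain ⟨g, hg, hg0⟩ := hl
      have hpos : 0 < g.totalDegree := by
        by_contra h
        have h0 : g.totalDegree = 0 := by omega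
        rw [totalDegree_eq_zero_iff_eq_C] at h0
        rw [h0, aeval_C, map_eq_zero_iff _ (FaithfulSMul.algebraMap_injective ℂ R)] at hg
        rw [hg, map_zero] at h0
        exact hg0 h0
      have hG : homogeneousComponent g.totalDegree g ≠ 0 := by
        intro h
        obtain ⟨α, hα, hα2⟩ := Finset.exists_mem_eq_sup g.support (support_nonempty.2 hg0)
          (fun s => s.sum fun _ e => e)
        have := congrArg (coeff α) h
        rw [coeff_homogeneousComponent, if_pos, coeff_zero] at this
        · exact (mem_support_iff.1 hα) this
        · exact hα2.symm
      obtain ⟨b, hb⟩ : ∃ b, eval b (homogeneousComponent g.totalDegree g) ≠ 0 := by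
        by_contra h
        push Not at h
        exact hG (MvPolynomial.funext (fun x => by rw [h x, map_zero]))
      obtain ⟨j, hj⟩ : ∃ j, b j ≠ 0 := by
        by_contra h
        push Not at h
        have hb0 : b = 0 := funext h
        rw [hb0] at hb
        have := (homogeneousComponent_isHomogeneous g.totalDegree g).coeff_eq_zero (d := 0) (by
          simp; omega)
        rw [MvPolynomial.eval_zero, constantCoeff_eq] at hb
        exact hb this
      set w : R := (b j)⁻¹ • l j with hw
      set z : Fin N → R := fun i => l (j.succAbove i) - b (j.succAbove i) • w with hz
      have hwL : w ∈ Lam l := Submodule.smul_mem _ _ (mem_Lam l j)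
      have hzL : Lam z ≤ Lam l := by
        unfold Lam
        rw [Submodule.span_le]
        rintro x (rfl | ⟨i, rfl⟩)
        · exact one_mem_Lam l
        · exact Submodule.sub_mem _ (mem_Lam l _) (Submodule.smul_mem _ _ hwL)
      have hub : ∀ i, l i - b i • w ∈ Lam z := by
        intro i
        rcases eq_or_ne i j with rfl | h
        · rw [hw, smul_smul, mul_inv_cancel₀ hj, one_smul, sub_self]; exact Submodule.zero_mem _
        · obtain ⟨k, rfl⟩ := Fin.exists_succAbove_eq h
          exact mem_Lam z k
      have hLz : Lam l ≤ Lam z ⊔ ℂ ∙ w := by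
        conv_lhs => unfold Lam
        rw [Submodule.span_le]
        rintro x (rfl | ⟨i, rfl⟩)
        · exact Submodule.mem_sup_left (one_mem_Lam z)
        · have := Submodule.add_mem_sup (hub i) (Submodule.smul_mem _ (b i) (Submodule.mem_span_singleton_self w))
          simpa using this
      have htop := lnn_top l b w (Lam z) (Lam l) (mem_Lam l) hwL (one_mem_Lam z) (one_mem_Lam l) hub g hg hpos hb
      have hpow := lnn_pow w (Lam z) (Lam l) (one_mem_Lam l) hzL hLz hwL _ hpos htop
      obtain ⟨e, he, y, hyz, hyi, B, hB, hB1, hBD⟩ := ih z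
      refine ⟨e, by omega, y, fun i => hzL (hyz i), hyi, B * Lam l ^ (g.totalDegree - 1), ?_, ?_, ?_⟩
      · exact mul_fd _ _ hB (pow_fd _ (Lam_fd l) _)
      · have := Submodule.mul_mem_mul hB1 (Submodule.one_le.1 (one_le_pow₀ (Submodule.one_le.2 (one_mem_Lam l))
          (n := g.totalDegree - 1)))
        rwa [one_mul] at this
      · intro D
        refine (hpow D).trans ?_
        rw [← mul_assoc]
        exact sml (hBD D)
end LNN

section Hilb

theorem prod_mem_pow {R : Type*} [CommRing R] [Algebra ℂ R] {ι : Type*} (M : Submodule ℂ R) (s : Finset ι)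
    (x : ι → R) (a : ι → ℕ) (h : ∀ i ∈ s, x i ∈ M ^ a i) : ∏ i ∈ s, x i ∈ M ^ (∑ i ∈ s, a i) := by
  classical
  induction s using Finset.induction_on with
  | empty => simpa using (Submodule.one_le.1 le_rfl : (1:R) ∈ (1 : Submodule ℂ R))
  | insert i s hi ih =>
    rw [Finset.prod_insert hi, Finset.sum_insert hi, pow_add]
    exact Submodule.mul_mem_mul (h i (Finset.mem_insert_self _ _))
      (ih fun j hj => h j (Finset.mem_insert_of_mem hj))

theorem Lam_pow_eq {R : Type*} [CommRing R] [Algebra ℂ R] {N : ℕ} (l : Fin N → R) (D : ℕ) :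
    Lam l ^ D = (restrictTotalDegree (Fin N) ℂ D).map (aeval l : MvPolynomial (Fin N) ℂ →ₐ[ℂ] R).toLinearMap := by
  apply le_antisymm
  · induction D with
    | zero =>
      rw [pow_zero, Submodule.one_le]
      exact ⟨1, by simp [mem_restrictTotalDegree], by simp⟩
    | succ D ih =>
      rw [pow_succ, Submodule.mul_le]
      intro a ha b hb
      obtain ⟨f, hf, rfl⟩ := ih ha
      have : Lam l ≤ (restrictTotalDegree (Fin N) ℂ 1).map (aeval l : MvPolynomial (Fin N) ℂ →ₐ[ℂ] R).toLinearMap := by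
        unfold Lam
        rw [Submodule.span_le]
        rintro x (rfl | ⟨i, rfl⟩)
        · exact ⟨1, by simp [mem_restrictTotalDegree], by simp⟩
        · exact ⟨X i, by simp [mem_restrictTotalDegree], by simp⟩
      obtain ⟨g, hg, rfl⟩ := this hb
      refine ⟨f * g, ?_, by simp⟩
      rw [SetLike.mem_coe, mem_restrictTotalDegree] at hf hg ⊢
      exact (totalDegree_mul f g).trans (add_le_add hf hg)
  · rintro x ⟨f, hf, rfl⟩
    rw [SetLike.mem_coe, mem_restrictTotalDegree] at hf
    change aeval l f ∈ _
    rw [aeval_def, eval₂_eq]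
    refine Submodule.sum_mem _ fun α hα => ?_
    rw [← Algebra.smul_def]
    refine Submodule.smul_mem _ _ ?_
    have h1 : α.sum (fun _ e => e) ≤ D := (le_totalDegree hα).trans hf
    refine pow_le_pow_of_one (one_mem_Lam l) h1 ?_
    exact prod_mem_pow _ _ (fun i => l i ^ α i) α (fun i _ => Submodule.pow_mem_pow _ (mem_Lam l i) _)

def Rd (J : Ideal (MvPolynomial (Fin n) ℂ)) (D : ℕ) : Submodule ℂ (MvPolynomial (Fin n) ℂ ⧸ J) :=
  (restrictTotalDegree (Fin n) ℂ D).map (Ideal.Quotient.mkₐ ℂ J).toLinearMap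

def gens (J : Ideal (MvPolynomial (Fin n) ℂ)) : Fin n → MvPolynomial (Fin n) ℂ ⧸ J :=
  fun i => Ideal.Quotient.mk J (X i)

theorem aeval_gens (J : Ideal (MvPolynomial (Fin n) ℂ)) :
    (aeval (gens n J) : MvPolynomial (Fin n) ℂ →ₐ[ℂ] _) = Ideal.Quotient.mkₐ ℂ J := by
  apply MvPolynomial.algHom_ext
  intro i
  simp [gens]

theorem Rd_eq (J : Ideal (MvPolynomial (Fin n) ℂ)) (D : ℕ) : Rd n J D = Lam (gens n J) ^ D := by
  rw [Lam_pow_eq, aeval_gens]; rfl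

theorem Rd_fd (J : Ideal (MvPolynomial (Fin n) ℂ)) (D : ℕ) : FiniteDimensional ℂ (Rd n J D) := by
  rw [Rd_eq]; exact pow_fd _ (Lam_fd _) _

theorem mem_Rd {J : Ideal (MvPolynomial (Fin n) ℂ)} {D : ℕ} {x} :
    x ∈ Rd n J D ↔ ∃ f : MvPolynomial (Fin n) ℂ, f.totalDegree ≤ D ∧ Ideal.Quotient.mk J f = x := by
  constructor
  · rintro ⟨f, hf, rfl⟩
    exact ⟨f, (mem_restrictTotalDegree _ _ _).1 hf, rfl⟩
  · rintro ⟨f, hf, rfl⟩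
    exact ⟨f, (mem_restrictTotalDegree _ _ _).2 hf, rfl⟩

def Hf (J : Ideal (MvPolynomial (Fin n) ℂ)) (D : ℕ) : ℕ := Module.finrank ℂ (Rd n J D)

theorem Hf_mono (J : Ideal (MvPolynomial (Fin n) ℂ)) {D D' : ℕ} (h : D ≤ D') : Hf n J D ≤ Hf n J D' := by
  have := Rd_fd n J D'
  refine Submodule.finrank_mono ?_
  intro x hx
  rw [mem_Rd] at hx ⊢
  obtain ⟨f, hf, rfl⟩ := hx
  exact ⟨f, hf.trans h, rfl⟩

theorem Rd_factor {J J' : Ideal (MvPolynomial (Fin n) ℂ)} (h : J ≤ J') (D : ℕ) :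
    (Rd n J D).map (Ideal.Quotient.factorₐ ℂ h).toLinearMap = Rd n J' D := by
  ext x
  rw [mem_Rd]
  constructor
  · rintro ⟨z, hz, rfl⟩
    obtain ⟨f, hf, rfl⟩ := (mem_Rd n).1 hz
    exact ⟨f, hf, rfl⟩
  · rintro ⟨f, hf, rfl⟩
    exact ⟨_, (mem_Rd n).2 ⟨f, hf, rfl⟩, rfl⟩

theorem Hf_anti {J J' : Ideal (MvPolynomial (Fin n) ℂ)} (h : J ≤ J') (D : ℕ) : Hf n J' D ≤ Hf n J D := by
  have := Rd_fd n J D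
  unfold Hf
  rw [← Rd_factor n h]
  exact Submodule.finrank_map_le _ _

theorem Hf_le_of {J J' : Ideal (MvPolynomial (Fin n) ℂ)} (h : J ≤ J') (D : ℕ)
    (hd : ∀ f ∈ J', f.totalDegree ≤ D → f ∈ J) : Hf n J D ≤ Hf n J' D := by
  unfold Hf
  rw [← Rd_factor n h]
  rw [← LinearMap.range_domRestrict, LinearMap.finrank_range_of_inj]
  rw [injective_iff_map_eq_zero]
  rintro ⟨x, hx⟩ hx0
  obtain ⟨f, hf, rfl⟩ := (mem_Rd n).1 hx
  have h1 : Ideal.Quotient.mk J' f = 0 := hx0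
  rw [Ideal.Quotient.eq_zero_iff_mem] at h1
  ext
  exact Ideal.Quotient.eq_zero_iff_mem.2 (hd f h1 hf)

theorem Hf_mult {J J' : Ideal (MvPolynomial (Fin n) ℂ)} (h : J ≤ J') (y : MvPolynomial (Fin n) ℂ)
    (hy : ∀ f, f * y ∈ J → f ∈ J) (hyJ : y ∈ J') (δ : ℕ) (hδ : y.totalDegree ≤ δ) (D K : ℕ) :
    K * Hf n J' D ≤ Hf n J (D + K * δ) := by
  induction K with
  | zero => simp
  | succ K ih =>
    set T := D + (K + 1) * δ with hT
    have i1 := Rd_fd n J T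
    have i2 := Rd_fd n J (D + K * δ)
    set φ := (Ideal.Quotient.factorₐ ℂ h).toLinearMap.domRestrict (Rd n J T) with hφ
    have hr : Module.finrank ℂ (LinearMap.range φ) = Hf n J' T := by
      unfold Hf
      rw [← Rd_factor n h T, hφ, LinearMap.range_domRestrict]
    have hk : Hf n J (D + K * δ) ≤ Module.finrank ℂ (LinearMap.ker φ) := by
      have hmul : ∀ x ∈ Rd n J (D + K * δ), Ideal.Quotient.mk J y * x ∈ Rd n J T := by
        intro x hx
        obtain ⟨f, hf, rfl⟩ := (mem_Rd n).1 hx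
        refine (mem_Rd n).2 ⟨y * f, ?_, by simp⟩
        refine (totalDegree_mul _ _).trans ?_
        rw [hT, add_mul]; omega
      let ψ : Rd n J (D + K * δ) →ₗ[ℂ] LinearMap.ker φ :=
        { toFun := fun x => ⟨⟨Ideal.Quotient.mk J y * x, hmul x x.2⟩, by
            rw [LinearMap.mem_ker, hφ, LinearMap.domRestrict_apply]
            change Ideal.Quotient.factorₐ ℂ h (_ * _) = 0
            rw [map_mul]
            have : Ideal.Quotient.factorₐ ℂ h (Ideal.Quotient.mk J y) = 0 := by
              change Ideal.Quotient.mk J' y = 0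
              exact Ideal.Quotient.eq_zero_iff_mem.2 hyJ
            rw [this, zero_mul]⟩
          map_add' := fun a b => by ext; simp [mul_add]
          map_smul' := fun c a => by ext; simp [mul_smul_comm] }
      refine LinearMap.finrank_le_finrank_of_injective (f := ψ) ?_
      rw [injective_iff_map_eq_zero]
      rintro ⟨x, hx⟩ hx0
      obtain ⟨f, hf, rfl⟩ := (mem_Rd n).1 hx
      have h1 : Ideal.Quotient.mk J y * Ideal.Quotient.mk J f = 0 :=
        congrArg (fun z : LinearMap.ker φ => ((z : Rd n J T) : _ ⧸ J)) hx0
      rw [← map_mul, Ideal.Quotient.eq_zero_iff_mem, mul_comm] at h1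
      ext
      exact Ideal.Quotient.eq_zero_iff_mem.2 (hy f h1)
    have hsum := LinearMap.finrank_range_add_finrank_ker φ
    have hmono := Hf_mono n J' (show D ≤ T by rw [hT]; exact Nat.le_add_right _ _)
    have : Hf n J T = Module.finrank ℂ (Rd n J T) := rfl
    rw [add_mul, one_mul]
    omega

theorem Lam_finrank_le {R : Type*} [CommRing R] [Algebra ℂ R] {e : ℕ} (y : Fin e → R) (D : ℕ) :
    Module.finrank ℂ ↥(Lam y ^ D) ≤ (D + 1) ^ e := by
  classical
  have : Lam y ^ D ≤ Submodule.span ℂ (Set.range (fun a : Fin e → Fin (D + 1) => ∏ i, y i ^ (a i : ℕ))) := by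
    rw [Lam_pow_eq]
    rintro x ⟨f, hf, rfl⟩
    rw [SetLike.mem_coe, mem_restrictTotalDegree] at hf
    change aeval y f ∈ _
    rw [aeval_def, eval₂_eq']
    refine Submodule.sum_mem _ fun α hα => ?_
    rw [← Algebra.smul_def]
    refine Submodule.smul_mem _ _ (Submodule.subset_span ?_)
    have h1 : ∀ i, α i < D + 1 := by
      intro i
      have := (monomial_le_degreeOf i hα).trans ((degreeOf_le_totalDegree f i).trans hf)
      omega
    exact ⟨fun i => ⟨α i, h1 i⟩, rfl⟩
  have hfd : FiniteDimensional ℂ (Submodule.span ℂ (Set.range (fun a : Fin e → Fin (D + 1) => ∏ i, y i ^ (a i : ℕ)))) :=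
    FiniteDimensional.span_of_finite ℂ (Set.finite_range _)
  refine (Submodule.finrank_mono this).trans ?_
  refine (finrank_range_le_card _).trans ?_
  simp

theorem Lam_finrank_ge {R : Type*} [CommRing R] [Algebra ℂ R] {e : ℕ} (y : Fin e → R)
    (hy : AlgebraicIndependent ℂ y) (M : Submodule ℂ R) (h1 : (1 : R) ∈ M) (hM : FiniteDimensional ℂ M)
    (hyM : ∀ i, y i ∈ M) (D : ℕ) :
    (D + 1) ^ e ≤ Module.finrank ℂ ↥(M ^ (e * D)) := by
  classical
  have hmem : ∀ a : Fin e → Fin (D + 1), ∏ i, y i ^ (a i : ℕ) ∈ M ^ (e * D) := by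
    intro a
    have h2 : ∑ i, (a i : ℕ) ≤ e * D := by
      have := Finset.sum_le_card_nsmul Finset.univ (fun i => (a i : ℕ)) D (fun i _ => by have := (a i).2; omega)
      simpa using this
    refine pow_le_pow_of_one h1 h2 ?_
    exact prod_mem_pow _ _ (fun i => y i ^ (a i : ℕ)) (fun i => (a i : ℕ))
      (fun i _ => Submodule.pow_mem_pow _ (hyM i) _)
  have hli : LinearIndependent ℂ (fun a : Fin e → Fin (D + 1) => (⟨_, hmem a⟩ : ↥(M ^ (e * D)))) := by
    apply LinearIndependent.of_comp (M ^ (e * D)).subtype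
    have e1 : ((M ^ (e * D)).subtype ∘ fun a : Fin e → Fin (D + 1) => (⟨_, hmem a⟩ : ↥(M ^ (e * D)))) =
      (aeval y : MvPolynomial (Fin e) ℂ →ₐ[ℂ] R).toLinearMap ∘ ((fun α => monomial α (1 : ℂ)) ∘
        fun a : Fin e → Fin (D + 1) => Finsupp.equivFunOnFinite.symm (fun i => (a i : ℕ))) := by
      funext a
      simp [aeval_monomial, Finsupp.prod_fintype]
    rw [e1]
    refine LinearIndependent.map' ?_ _ (LinearMap.ker_eq_bot.2 hy)
    have hb := (basisMonomials (Fin e) ℂ).linearIndependent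
    rw [coe_basisMonomials] at hb
    refine hb.comp _ ?_
    intro a b hab
    have := Finsupp.equivFunOnFinite.symm.injective hab
    funext i
    exact Fin.ext (congrFun this i)
  have hfd := pow_fd M hM (e * D)
  have := hli.fintype_card_le_finrank
  simpa using this
end Hilb

section Dim

def IsNN (Q : Ideal (MvPolynomial (Fin n) ℂ)) (e : ℕ) (y : Fin e → MvPolynomial (Fin n) ℂ ⧸ Q) : Prop :=
  (∀ i, y i ∈ Rd n Q 1) ∧ AlgebraicIndependent ℂ y ∧ ∃ B : Submodule ℂ (MvPolynomial (Fin n) ℂ ⧸ Q),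
    FiniteDimensional ℂ B ∧ (1 : MvPolynomial (Fin n) ℂ ⧸ Q) ∈ B ∧ ∀ D, Rd n Q D ≤ Lam y ^ D * B

def HasDim (Q : Ideal (MvPolynomial (Fin n) ℂ)) (e : ℕ) : Prop := ∃ y, IsNN n Q e y

theorem HasDim.ex (Q : Ideal (MvPolynomial (Fin n) ℂ)) (hQ : Q.IsPrime) : ∃ e ≤ n, HasDim n Q e := by
  obtain ⟨e, he, y, h1, h2, B, h3, h4, h5⟩ := lnn n (gens n Q)
  refine ⟨e, he, y, ?_, h2, B, h3, h4, ?_⟩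
  · intro i; rw [Rd_eq, pow_one]; exact h1 i
  · intro D; rw [Rd_eq]; exact h5 D

theorem finrank_mul_le {R : Type*} [CommRing R] [Algebra ℂ R] (M N : Submodule ℂ R)
    (hM : FiniteDimensional ℂ M) (hN : FiniteDimensional ℂ N) :
    Module.finrank ℂ ↥(M * N) ≤ Module.finrank ℂ M * Module.finrank ℂ N := by
  have h : M * N = LinearMap.range (TensorProduct.lift ((LinearMap.mul ℂ R).domRestrict₁₂ M N)) := by
    apply le_antisymm
    · rw [Submodule.mul_le]
      intro a ha b hb
      exact ⟨(⟨a, ha⟩ : M) ⊗ₜ (⟨b, hb⟩ : N), by rw [TensorProduct.lift.tmul]; rfl⟩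
    · rintro x ⟨t, rfl⟩
      induction t using TensorProduct.induction_on with
      | zero => simp
      | tmul a b => rw [TensorProduct.lift.tmul]; exact Submodule.mul_mem_mul a.2 b.2
      | add a b ha hb => rw [map_add]; exact Submodule.add_mem _ ha hb
  rw [h, ← Module.finrank_tensorProduct]
  exact LinearMap.finrank_range_le _

variable {n}

theorem HasDim.upper {Q : Ideal (MvPolynomial (Fin n) ℂ)} {e : ℕ} (h : HasDim n Q e) :
    ∃ C, ∀ D, Hf n Q D ≤ C * (D + 1) ^ e := by
  obtain ⟨y, h1, h2, B, h3, h4, h5⟩ := h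
  refine ⟨Module.finrank ℂ B, fun D => ?_⟩
  have i1 := pow_fd _ (Lam_fd y) D
  have i2 := mul_fd _ _ i1 h3
  calc Hf n Q D ≤ Module.finrank ℂ ↥(Lam y ^ D * B) := Submodule.finrank_mono (h5 D)
    _ ≤ Module.finrank ℂ ↥(Lam y ^ D) * Module.finrank ℂ B := finrank_mul_le _ _ i1 h3
    _ ≤ (D + 1) ^ e * Module.finrank ℂ B := Nat.mul_le_mul_right _ (Lam_finrank_le y D)
    _ = _ := mul_comm _ _

theorem lower_of_ind {Q : Ideal (MvPolynomial (Fin n) ℂ)} {e : ℕ} (y : Fin e → MvPolynomial (Fin n) ℂ ⧸ Q)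
    (hy : AlgebraicIndependent ℂ y) (h1 : ∀ i, y i ∈ Rd n Q 1) (D : ℕ) : (D + 1) ^ e ≤ Hf n Q (e * D) := by
  unfold Hf
  rw [Rd_eq]
  refine Lam_finrank_ge y hy _ (one_mem_Lam _) (Lam_fd _) ?_ D
  intro i
  have := h1 i
  rwa [Rd_eq, pow_one] at this

theorem HasDim.lower {Q : Ideal (MvPolynomial (Fin n) ℂ)} {e : ℕ} (h : HasDim n Q e) (D : ℕ) :
    (D + 1) ^ e ≤ Hf n Q (e * D) := by
  obtain ⟨y, h1, h2, B, h3, h4, h5⟩ := h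
  exact lower_of_ind y h2 h1 D

theorem exp_le (a b C : ℕ) (h : ∀ D, (D + 1) ^ a ≤ C * (D + 1) ^ b) : a ≤ b := by
  by_contra hab
  push Not at hab
  have h1 := h C
  have h2 : (C + 1) ^ (b + 1) ≤ (C + 1) ^ a := Nat.pow_le_pow_right (by omega) hab
  rw [pow_succ] at h2
  have h3 : 0 < (C + 1) ^ b := by positivity
  nlinarith

theorem lin_pow_le (c e K : ℕ) : (c * K + 1) ^ e ≤ (c + 1) ^ e * (K + 1) ^ e := by
  rw [← mul_pow]
  exact Nat.pow_le_pow_left (by nlinarith) _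

theorem dim_le_of_ind {Q : Ideal (MvPolynomial (Fin n) ℂ)} {e e' : ℕ} (h : HasDim n Q e)
    (y : Fin e' → MvPolynomial (Fin n) ℂ ⧸ Q)
    (hy : AlgebraicIndependent ℂ y) (h1 : ∀ i, y i ∈ Rd n Q 1) : e' ≤ e := by
  obtain ⟨C, hC⟩ := h.upper
  refine exp_le e' e (C * (e' + 1) ^ e) fun D => ?_
  calc _ ≤ _ := lower_of_ind y hy h1 D
    _ ≤ _ := hC _
    _ ≤ C * ((e' + 1) ^ e * (D + 1) ^ e) := Nat.mul_le_mul_left _ (lin_pow_le _ _ _)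
    _ = _ := by ring

theorem HasDim.unique {Q : Ideal (MvPolynomial (Fin n) ℂ)} {e e' : ℕ} (h : HasDim n Q e)
    (h' : HasDim n Q e') : e = e' := by
  apply le_antisymm
  · obtain ⟨y, h1, h2, _⟩ := h
    exact dim_le_of_ind h' y h2 h1
  · obtain ⟨y, h1, h2, _⟩ := h'
    exact dim_le_of_ind h y h2 h1

theorem HasDim.lt {Q Q' : Ideal (MvPolynomial (Fin n) ℂ)} (hQ : Q.IsPrime) {e e' : ℕ} (h : HasDim n Q e)
    (h' : HasDim n Q' e') (hlt : Q < Q') : e' < e := by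
  obtain ⟨hle, y, hyQ', hyQ⟩ := SetLike.lt_iff_le_and_exists.1 hlt
  obtain ⟨C, hC⟩ := h.upper
  set c := e' + y.totalDegree with hc
  refine exp_le (e' + 1) e (2 * C * (c + 1) ^ e * 1 + 1) fun K => ?_
  rcases Nat.eq_zero_or_pos K with rfl | hK
  · simp
  have h1 := Hf_mult n hle y (fun f hf => (hQ.mem_or_mem hf).resolve_right hyQ) hyQ' _ le_rfl (e' * K) K
  have h2 := h'.lower K
  have h3 := hC (e' * K + K * y.totalDegree)
  have h4 : e' * K + K * y.totalDegree = c * K := by rw [hc]; ring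
  rw [h4] at h1 h3
  have h5 := lin_pow_le c e K
  calc (K + 1) ^ (e' + 1) = (K + 1) * (K + 1) ^ e' := by ring
    _ ≤ 2 * K * Hf n Q' (e' * K) := Nat.mul_le_mul (by omega) h2
    _ = 2 * (K * Hf n Q' (e' * K)) := by ring
    _ ≤ 2 * (C * (c * K + 1) ^ e) := by omega
    _ ≤ 2 * (C * ((c + 1) ^ e * (K + 1) ^ e)) := by gcongr
    _ ≤ _ := by nlinarith [Nat.zero_le ((K+1)^e)]

theorem finite_of_Lam {R : Type*} [CommRing R] [Algebra ℂ R] {e : ℕ} (y : Fin e → R) (B : Submodule ℂ R)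
    (h3 : FiniteDimensional ℂ B) (h5 : ∀ x : R, ∃ D, x ∈ Lam y ^ D * B) :
    (aeval y : MvPolynomial (Fin e) ℂ →ₐ[ℂ] R).toRingHom.Finite := by
  let _ := (aeval y : MvPolynomial (Fin e) ℂ →ₐ[ℂ] R).toRingHom.toAlgebra
  have hst : IsScalarTower ℂ (MvPolynomial (Fin e) ℂ) R :=
    IsScalarTower.of_algebraMap_eq' (aeval y : MvPolynomial (Fin e) ℂ →ₐ[ℂ] R).comp_algebraMap.symm
  obtain ⟨s, hs⟩ := (Submodule.fg_iff_finiteDimensional B).2 h3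
  change Module.Finite (MvPolynomial (Fin e) ℂ) R
  refine ⟨⟨s, ?_⟩⟩
  rw [eq_top_iff]
  rintro x -
  obtain ⟨D, hx⟩ := h5 x
  refine Submodule.mul_induction_on hx ?_ ?_
  · intro a ha b hb
    rw [Lam_pow_eq] at ha
    obtain ⟨g, hg, rfl⟩ := ha
    have : b ∈ Submodule.span (MvPolynomial (Fin e) ℂ) (s : Set R) := by
      rw [← hs] at hb
      exact Submodule.span_subset_span ℂ _ _ hb
    exact Submodule.smul_mem _ g this
  · intro a b ha hb
    exact Submodule.add_mem _ ha hb

theorem IsNN.finite {Q : Ideal (MvPolynomial (Fin n) ℂ)} {e : ℕ} {y : Fin e → MvPolynomial (Fin n) ℂ ⧸ Q}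
    (h : IsNN n Q e y) : (aeval y : MvPolynomial (Fin e) ℂ →ₐ[ℂ] MvPolynomial (Fin n) ℂ ⧸ Q).toRingHom.Finite := by
  obtain ⟨h1, h2, B, h3, h4, h5⟩ := h
  refine finite_of_Lam y B h3 fun x => ?_
  obtain ⟨f, rfl⟩ := Ideal.Quotient.mk_surjective x
  exact ⟨_, h5 _ ((mem_Rd n).2 ⟨f, le_rfl, rfl⟩)⟩

theorem growth_gen0 {R : Type*} [CommRing R] [IsDomain R] [Algebra ℂ R] {e : ℕ} (K : Type*) [Field K]
    [Algebra R K] [IsFractionRing R K] [Algebra ℂ K] [IsScalarTower ℂ R K] (y : Fin e → R)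
    (hy : AlgebraicIndependent ℂ y) (hint : (aeval y : MvPolynomial (Fin e) ℂ →ₐ[ℂ] R).toRingHom.IsIntegral)
    (k : ℕ) (hk : 0 < k) (A C : Submodule ℂ R) (hA : FiniteDimensional ℂ A) (hC : FiniteDimensional ℂ C)
    (h : ∀ x : Fin k → R, (∀ i, x i ∈ A) → ∀ a : Fin e → ℕ, (∀ i, a i ≤ k) →
      (∏ i, x i) * (∏ i, y i ^ a i) ∈ C) : k ^ e * Module.finrank ℂ A ≤ Module.finrank ℂ C := by
  let φ : R →ₐ[ℂ] K := IsScalarTower.toAlgHom ℂ R (K)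
  have hφ : Function.Injective φ := IsFractionRing.injective R K
  have e1 : ∀ A : Submodule ℂ R, Module.finrank ℂ (A.map φ.toLinearMap) = Module.finrank ℂ A := fun A =>
    (LinearEquiv.finrank_eq (Submodule.equivMapOfInjective φ.toLinearMap hφ A)).symm
  have hz : ∀ x : MvPolynomial (Fin e) ℂ, aeval (fun i => φ (y i)) x = φ (aeval y x) := by
    intro x
    exact (comp_aeval_apply y φ x).symm
  rw [← e1 A, ← e1 C]
  refine growth (fun i => φ (y i)) ?_ ?_ k hk _ _ ?_
  · exact hy.map' hφ
  · let _ := (aeval y : MvPolynomial (Fin e) ℂ →ₐ[ℂ] R).toRingHom.toAlgebra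
    let _ := (aeval (fun i => φ (y i)) : MvPolynomial (Fin e) ℂ →ₐ[ℂ] K).toRingHom.toAlgebra
    have : IsScalarTower (MvPolynomial (Fin e) ℂ) R (K) :=
      IsScalarTower.of_algebraMap_eq fun x => hz x
    have : Algebra.IsIntegral (MvPolynomial (Fin e) ℂ) R := ⟨hint⟩
    have h1 : Algebra.IsAlgebraic (MvPolynomial (Fin e) ℂ) R := inferInstance
    have h2 : Algebra.IsAlgebraic R (K) := IsLocalization.isAlgebraic K (nonZeroDivisors R)
    have h3 : Algebra.IsAlgebraic (MvPolynomial (Fin e) ℂ) (K) :=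
      Algebra.IsAlgebraic.trans (MvPolynomial (Fin e) ℂ) R (K)
    intro r
    exact h3.isAlgebraic r
  · intro x hx a ha
    choose z hz1 hz2 using hx
    refine ⟨_, h z hz1 a ha, ?_⟩
    change φ ((∏ i, z i) * (∏ i, y i ^ a i)) = _
    rw [map_mul, map_prod, map_prod]
    congr 1
    · exact Finset.prod_congr rfl fun i _ => hz2 i
    · simp

theorem growth_gen {R : Type*} [CommRing R] [IsDomain R] [Algebra ℂ R] {e : ℕ} (y : Fin e → R)
    (hy : AlgebraicIndependent ℂ y) (hint : (aeval y : MvPolynomial (Fin e) ℂ →ₐ[ℂ] R).toRingHom.IsIntegral)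
    (k : ℕ) (hk : 0 < k) (A C : Submodule ℂ R) (hA : FiniteDimensional ℂ A) (hC : FiniteDimensional ℂ C)
    (h : ∀ x : Fin k → R, (∀ i, x i ∈ A) → ∀ a : Fin e → ℕ, (∀ i, a i ≤ k) →
      (∏ i, x i) * (∏ i, y i ^ a i) ∈ C) : k ^ e * Module.finrank ℂ A ≤ Module.finrank ℂ C :=
  growth_gen0 (FractionRing R) y hy hint k hk A C hA hC h

theorem growthQ {Q : Ideal (MvPolynomial (Fin n) ℂ)} (hQ : Q.IsPrime) {e : ℕ} (h : HasDim n Q e)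
    (k : ℕ) (hk : 0 < k) (D : ℕ) : k ^ e * Hf n Q D ≤ Hf n Q (k * (D + e)) := by
  obtain ⟨y, hy⟩ := h
  refine growth_gen y hy.2.1 (hy.finite.to_isIntegral) k hk _ _ (Rd_fd n Q _) (Rd_fd n Q _) ?_
  intro x hx a ha
  rw [mul_add, Rd_eq, pow_add]
  apply Submodule.mul_mem_mul
  · rw [mul_comm, pow_mul]
    have := prod_mem_pow (Lam (gens n Q) ^ D) Finset.univ x (fun _ => 1) (fun i _ => by
      rw [← Rd_eq, pow_one]; exact hx i)
    simpa using this
  · have := prod_mem_pow (Lam (gens n Q)) Finset.univ (fun i => y i ^ a i) a (fun i _ => by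
      have := hy.1 i
      rw [Rd_eq, pow_one] at this
      exact Submodule.pow_mem_pow _ this _)
    refine pow_le_pow_of_one (one_mem_Lam _) ?_ this
    calc ∑ i, a i ≤ ∑ i : Fin e, k := Finset.sum_le_sum fun i _ => ha i
      _ = _ := by simp [mul_comm]

end Dim

section Krull
variable {n}

theorem prime_generator {e : ℕ} (p : Ideal (MvPolynomial (Fin e) ℂ)) [p.IsPrime] (hp : p ≠ ⊥) :
    ∃ f ∈ p, Prime f := by
  obtain ⟨f, hf, hf0⟩ := Submodule.exists_mem_ne_zero_of_ne_bot hp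
  obtain ⟨s, hs, u, hu⟩ := UniqueFactorizationMonoid.exists_prime_factors f hf0
  have h1 : s.prod ∈ p := by
    have : s.prod * ↑u ∈ p := by rw [hu]; exact hf
    exact (‹p.IsPrime›.mem_or_mem this).resolve_right fun h =>
      ‹p.IsPrime›.ne_top (Ideal.eq_top_of_isUnit_mem _ h u.isUnit)
  obtain ⟨g, hg, hgp⟩ := (Ideal.IsPrime.multiset_prod_mem_iff_exists_mem ‹_› s).1 h1
  exact ⟨g, hgp, hs g hg⟩

theorem mem_vars_iff {e : ℕ} (f : MvPolynomial (Fin e) ℂ) (j : Fin e) : 0 < degreeOf j f ↔ j ∈ f.vars := by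
  classical
  rw [vars_def, Multiset.mem_toFinset, ← Multiset.count_pos, degreeOf_def]

theorem krull_gen {R : Type*} [CommRing R] [IsDomain R] [Algebra ℂ R] {e : ℕ} (y : Fin e → R)
    (hy : AlgebraicIndependent ℂ y) (hint : (aeval y : MvPolynomial (Fin e) ℂ →ₐ[ℂ] R).toRingHom.IsIntegral)
    (q : Ideal R) [hq : q.IsPrime] (hh : q.height ≤ 1) :
    ∃ m, e ≤ m + 1 ∧ ∃ z : Fin m → Fin e,
      ∀ g : MvPolynomial (Fin m) ℂ, aeval (fun i => y (z i)) g ∈ q → g = 0 := by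
  let _ := (aeval y : MvPolynomial (Fin e) ℂ →ₐ[ℂ] R).toRingHom.toAlgebra
  have hi : Algebra.IsIntegral (MvPolynomial (Fin e) ℂ) R := ⟨hint⟩
  have hinj : Function.Injective (algebraMap (MvPolynomial (Fin e) ℂ) R) := hy
  have hf : FaithfulSMul (MvPolynomial (Fin e) ℂ) R := (faithfulSMul_iff_algebraMap_injective _ _).2 hinj
  have hic : IsIntegrallyClosed (MvPolynomial (Fin e) ℂ) := inferInstance
  have hgd : Algebra.HasGoingDown (MvPolynomial (Fin e) ℂ) R := inferInstance
  set p := q.under (MvPolynomial (Fin e) ℂ) with hp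
  have hlo : q.LiesOver p := ⟨rfl⟩
  have hpp : p.IsPrime := inferInstance
  have hmem : ∀ g : MvPolynomial (Fin e) ℂ, aeval y g ∈ q ↔ g ∈ p := fun g => Iff.rfl
  by_cases hp0 : p = ⊥
  · refine ⟨e, by omega, id, fun g hg => ?_⟩
    have : g ∈ p := (hmem g).1 hg
    rw [hp0] at this
    exact this
  obtain ⟨f, hfp, hfprime⟩ := prime_generator p hp0
  have hfp' : (Ideal.span {f}).IsPrime := (Ideal.span_singleton_prime hfprime.ne_zero).2 hfprime
  have hpf : p = Ideal.span {f} := by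
    by_contra hne
    have hlt : Ideal.span {f} < p := lt_of_le_of_ne ((Ideal.span_singleton_le_iff_mem _).2 hfp) (Ne.symm hne)
    obtain ⟨q1, hq1, hq1p, hq1o⟩ := Ideal.exists_ideal_lt_liesOver_of_lt q hlt
    have hfh : q.FiniteHeight := ⟨Or.inr (ne_top_of_le_ne_top (by simp) hh)⟩
    have h1 := (Ideal.height_strict_mono_of_isPrime_of_isPrime hq1).trans_le hh
    rw [Order.lt_one_iff, Ideal.height_eq_zero_iff, IsDomain.minimalPrimes_eq_singleton_bot] at h1
    have h2 : q1 = ⊥ := h1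
    have h3 : algebraMap (MvPolynomial (Fin e) ℂ) R f ∈ q1 := by
      have : f ∈ q1.under (MvPolynomial (Fin e) ℂ) := by
        rw [← hq1o.over]; exact Ideal.mem_span_singleton_self f
      exact this
    rw [h2] at h3
    exact hfprime.ne_zero (hinj (by rw [map_zero]; exact h3))
  have hj : ∃ j, f.degreeOf j ≠ 0 := by
    by_contra hcon
    push Not at hcon
    have hv : f.vars = ∅ := by
      ext j
      simp only [Finset.notMem_empty, iff_false]
      intro hjv
      have := (mem_vars_iff f j).2 hjv
      have := hcon j
      omega
    have hc := vars_eq_empty_iff_eq_C.1 hv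
    apply hfprime.not_unit
    rw [hc]
    refine IsUnit.map _ (isUnit_iff_ne_zero.2 fun h0 => hfprime.ne_zero ?_)
    rw [hc, h0, map_zero]
  obtain ⟨j, hj⟩ := hj
  obtain ⟨m, rfl⟩ : ∃ m, e = m + 1 := ⟨e - 1, by have := j.2; omega⟩
  refine ⟨m, le_rfl, j.succAbove, fun g hg => ?_⟩
  have h1 : rename j.succAbove g ∈ p := by
    rw [← hmem, aeval_rename]; exact hg
  rw [hpf, Ideal.mem_span_singleton] at h1
  obtain ⟨u, hu⟩ := h1
  by_contra hg0
  have h2 : rename j.succAbove g ≠ 0 := by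
    rw [ne_eq, ← map_zero (rename j.succAbove), (rename_injective _ Fin.succAbove_right_injective).eq_iff]; exact hg0
  have hu0 : u ≠ 0 := by rintro rfl; exact h2 (by rw [hu, mul_zero])
  have h3 : degreeOf j (rename j.succAbove g) = 0 := by
    by_contra h
    have : j ∈ (rename j.succAbove g).vars := (mem_vars_iff _ _).1 (Nat.pos_of_ne_zero h)
    have := vars_rename _ _ this
    simp at this
  rw [hu, degreeOf_mul_eq hfprime.ne_zero hu0] at h3
  omega

theorem krull {Q Q' : Ideal (MvPolynomial (Fin n) ℂ)} (hQ' : Q'.IsPrime) (y : MvPolynomial (Fin n) ℂ)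
    (hy : y ∉ Q') (hQ : Q ∈ (Q' ⊔ Ideal.span {y}).minimalPrimes) {e e' : ℕ} (h : HasDim n Q e)
    (h' : HasDim n Q' e') : e + 1 = e' := by
  have hQp : Q.IsPrime := hQ.isPrime
  have hle : Q' ⊔ Ideal.span {y} ≤ Q := hQ.le
  have hQQ : Q' ≤ Q := le_sup_left.trans hle
  have hyQ : y ∈ Q := hle (Ideal.mem_sup_right (Ideal.mem_span_singleton_self y))
  have hlt := h'.lt hQ' h (lt_of_le_of_ne hQQ (by rintro rfl; exact hy hyQ))
  have hht := Ideal.map_height_le_one_of_mem_minimalPrimes hQ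
  obtain ⟨x, hx⟩ := h'
  have : (Q.map (Ideal.Quotient.mk Q')).IsPrime :=
    Ideal.map_isPrime_of_surjective Ideal.Quotient.mk_surjective (by rw [Ideal.mk_ker]; exact hQQ)
  obtain ⟨m, hm, z, hz⟩ := krull_gen x hx.2.1 hx.finite.to_isIntegral _ hht
  have : m ≤ e := by
    refine dim_le_of_ind h (fun i => Ideal.Quotient.factor hQQ (x (z i))) ?_ ?_
    · rw [algebraicIndependent_iff]
      intro g hg
      apply hz
      have h2 : aeval (fun i => Ideal.Quotient.factor hQQ (x (z i))) g =
          Ideal.Quotient.factor hQQ (aeval (fun i => x (z i)) g) :=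
        (comp_aeval_apply (fun i => x (z i)) (Ideal.Quotient.factorₐ ℂ hQQ) g).symm
      rw [h2] at hg
      obtain ⟨w, hw⟩ := Ideal.Quotient.mk_surjective (aeval (fun i => x (z i)) g)
      rw [← hw] at hg ⊢
      rw [Ideal.Quotient.factor_mk, Ideal.Quotient.eq_zero_iff_mem] at hg
      exact Ideal.mem_map_of_mem _ hg
    · intro i
      obtain ⟨f, hf, hfx⟩ := (mem_Rd n).1 (hx.1 (z i))
      exact (mem_Rd n).2 ⟨f, hf, by rw [← hfx, Ideal.Quotient.factor_mk]⟩
  omega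

end Krull

section Vars
variable {n}

theorem mem_vI {V : Set (Fin n → ℂ)} {f : MvPolynomial (Fin n) ℂ} :
    f ∈ vanishingIdeal n V ↔ ∀ x ∈ V, eval x f = 0 := Iff.rfl

theorem vI_eq (V : Set (Fin n → ℂ)) : vanishingIdeal n V = MvPolynomial.vanishingIdeal ℂ V := by
  ext f
  rw [mem_vI, MvPolynomial.mem_vanishingIdeal_iff]
  rfl

theorem zl_eq (J : Ideal (MvPolynomial (Fin n) ℂ)) :
    zeroLocus n (J : Set (MvPolynomial (Fin n) ℂ)) = MvPolynomial.zeroLocus ℂ J := by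
  ext x
  rw [MvPolynomial.mem_zeroLocus_iff]
  rfl

theorem vI_zl (J : Ideal (MvPolynomial (Fin n) ℂ)) (h : J.IsPrime) : vanishingIdeal n (zeroLocus n J) = J := by
  rw [vI_eq, zl_eq]
  exact MvPolynomial.IsPrime.vanishingIdeal_zeroLocus J

theorem zl_span (S : Set (MvPolynomial (Fin n) ℂ)) : zeroLocus n (Ideal.span S : Ideal _) = zeroLocus n S := by
  ext x
  constructor
  · exact fun h f hf => h f (Ideal.subset_span hf)
  · intro h f hf
    have : Ideal.span S ≤ RingHom.ker (eval x) := Ideal.span_le.2 fun f hf => h f hf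
    exact this hf

theorem zl_vI {V : Set (Fin n → ℂ)} (h : IsAlgebraicSet n V) : zeroLocus n (vanishingIdeal n V) = V := by
  obtain ⟨I, rfl⟩ := h
  apply Subset.antisymm
  · intro x hx f hf
    exact hx f fun z hz => hz f hf
  · intro x hx f hf
    exact hf x hx

theorem zl_anti {S T : Set (MvPolynomial (Fin n) ℂ)} (h : S ⊆ T) : zeroLocus n T ⊆ zeroLocus n S :=
  fun _ hx f hf => hx f (h hf)

theorem vI_anti {V W : Set (Fin n → ℂ)} (h : V ⊆ W) : vanishingIdeal n W ≤ vanishingIdeal n V :=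
  fun _ hf x hx => hf x (h hx)

theorem sub_zl_iff {V : Set (Fin n → ℂ)} {S : Set (MvPolynomial (Fin n) ℂ)} :
    V ⊆ zeroLocus n S ↔ S ⊆ vanishingIdeal n V :=
  ⟨fun h f hf x hx => h hx f hf, fun h _ hx f hf => h hf _ hx⟩

theorem sub_of_vI {V W : Set (Fin n → ℂ)} (hW : IsAlgebraicSet n W)
    (h : vanishingIdeal n W ≤ vanishingIdeal n V) : V ⊆ W := by
  rw [← zl_vI hW, sub_zl_iff]; exact h

theorem IsIrredVariety.prime {V : Set (Fin n → ℂ)} (h : IsIrredVariety n V) : (vanishingIdeal n V).IsPrime := by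
  obtain ⟨h1, ⟨x, hx⟩, h3⟩ := h
  refine ⟨?_, ?_⟩
  · intro htop
    have : (1 : MvPolynomial (Fin n) ℂ) ∈ vanishingIdeal n V := by rw [htop]; trivial
    have := this x hx
    simp at this
  · intro f g hfg
    have := h3 (zeroLocus n {f}) (zeroLocus n {g}) ⟨_, rfl⟩ ⟨_, rfl⟩ (by
      intro z hz
      have := hfg z hz
      rw [map_mul, mul_eq_zero] at this
      rcases this with h | h
      · left; rintro _ rfl; exact h
      · right; rintro _ rfl; exact h)
    rcases this with h | h
    · left; exact fun z hz => h hz f rfl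
    · right; exact fun z hz => h hz g rfl

theorem irred_zl {Q : Ideal (MvPolynomial (Fin n) ℂ)} (h : Q.IsPrime) : IsIrredVariety n (zeroLocus n Q) := by
  refine ⟨⟨_, rfl⟩, ?_, ?_⟩
  · by_contra hne
    rw [Set.not_nonempty_iff_eq_empty] at hne
    have h1 := vI_zl Q h
    rw [hne] at h1
    apply h.ne_top
    rw [← h1, eq_top_iff]
    rintro f - x hx
    exact hx.elim
  · intro V₁ V₂ h1 h2 hsub
    by_contra hcon
    push Not at hcon
    obtain ⟨hc1, hc2⟩ := hcon
    obtain ⟨S1, rfl⟩ := h1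
    obtain ⟨S2, rfl⟩ := h2
    rw [sub_zl_iff, Set.not_subset] at hc1 hc2
    obtain ⟨f, hf, hf'⟩ := hc1
    obtain ⟨g, hg, hg'⟩ := hc2
    have : f * g ∈ vanishingIdeal n (zeroLocus n Q) := by
      intro x hx
      rw [map_mul]
      rcases hsub hx with h | h
      · rw [h f hf, zero_mul]
      · rw [h g hg, mul_zero]
    rw [vI_zl Q h] at this hf' hg'
    exact (h.mem_or_mem this).elim hf' hg'

theorem vI_inj {V W : Set (Fin n → ℂ)} (hV : IsAlgebraicSet n V) (hW : IsAlgebraicSet n W)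
    (h : vanishingIdeal n V = vanishingIdeal n W) : V = W := by
  rw [← zl_vI hV, h, zl_vI hW]

theorem vI_lt {V W : Set (Fin n → ℂ)} (hV : IsAlgebraicSet n V) (hW : IsAlgebraicSet n W) (h : V ⊂ W) :
    vanishingIdeal n W < vanishingIdeal n V :=
  lt_of_le_of_ne (vI_anti h.1) fun heq => h.ne (vI_inj hV hW heq.symm)

theorem chain_le {V : Set (Fin n → ℂ)} (hV : IsIrredVariety n V) {e : ℕ} (h : HasDim n (vanishingIdeal n V) e)
    {d : ℕ} (hc : HasChain n V d) : d ≤ e := by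
  obtain ⟨W, h1, h2, h3⟩ := hc
  have hex : ∀ i, ∃ k, HasDim n (vanishingIdeal n (W i)) k := fun i => by
    obtain ⟨k, _, hk⟩ := HasDim.ex n _ (h1 i).prime
    exact ⟨k, hk⟩
  choose k hk using hex
  have hlt : ∀ i j : Fin (d+1), i < j → k i < k j := fun i j hij =>
    (hk j).lt (h1 j).prime (hk i) (vI_lt (h1 i).1 (h1 j).1 (h2 i j hij))
  have hle : ∀ i : ℕ, ∀ hi : i < d + 1, i ≤ k ⟨i, hi⟩ := by
    intro i
    induction i with
    | zero => intro _; omega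
    | succ i ih =>
      intro hi
      have := ih (by omega)
      have := hlt ⟨i, by omega⟩ ⟨i+1, hi⟩ (by simp)
      omega
  have h4 : k (Fin.last d) ≤ e := by
    rcases eq_or_lt_of_le (vI_anti h3) with heq | hlt
    · rw [heq] at h
      exact ((hk _).unique h).le
    · exact (h.lt hV.prime (hk _) hlt).le
  have := hle d (by omega)
  exact this.trans h4

theorem not_maximal {Q : Ideal (MvPolynomial (Fin n) ℂ)} {e : ℕ} (h : HasDim n Q (e + 1)) : ¬ Q.IsMaximal := by
  intro hm
  obtain ⟨y, hy⟩ := h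
  have h1 := hy.finite.to_isIntegral
  have hb : (⊥ : Ideal (MvPolynomial (Fin n) ℂ ⧸ Q)).IsMaximal := Ideal.bot_quotient_isMaximal_iff Q |>.2 hm
  have h2 := Ideal.isMaximal_comap_of_isIntegral_of_isMaximal' _ h1 ⊥
  have h3 : ∀ g : MvPolynomial (Fin (e + 1)) ℂ,
      g ∈ (⊥ : Ideal (MvPolynomial (Fin n) ℂ ⧸ Q)).comap (aeval y : MvPolynomial (Fin (e + 1)) ℂ →ₐ[ℂ] _).toRingHom → g = 0 := by
    intro g hg
    exact (algebraicIndependent_iff.1 hy.2.1) g hg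
  obtain ⟨g, i, hi, hg⟩ := h2.exists_inv (x := X 0) fun h => X_ne_zero (R := ℂ) (0 : Fin (e + 1)) (h3 _ h)
  rw [h3 i hi] at hg
  have := congrArg (eval (fun _ => (0 : ℂ))) hg
  simp at this

theorem exists_step {Q : Ideal (MvPolynomial (Fin n) ℂ)} (hQ : Q.IsPrime) {e : ℕ} (h : HasDim n Q (e + 1)) :
    ∃ Q1 : Ideal (MvPolynomial (Fin n) ℂ), Q1.IsPrime ∧ Q < Q1 ∧ HasDim n Q1 e := by
  obtain ⟨M, hM, hQM⟩ := Ideal.exists_le_maximal Q hQ.ne_top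
  have hlt : Q < M := lt_of_le_of_ne hQM (by rintro rfl; exact not_maximal h hM)
  obtain ⟨hle, y, hyM, hyQ⟩ := SetLike.lt_iff_le_and_exists.1 hlt
  have hMp := hM.isPrime
  obtain ⟨Q1, hQ1, hQ1M⟩ := Ideal.exists_minimalPrimes_le (I := Q ⊔ Ideal.span {y}) (J := M)
    (sup_le hle ((Ideal.span_singleton_le_iff_mem _).2 hyM))
  obtain ⟨k, _, hk⟩ := HasDim.ex n Q1 hQ1.isPrime
  have := krull hQ y hyQ hQ1 hk h
  obtain rfl : k = e := by omega
  refine ⟨Q1, hQ1.isPrime, lt_of_le_of_ne (le_sup_left.trans hQ1.le) ?_, hk⟩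
  rintro rfl
  exact hyQ (hQ1.le (Ideal.mem_sup_right (Ideal.mem_span_singleton_self y)))

theorem chain_ex (e : ℕ) : ∀ Q : Ideal (MvPolynomial (Fin n) ℂ), Q.IsPrime → HasDim n Q e →
    ∃ W : Fin (e + 1) → Set (Fin n → ℂ),
    (∀ i, IsIrredVariety n (W i)) ∧ (∀ i j : Fin (e + 1), i < j → W i ⊂ W j) ∧
      W (Fin.last e) = zeroLocus n Q := by
  induction e with
  | zero =>
    intro Q hQ _
    exact ⟨fun _ => zeroLocus n Q, fun _ => irred_zl hQ, fun i j hij => by omega, rfl⟩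
  | succ e ih =>
    intro Q hQ h
    obtain ⟨Q1, hQ1, hlt, h1⟩ := exists_step hQ h
    obtain ⟨W, hW1, hW2, hW3⟩ := ih Q1 hQ1 h1
    have hss : W (Fin.last e) ⊂ zeroLocus n Q := by
      rw [hW3]
      refine (zl_anti hlt.le).ssubset_of_ne fun heq => hlt.ne ?_
      rw [← vI_zl Q hQ, ← heq, vI_zl Q1 hQ1]
    refine ⟨Fin.snoc (α := fun _ => Set (Fin n → ℂ)) W (zeroLocus n Q), ?_, ?_, ?_⟩
    · intro i
      refine Fin.lastCases ?_ (fun i => ?_) i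
      · simpa using irred_zl hQ
      · simpa using hW1 i
    · intro i j
      refine Fin.lastCases ?_ (fun i => ?_) i
      · intro hlt
        exact absurd hlt (not_lt.2 (Fin.le_last j))
      · refine Fin.lastCases ?_ (fun j => ?_) j
        · intro _
          simp only [Fin.snoc_castSucc, Fin.snoc_last]
          rcases eq_or_lt_of_le (Fin.le_last i) with h | h
          · rw [h]; exact hss
          · exact (hW2 _ _ h).trans hss
        · intro hij
          simp only [Fin.snoc_castSucc]
          exact hW2 _ _ (by simpa using hij)
    · simp

theorem dim_of_hasDim {V : Set (Fin n → ℂ)} (hV : IsIrredVariety n V) {e : ℕ}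
    (h : HasDim n (vanishingIdeal n V) e) : dim n V = e := by
  apply le_antisymm
  · apply csSup_le'
    intro d hd
    exact chain_le hV h hd
  · apply le_csSup
    · exact ⟨e, fun d hd => chain_le hV h hd⟩
    · obtain ⟨W, h1, h2, h3⟩ := chain_ex e _ hV.prime h
      exact ⟨W, h1, h2, by rw [h3, zl_vI hV.1]⟩

theorem hasDim_dim {V : Set (Fin n → ℂ)} (hV : IsIrredVariety n V) : HasDim n (vanishingIdeal n V) (dim n V) := by
  obtain ⟨e, _, he⟩ := HasDim.ex n _ hV.prime
  rwa [dim_of_hasDim hV he]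

theorem dim_le {V : Set (Fin n → ℂ)} (hV : IsIrredVariety n V) : dim n V ≤ n := by
  obtain ⟨e, h, he⟩ := HasDim.ex n _ hV.prime
  rwa [dim_of_hasDim hV he]

theorem comp_iff {W : Set (Fin n → ℂ)} {S : Set (MvPolynomial (Fin n) ℂ)} (hW : IsIrredVariety n W) :
    IsIrredComponent n W (zeroLocus n S) ↔ vanishingIdeal n W ∈ (Ideal.span S).minimalPrimes := by
  constructor
  · rintro ⟨_, h2, h3⟩
    refine ⟨⟨hW.prime, Ideal.span_le.2 (sub_zl_iff.1 h2)⟩, ?_⟩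
    rintro Q ⟨hQ, hSQ⟩ hQW
    have := h3 (zeroLocus n Q) (irred_zl hQ) (sub_zl_iff.2 hQW) (zl_anti (Ideal.span_le.1 hSQ))
    rw [← this, vI_zl Q hQ]
  · intro h
    refine ⟨hW, sub_zl_iff.2 (Ideal.span_le.1 h.le), ?_⟩
    intro W' hW' hWW' hW'S
    apply Subset.antisymm _ hWW'
    apply sub_of_vI hW.1
    exact h.2 ⟨hW'.prime, Ideal.span_le.2 (sub_zl_iff.1 hW'S)⟩ (vI_anti hWW')

end Vars

section Mxs
variable {n}

def Mx (J Q : Ideal (MvPolynomial (Fin n) ℂ)) (k : ℕ) : Prop :=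
  (∃ Q1 : Ideal (MvPolynomial (Fin n) ℂ), Q1.IsPrime ∧ J ≤ Q1 ∧ Q1 ≤ Q ∧ HasDim n Q1 k) ∧
    ∀ (Q1 : Ideal (MvPolynomial (Fin n) ℂ)) (k' : ℕ), Q1.IsPrime → J ≤ Q1 → Q1 ≤ Q → HasDim n Q1 k' → k' ≤ k

theorem HasDim.anti {Q Q' : Ideal (MvPolynomial (Fin n) ℂ)} (hQ : Q.IsPrime) {e e' : ℕ} (h : HasDim n Q e)
    (h' : HasDim n Q' e') (hle : Q ≤ Q') : e' ≤ e := by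
  rcases eq_or_lt_of_le hle with rfl | hlt
  · exact (h'.unique h).le
  · exact (h.lt hQ h' hlt).le

theorem mx_of {S : Set (MvPolynomial (Fin n) ℂ)} {V : Set (Fin n → ℂ)}
    {k : ℕ} (h : MaxCompDimEq n (zeroLocus n S) V k) : Mx (Ideal.span S) (vanishingIdeal n V) k := by
  obtain ⟨⟨W, hW, hVW, hd⟩, h2⟩ := h
  refine ⟨⟨vanishingIdeal n W, hW.1.prime, ?_, vI_anti hVW, hd ▸ hasDim_dim hW.1⟩, ?_⟩
  · exact Ideal.span_le.2 (sub_zl_iff.1 hW.2.1)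
  · intro Q1 k' hQ1 hJ hle hk'
    obtain ⟨Q2, hQ2, h21⟩ := Ideal.exists_minimalPrimes_le hJ
    have hp := hQ2.isPrime
    have hi := irred_zl hp
    have hc := (comp_iff (S := S) hi).2 (by rwa [vI_zl Q2 hp])
    have hd2 := hasDim_dim hi
    have := h2 _ hc (sub_zl_iff.2 (h21.trans hle))
    rw [vI_zl Q2 hp] at hd2
    exact (hd2.anti hp hk' h21).trans this

theorem of_mx {S : Set (MvPolynomial (Fin n) ℂ)} {V : Set (Fin n → ℂ)}
    {k : ℕ} (h : Mx (Ideal.span S) (vanishingIdeal n V) k) : MaxCompDimEq n (zeroLocus n S) V k := by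
  obtain ⟨⟨Q1, hQ1, hJ, hle, hk⟩, h2⟩ := h
  constructor
  · obtain ⟨Q2, hQ2, h21⟩ := Ideal.exists_minimalPrimes_le hJ
    have hp := hQ2.isPrime
    have hi := irred_zl hp
    have hc := (comp_iff (S := S) hi).2 (by rwa [vI_zl Q2 hp])
    refine ⟨_, hc, sub_zl_iff.2 (h21.trans hle), ?_⟩
    have hd2 := hasDim_dim hi
    rw [vI_zl Q2 hp] at hd2
    exact le_antisymm (h2 Q2 _ hp hQ2.le (h21.trans hle) hd2) (hd2.anti hp hk h21)
  · intro W hW hVW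
    exact h2 _ _ hW.1.prime (Ideal.span_le.2 (sub_zl_iff.1 hW.2.1)) (vI_anti hVW) (hasDim_dim hW.1)

/-- going down by one equation inside a prime `Q`. -/
theorem step_down {Q Q0 : Ideal (MvPolynomial (Fin n) ℂ)} (hQ : Q.IsPrime) (hQ0 : Q0.IsPrime) (h : Q0 ≤ Q)
    {f : MvPolynomial (Fin n) ℂ} (hf : f ∈ Q) (hf0 : f ∉ Q0) {k : ℕ} (hk : HasDim n Q0 (k + 1)) :
    ∃ Q1 : Ideal (MvPolynomial (Fin n) ℂ), Q1.IsPrime ∧ Q0 ≤ Q1 ∧ f ∈ Q1 ∧ Q1 ≤ Q ∧ HasDim n Q1 k := by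
  obtain ⟨Q1, hQ1, hQ1M⟩ := Ideal.exists_minimalPrimes_le (I := Q0 ⊔ Ideal.span {f}) (J := Q)
    (sup_le h ((Ideal.span_singleton_le_iff_mem _).2 hf))
  obtain ⟨k', _, hk'⟩ := HasDim.ex n Q1 hQ1.isPrime
  have := krull hQ0 f hf0 hQ1 hk' hk
  obtain rfl : k' = k := by omega
  exact ⟨Q1, hQ1.isPrime, le_sup_left.trans hQ1.le,
    hQ1.le (Ideal.mem_sup_right (Ideal.mem_span_singleton_self f)), hQ1M, hk'⟩

theorem hasDim_bot : HasDim n (⊥ : Ideal (MvPolynomial (Fin n) ℂ)) n := by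
  obtain ⟨e, he, h⟩ := HasDim.ex n (⊥ : Ideal (MvPolynomial (Fin n) ℂ)) Ideal.isPrime_bot
  have : n ≤ e := by
    refine dim_le_of_ind h (gens n ⊥) ?_ ?_
    · rw [algebraicIndependent_iff]
      intro p hp
      rw [aeval_gens] at hp
      have := Ideal.Quotient.eq_zero_iff_mem.1 hp
      exact this
    · intro i
      rw [Rd_eq, pow_one]
      exact mem_Lam _ i
  obtain rfl : e = n := by omega
  exact h

theorem mx_ex {J Q : Ideal (MvPolynomial (Fin n) ℂ)} (hQ : Q.IsPrime) (h : J ≤ Q) : ∃ k, Mx J Q k := by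
  classical
  let s : Set ℕ := {k | ∃ Q1 : Ideal (MvPolynomial (Fin n) ℂ), Q1.IsPrime ∧ J ≤ Q1 ∧ Q1 ≤ Q ∧ HasDim n Q1 k}
  obtain ⟨e, _, he⟩ := HasDim.ex n Q hQ
  have hne : s.Nonempty := ⟨e, Q, hQ, h, le_rfl, he⟩
  have hb : BddAbove s := by
    refine ⟨n, ?_⟩
    rintro k ⟨Q1, hQ1, _, _, hk⟩
    obtain ⟨e', h1, h2⟩ := HasDim.ex n Q1 hQ1
    rw [hk.unique h2]; exact h1
  refine ⟨sSup s, Nat.sSup_mem hne hb, ?_⟩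
  intro Q1 k' h1 h2 h3 h4
  exact le_csSup hb ⟨Q1, h1, h2, h3, h4⟩

theorem Mx.unique {J Q : Ideal (MvPolynomial (Fin n) ℂ)} {k k' : ℕ} (h : Mx J Q k) (h' : Mx J Q k') : k = k' := by
  apply le_antisymm
  · obtain ⟨Q1, h1, h2, h3, h4⟩ := h.1
    exact h'.2 _ _ h1 h2 h3 h4
  · obtain ⟨Q1, h1, h2, h3, h4⟩ := h'.1
    exact h.2 _ _ h1 h2 h3 h4

theorem Mx.mono {J J' Q : Ideal (MvPolynomial (Fin n) ℂ)} {k k' : ℕ} (h : Mx J Q k) (h' : Mx J' Q k')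
    (hle : J ≤ J') : k' ≤ k := by
  obtain ⟨Q1, h1, h2, h3, h4⟩ := h'.1
  exact h.2 _ _ h1 (hle.trans h2) h3 h4

theorem Mx.insert {S : Set (MvPolynomial (Fin n) ℂ)} {Q : Ideal (MvPolynomial (Fin n) ℂ)} (hQ : Q.IsPrime)
    {f : MvPolynomial (Fin n) ℂ} (hf : f ∈ Q) {k k' : ℕ}
    (h : Mx (Ideal.span S) Q k) (h' : Mx (Ideal.span (insert f S)) Q k') : k ≤ k' + 1 := by
  obtain ⟨Q1, h1, h2, h3, h4⟩ := h.1
  by_cases hfQ : f ∈ Q1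
  · have := h'.2 Q1 k h1 (Ideal.span_le.2 (Set.insert_subset hfQ (Ideal.span_le.1 h2))) h3 h4
    omega
  · rcases k with _ | k
    · omega
    · obtain ⟨Q2, a1, a2, a3, a4, a5⟩ := step_down hQ h1 h3 hf hfQ h4
      have := h'.2 Q2 k a1 (Ideal.span_le.2 (Set.insert_subset a3 (Ideal.span_le.1 (h2.trans a2)))) a4 a5
      omega

theorem mx_empty {Q : Ideal (MvPolynomial (Fin n) ℂ)} : Mx (Ideal.span ∅) Q n := by
  refine ⟨⟨⊥, Ideal.isPrime_bot, by simp, bot_le, hasDim_bot⟩, ?_⟩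
  intro Q1 k' h1 _ _ hk
  obtain ⟨e', h1, h2⟩ := HasDim.ex n Q1 h1
  rw [hk.unique h2]; exact h1

theorem Mx.card {Q : Ideal (MvPolynomial (Fin n) ℂ)} (hQ : Q.IsPrime)
    (I : Finset (MvPolynomial (Fin n) ℂ)) : (∀ f ∈ I, f ∈ Q) → ∀ k, Mx (Ideal.span (I : Set _)) Q k →
      n ≤ k + I.card := by
  classical
  induction I using Finset.induction_on with
  | empty =>
    intro _ k hk
    rw [Finset.coe_empty] at hk
    have := hk.unique mx_empty
    simp; omega
  | insert f I hf ih =>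
    intro h k hk
    have h0 : ∀ f ∈ I, f ∈ Q := fun g hg => h g (Finset.mem_insert_of_mem hg)
    obtain ⟨k0, hk0⟩ := mx_ex hQ (J := Ideal.span (I : Set _)) (Ideal.span_le.2 fun g hg => h0 g hg)
    have h1 := ih h0 k0 hk0
    rw [Finset.coe_insert] at hk
    have h2 := hk0.insert hQ (h f (Finset.mem_insert_self _ _)) hk
    rw [Finset.card_insert_of_notMem hf]
    omega

theorem Mx.inter {Q : Ideal (MvPolynomial (Fin n) ℂ)} (hQ : Q.IsPrime)
    (I : Finset (MvPolynomial (Fin n) ℂ)) : (∀ f ∈ I, f ∈ Q) → ∀ k, Mx (Ideal.span (I : Set _)) Q k →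
      ∀ j, k ≤ j → j ≤ n → ∃ I' ⊆ I, Mx (Ideal.span (I' : Set _)) Q j := by
  classical
  induction I using Finset.induction_on with
  | empty =>
    intro _ k hk j h1 h2
    rw [Finset.coe_empty] at hk
    have := hk.unique mx_empty
    obtain rfl : j = n := by omega
    exact ⟨∅, Finset.Subset.refl _, by rw [Finset.coe_empty]; exact mx_empty⟩
  | insert f I hf ih =>
    intro h k hk j hkj hj
    rcases eq_or_lt_of_le hkj with rfl | hlt
    · exact ⟨_, Finset.Subset.refl _, hk⟩
    have h0 : ∀ f ∈ I, f ∈ Q := fun g hg => h g (Finset.mem_insert_of_mem hg)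
    obtain ⟨k0, hk0⟩ := mx_ex hQ (J := Ideal.span (I : Set _)) (Ideal.span_le.2 fun g hg => h0 g hg)
    rw [Finset.coe_insert] at hk
    have h2 := hk0.insert hQ (h f (Finset.mem_insert_self _ _)) hk
    obtain ⟨I', hI', h3⟩ := ih h0 k0 hk0 j (by omega) hj
    exact ⟨I', hI'.trans (Finset.subset_insert _ _), h3⟩

/-- the set defining the partial degree -/
def PD (Q : Ideal (MvPolynomial (Fin n) ℂ)) (i δ : ℕ) : Prop :=
  ∃ I : Finset (MvPolynomial (Fin n) ℂ), (∀ f ∈ I, f.totalDegree ≤ δ) ∧ (∀ f ∈ I, f ∈ Q) ∧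
    Mx (Ideal.span (I : Set _)) Q (n - i)

theorem pd_set {V : Set (Fin n → ℂ)} (i : ℕ) (hi : i ≠ 0) :
    partialDeg n V i = sInf {δ | PD (vanishingIdeal n V) i δ} := by
  rw [partialDeg, if_neg hi]
  congr 1
  ext δ
  constructor
  · rintro ⟨I, h1, h2, h3⟩
    exact ⟨I, h1, sub_zl_iff.1 h2, mx_of h3⟩
  · rintro ⟨I, h1, h2, h3⟩
    exact ⟨I, h1, sub_zl_iff.2 h2, of_mx h3⟩

theorem PD.mono {Q : Ideal (MvPolynomial (Fin n) ℂ)} (hQ : Q.IsPrime) {i j δ : ℕ} (h : PD Q j δ)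
    (hij : i ≤ j) : PD Q i δ := by
  obtain ⟨I, h1, h2, h3⟩ := h
  obtain ⟨I', hI', h4⟩ := Mx.inter hQ I h2 _ h3 (n - i) (by omega) (by omega)
  exact ⟨I', fun f hf => h1 f (hI' hf), fun f hf => h2 f (hI' hf), h4⟩

theorem PD.pos {Q : Ideal (MvPolynomial (Fin n) ℂ)} (hQ : Q.IsPrime) {i δ : ℕ} (h : PD Q i δ)
    (hi : 0 < i) (hin : i ≤ n) : 0 < δ := by
  by_contra h0
  obtain ⟨I, h1, h2, h3⟩ := h
  have : Ideal.span (I : Set (MvPolynomial (Fin n) ℂ)) ≤ ⊥ := by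
    rw [Ideal.span_le]
    intro f hf
    have hd : f.totalDegree = 0 := by have := h1 f hf; omega
    rw [totalDegree_eq_zero_iff_eq_C] at hd
    change f = 0
    have hfQ := h2 f hf
    by_contra hne
    rw [hd] at hfQ hne
    refine hQ.ne_top (Ideal.eq_top_of_isUnit_mem _ hfQ (IsUnit.map _ (isUnit_iff_ne_zero.2 ?_)))
    rintro h; rw [h, map_zero] at hne; exact hne rfl
  have := h3.2 ⊥ n Ideal.isPrime_bot this bot_le hasDim_bot
  omega

end Mxs

section UL
variable {n}

theorem Hf_bot_le (D : ℕ) : Hf n (⊥ : Ideal (MvPolynomial (Fin n) ℂ)) D ≤ (D + 1) ^ n := by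
  unfold Hf
  rw [Rd_eq]
  exact Lam_finrank_le _ _

theorem U_aux {Q : Ideal (MvPolynomial (Fin n) ℂ)} (hQ : Q.IsPrime) (η : ℕ → ℕ) (T : ℕ) (m : ℕ) (hmn : m ≤ n)
    (h : ∀ i, 1 ≤ i → i ≤ m → PD Q i (η i)) (hT : ∀ i, 1 ≤ i → i ≤ m → η i ∣ T) :
    ∃ Q1 : Ideal (MvPolynomial (Fin n) ℂ), Q1.IsPrime ∧ Q1 ≤ Q ∧ HasDim n Q1 (n - m) ∧
      ∀ D, Hf n Q1 D * ∏ i ∈ Finset.Icc 1 m, (T / η i) ≤ Hf n (⊥ : Ideal (MvPolynomial (Fin n) ℂ)) (D + m * T) := by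
  induction m with
  | zero => exact ⟨⊥, Ideal.isPrime_bot, bot_le, hasDim_bot, fun D => by simp⟩
  | succ m ih =>
    obtain ⟨Q1, h1, h2, h3, h4⟩ := ih (by omega) (fun i hi hi' => h i hi (by omega)) (fun i hi hi' => hT i hi (by omega))
    obtain ⟨I, a1, a2, a3⟩ := h (m + 1) (by omega) le_rfl
    have : ∃ f ∈ I, f ∉ Q1 := by
      by_contra hcon
      push Not at hcon
      have := a3.2 Q1 _ h1 (Ideal.span_le.2 hcon) h2 h3
      omega
    obtain ⟨f, hfI, hfQ⟩ := this
    have hnm : n - m = (n - (m + 1)) + 1 := by omega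
    rw [hnm] at h3
    obtain ⟨Q2, b1, b2, b3, b4, b5⟩ := step_down hQ h1 h2 (a2 f hfI) hfQ h3
    refine ⟨Q2, b1, b4, b5, fun D => ?_⟩
    have hm := Hf_mult n b2 f (fun g hg => (h1.mem_or_mem hg).resolve_right hfQ) b3 _ (a1 f hfI) D (T / η (m + 1))
    rw [Nat.div_mul_cancel (hT (m+1) (by omega) le_rfl)] at hm
    rw [Finset.prod_Icc_succ_top (by omega)]
    calc Hf n Q2 D * ((∏ i ∈ Finset.Icc 1 m, (T / η i)) * (T / η (m + 1)))
        = (T / η (m + 1) * Hf n Q2 D) * ∏ i ∈ Finset.Icc 1 m, (T / η i) := by ring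
      _ ≤ Hf n Q1 (D + T) * ∏ i ∈ Finset.Icc 1 m, (T / η i) := Nat.mul_le_mul_right _ hm
      _ ≤ _ := h4 _
      _ = _ := by congr 1; ring

theorem U {Q : Ideal (MvPolynomial (Fin n) ℂ)} (hQ : Q.IsPrime) (η : ℕ → ℕ) (T : ℕ) (m : ℕ) (hmn : m ≤ n)
    (hd : HasDim n Q (n - m))
    (h : ∀ i, 1 ≤ i → i ≤ m → PD Q i (η i)) (hT : ∀ i, 1 ≤ i → i ≤ m → η i ∣ T) (hT0 : 0 < T) :
    Hf n Q T ≤ (n + 2) ^ n * T ^ (n - m) * ∏ i ∈ Finset.Icc 1 m, η i := by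
  obtain ⟨Q1, h1, h2, h3, h4⟩ := U_aux hQ η T m hmn h hT
  obtain rfl : Q1 = Q := by
    by_contra hne
    exact (h3.lt h1 hd (lt_of_le_of_ne h2 hne)).ne rfl
  have h5 := (h4 T).trans (Hf_bot_le _)
  have h6 : (T + m * T + 1) ^ n ≤ ((n + 2) * T) ^ n := Nat.pow_le_pow_left (by nlinarith) _
  have h7 : (∏ i ∈ Finset.Icc 1 m, (T / η i)) * ∏ i ∈ Finset.Icc 1 m, η i = T ^ m := by
    rw [← Finset.prod_mul_distrib, Finset.prod_congr rfl (g := fun _ => T)]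
    · simp
    · intro i hi
      rw [Finset.mem_Icc] at hi
      exact Nat.div_mul_cancel (hT i hi.1 hi.2)
  have h8 : T ^ m * T ^ (n - m) = T ^ n := by rw [← pow_add]; congr 1; omega
  have h9 : 0 < T ^ m := by positivity
  refine Nat.le_of_mul_le_mul_right ?_ h9
  calc Hf n Q1 T * T ^ m = (Hf n Q1 T * ∏ i ∈ Finset.Icc 1 m, (T / η i)) * ∏ i ∈ Finset.Icc 1 m, η i := by
        rw [← h7]; ring
    _ ≤ ((n + 2) * T) ^ n * ∏ i ∈ Finset.Icc 1 m, η i := Nat.mul_le_mul_right _ (h5.trans h6)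
    _ = (n + 2) ^ n * (T ^ m * T ^ (n - m)) * ∏ i ∈ Finset.Icc 1 m, η i := by rw [h8, mul_pow]
    _ = _ := by ring

/-- lower bound. -/
theorem Lstep {Q Q' : Ideal (MvPolynomial (Fin n) ℂ)} (hQ' : Q'.IsPrime) (hle : Q' ≤ Q)
    {e : ℕ} (he : e ≤ n) (hd : HasDim n Q' e) (a b : ℕ) (ha : 0 < a) (hab : a ≤ b)
    (hmin : ∀ f ∈ Q, f ∉ Q' → b ≤ f.totalDegree) :
    b ^ e * Hf n Q a ≤ (2 * (n + 1)) ^ e * a ^ e * Hf n Q b := by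
  have heq : ∀ D < b, Hf n Q D = Hf n Q' D := by
    intro D hD
    apply le_antisymm
    · exact Hf_anti n hle D
    · refine Hf_le_of n hle D fun f hf hfd => ?_
      by_contra hcon
      have := hmin f hf hcon
      omega
  rcases Nat.lt_or_ge (a + n) b with hlt | hge
  · obtain ⟨b, rfl⟩ : ∃ b', b = b' + 1 := ⟨b - 1, by omega⟩
    set k := b / (a + n) with hk
    have hk1 : k * (a + n) ≤ b := Nat.div_mul_le_self _ _
    have hk2 : b < (k + 1) * (a + n) := by
      rw [mul_comm]; exact Nat.lt_mul_div_succ b (by omega)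
    have hkpos : 0 < k := Nat.div_pos (by omega) (by omega)
    have hg := growthQ hQ' hd k hkpos a
    have h1 : Hf n Q' (k * (a + e)) ≤ Hf n Q' b := Hf_mono n _ (le_trans (Nat.mul_le_mul_left _ (by omega)) hk1)
    rw [← heq a (by omega)] at hg
    rw [← heq b (by omega)] at h1
    have h2 : Hf n Q b ≤ Hf n Q (b + 1) := Hf_mono n _ (by omega)
    have h3 : (b + 1) ^ e ≤ (2 * (n + 1) * a * k) ^ e := by
      apply Nat.pow_le_pow_left
      have : (k + 1) * (a + n) ≤ (2 * k) * ((n + 1) * a) := Nat.mul_le_mul (by omega) (by nlinarith)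
      nlinarith
    calc (b + 1) ^ e * Hf n Q a ≤ (2 * (n + 1) * a * k) ^ e * Hf n Q a := Nat.mul_le_mul_right _ h3
      _ = (2 * (n + 1)) ^ e * a ^ e * (k ^ e * Hf n Q a) := by rw [mul_pow, mul_pow]; ring
      _ ≤ _ := Nat.mul_le_mul_left _ (by omega)
  · have h3 : b ^ e ≤ (2 * (n + 1) * a) ^ e := Nat.pow_le_pow_left (by nlinarith) _
    rw [mul_pow] at h3
    exact Nat.mul_le_mul h3 (Hf_mono n _ hab)

theorem Lbase {Q : Ideal (MvPolynomial (Fin n) ℂ)} (b : ℕ) (hn : 0 < n) (hb : 0 < b)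
    (hmin : ∀ f ∈ Q, f ≠ 0 → b ≤ f.totalDegree) : b ^ n ≤ (2 * (n + 1)) ^ n * Hf n Q b := by
  have h1 : Hf n (⊥ : Ideal (MvPolynomial (Fin n) ℂ)) (b - 1) ≤ Hf n Q (b - 1) := by
    refine Hf_le_of n bot_le _ fun f hf hfd => ?_
    by_contra hcon
    have := hmin f hf hcon
    omega
  have h2 := hasDim_bot (n := n) |>.lower ((b - 1) / n)
  have h3 : n * ((b - 1) / n) ≤ b - 1 := Nat.mul_div_le _ _
  have h4 : b - 1 < n * ((b - 1) / n + 1) := Nat.lt_mul_div_succ _ hn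
  have h5 : ((b - 1) / n + 1) ^ n ≤ Hf n Q b :=
    h2.trans ((Hf_mono n _ h3).trans (h1.trans (Hf_mono n _ (by omega))))
  calc b ^ n ≤ (2 * (n + 1) * ((b - 1) / n + 1)) ^ n := Nat.pow_le_pow_left
        (le_trans (by omega) (Nat.mul_le_mul_right _ (by omega : n ≤ 2 * (n + 1)))) _
    _ = (2 * (n + 1)) ^ n * ((b - 1) / n + 1) ^ n := mul_pow _ _ _
    _ ≤ _ := Nat.mul_le_mul_left _ h5

theorem L {Q : Ideal (MvPolynomial (Fin n) ℂ)} (δ : ℕ → ℕ) (r : ℕ) (hr : r ≤ n)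
    (hpos : ∀ i, 1 ≤ i → i ≤ r → 0 < δ i)
    (hmono : ∀ i, 1 ≤ i → i + 1 ≤ r → δ i ≤ δ (i + 1))
    (h1 : ∀ f ∈ Q, f ≠ 0 → δ 1 ≤ f.totalDegree)
    (hV : ∀ i, 1 ≤ i → i + 1 ≤ r → ∃ Q' : Ideal (MvPolynomial (Fin n) ℂ), Q'.IsPrime ∧ Q' ≤ Q ∧
      HasDim n Q' (n - i) ∧ ∀ f ∈ Q, f ∉ Q' → δ (i + 1) ≤ f.totalDegree) (m : ℕ) (hm : 1 ≤ m) (hmr : m ≤ r) :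
    δ m ^ (n - m) * ∏ i ∈ Finset.Icc 1 m, δ i ≤ (2 * (n + 1)) ^ (n * m) * Hf n Q (δ m) := by
  induction m, hm using Nat.le_induction with
  | base =>
    have := Lbase (δ 1) (by omega) (hpos 1 le_rfl hmr) h1
    simp only [Finset.Icc_self, Finset.prod_singleton, mul_one]
    rw [← pow_succ, show n - 1 + 1 = n by omega]
    exact this
  | succ m hm ih =>
    have ih := ih (by omega)
    obtain ⟨Q', a1, a2, a3, a4⟩ := hV m hm hmr
    have hp := hpos m hm (by omega)
    have hs := Lstep a1 a2 (by omega) a3 (δ m) (δ (m + 1)) hp (hmono m hm hmr) a4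
    have hpp : 0 < δ m ^ (n - m) := by positivity
    refine Nat.le_of_mul_le_mul_left ?_ hpp
    rw [Finset.prod_Icc_succ_top (by omega)]
    calc δ m ^ (n - m) * (δ (m + 1) ^ (n - (m + 1)) * ((∏ i ∈ Finset.Icc 1 m, δ i) * δ (m + 1)))
        = (δ m ^ (n - m) * ∏ i ∈ Finset.Icc 1 m, δ i) * (δ (m + 1) ^ (n - (m + 1)) * δ (m + 1)) := by ring
      _ = (δ m ^ (n - m) * ∏ i ∈ Finset.Icc 1 m, δ i) * δ (m + 1) ^ (n - m) := by
          rw [← pow_succ, show n - (m + 1) + 1 = n - m by omega]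
      _ ≤ ((2 * (n + 1)) ^ (n * m) * Hf n Q (δ m)) * δ (m + 1) ^ (n - m) := Nat.mul_le_mul_right _ ih
      _ = (2 * (n + 1)) ^ (n * m) * (δ (m + 1) ^ (n - m) * Hf n Q (δ m)) := by ring
      _ ≤ (2 * (n + 1)) ^ (n * m) * ((2 * (n + 1)) ^ (n - m) * δ m ^ (n - m) * Hf n Q (δ (m + 1))) :=
          Nat.mul_le_mul_left _ hs
      _ ≤ (2 * (n + 1)) ^ (n * m) * ((2 * (n + 1)) ^ n * δ m ^ (n - m) * Hf n Q (δ (m + 1))) := by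
          gcongr <;> omega
      _ = _ := by rw [mul_add n m 1, pow_add]; ring

end UL

section DegUp
variable {n}

theorem down_many {Q0 M : Ideal (MvPolynomial (Fin n) ℂ)} (hM : M.IsPrime) (hQ0 : Q0.IsPrime) (hle : Q0 ≤ M)
    {k : ℕ} (hk : HasDim n Q0 k) (y : ℕ → MvPolynomial (Fin n) ℂ) (hy : ∀ i, y i ∈ M) (t : ℕ) :
    ∃ Q1 : Ideal (MvPolynomial (Fin n) ℂ), Q1.IsPrime ∧ Q0 ≤ Q1 ∧ Q1 ≤ M ∧ (∀ i < t, y i ∈ Q1) ∧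
      ∃ k', HasDim n Q1 k' ∧ k ≤ k' + t := by
  induction t with
  | zero => exact ⟨Q0, hQ0, le_rfl, hle, by omega, k, hk, by omega⟩
  | succ t ih =>
    obtain ⟨Q1, h1, h2, h3, h4, k', h5, h6⟩ := ih
    by_cases hc : y t ∈ Q1
    · refine ⟨Q1, h1, h2, h3, ?_, k', h5, by omega⟩
      intro i hi
      rcases Nat.lt_succ_iff_lt_or_eq.1 hi with h | rfl
      · exact h4 i h
      · exact hc
    · obtain ⟨Q2, hQ2, hQ2M⟩ := Ideal.exists_minimalPrimes_le (I := Q1 ⊔ Ideal.span {y t}) (J := M)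
        (sup_le h3 ((Ideal.span_singleton_le_iff_mem _).2 (hy t)))
      obtain ⟨k2, _, hk2⟩ := HasDim.ex n Q2 hQ2.isPrime
      have := krull h1 (y t) hc hQ2 hk2 h5
      have hQ12 : Q1 ≤ Q2 := le_sup_left.trans hQ2.le
      refine ⟨Q2, hQ2.isPrime, h2.trans hQ12, hQ2M, ?_, k2, hk2, by omega⟩
      intro i hi
      rcases Nat.lt_succ_iff_lt_or_eq.1 hi with h | rfl
      · exact hQ12 (h4 i h)
      · exact hQ2.le (Ideal.mem_sup_right (Ideal.mem_span_singleton_self _))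

theorem pt_maximal (x : Fin n → ℂ) : (vanishingIdeal n {x}).IsMaximal := by
  rw [vI_eq]
  infer_instance

theorem dim_zero_of_finite {Q : Ideal (MvPolynomial (Fin n) ℂ)} (hQ : Q.IsPrime) {k : ℕ} (hk : HasDim n Q k)
    (hf : (zeroLocus n Q).Finite) : k = 0 := by
  rcases k with _ | k
  · rfl
  exfalso
  refine not_maximal hk ?_
  have h1 : (hf.toFinset).inf (fun x => vanishingIdeal n {x}) ≤ Q := by
    intro f hfm
    rw [← vI_zl Q hQ]
    intro x hx
    have := (Submodule.mem_finsetInf.1 hfm) x (by simpa using hx)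
    exact this x rfl
  obtain ⟨x, _, hx⟩ := (Ideal.IsPrime.inf_le' hQ).1 h1
  have := (pt_maximal x).eq_of_le hQ.ne_top hx
  rw [← this]; exact pt_maximal x

def QQ (Q : Ideal (MvPolynomial (Fin n) ℂ)) (F : Set (Fin n → ℂ)) (y : ℕ → MvPolynomial (Fin n) ℂ) :
    ℕ → Set (Ideal (MvPolynomial (Fin n) ℂ))
  | 0 => {Q' | Q' = Q ∧ ∃ x ∈ F, Q' ≤ vanishingIdeal n {x}}
  | i + 1 => {Q1 | (∃ Q' ∈ QQ Q F y i, Q1 ∈ (Q' ⊔ Ideal.span {y i}).minimalPrimes) ∧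
      ∃ x ∈ F, Q1 ≤ vanishingIdeal n {x}}

theorem QQ_prop {Q : Ideal (MvPolynomial (Fin n) ℂ)} (hQ : Q.IsPrime) {e : ℕ} (he : HasDim n Q e)
    (F : Set (Fin n → ℂ)) (hF : F.Finite) (y : ℕ → MvPolynomial (Fin n) ℂ) (hy : ∀ i, ∀ x ∈ F, eval x (y i) = 0)
    (hFQ : ∀ x ∈ zeroLocus n Q, (∀ i < e, eval x (y i) = 0) → x ∈ F) (i : ℕ) :
    i ≤ e → ∀ Q' ∈ QQ Q F y i, Q'.IsPrime ∧ Q ≤ Q' ∧ (∀ j < i, y j ∈ Q') ∧ HasDim n Q' (e - i) ∧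
      (i < e → y i ∉ Q') := by
  have key : ∀ i Q', i ≤ e → Q'.IsPrime → Q ≤ Q' → (∀ j < i, y j ∈ Q') → HasDim n Q' (e - i) →
      (∃ x ∈ F, Q' ≤ vanishingIdeal n {x}) → i < e → y i ∉ Q' := by
    intro i Q' hi h1 h2 h3 h4 ⟨x, hx, hQx⟩ hie hmem
    obtain ⟨Q1, a1, a2, a3, a4, k', a5, a6⟩ := down_many (pt_maximal x).isPrime h1 hQx h4
      (fun j => y (i + 1 + j)) (fun j z hz => by rw [hz]; exact hy _ x hx) (e - i - 1)
    have hk := dim_zero_of_finite a1 a5 (hF.subset fun z hz => hFQ z (zl_anti (h2.trans a2) hz) fun j hj => hz _ ?_)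
    · omega
    · rcases lt_trichotomy j i with h | h | h
      · exact a2 (h3 j h)
      · rw [h]; exact a2 hmem
      · have := a4 (j - (i + 1)) (by omega)
        rwa [show i + 1 + (j - (i + 1)) = j by omega] at this
  induction i with
  | zero =>
    rintro _ Q' ⟨rfl, h⟩
    exact ⟨hQ, le_rfl, by omega, he, key 0 _ (by omega) hQ le_rfl (by omega) he h⟩
  | succ i ih =>
    rintro hi Q1 ⟨⟨Q', hQ', hmin⟩, h⟩
    obtain ⟨h1, h2, h3, h4, h5⟩ := ih (by omega) Q' hQ'
    have hp := hmin.isPrime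
    have hle : Q' ≤ Q1 := le_sup_left.trans hmin.le
    have hy' : ∀ j < i + 1, y j ∈ Q1 := by
      intro j hj
      rcases Nat.lt_succ_iff_lt_or_eq.1 hj with h | rfl
      · exact hle (h3 j h)
      · exact hmin.le (Ideal.mem_sup_right (Ideal.mem_span_singleton_self _))
    obtain ⟨k, _, hk⟩ := HasDim.ex n Q1 hp
    have := krull h1 (y i) (h5 (by omega)) hmin hk h4
    obtain rfl : k = e - (i + 1) := by omega
    exact ⟨hp, h2.trans hle, hy', hk, key _ _ hi hp (h2.trans hle) hy' hk h⟩

theorem QQ_pt {Q : Ideal (MvPolynomial (Fin n) ℂ)} (F : Set (Fin n → ℂ))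
    (y : ℕ → MvPolynomial (Fin n) ℂ) (hy : ∀ i, ∀ x ∈ F, eval x (y i) = 0)
    (x : Fin n → ℂ) (hx : x ∈ F) (hxQ : x ∈ zeroLocus n Q) (i : ℕ) :
    ∃ Q' ∈ QQ Q F y i, Q' ≤ vanishingIdeal n {x} := by
  induction i with
  | zero =>
    have : Q ≤ vanishingIdeal n {x} := fun f hf z hz => by rw [hz]; exact hxQ f hf
    exact ⟨Q, ⟨rfl, x, hx, this⟩, this⟩
  | succ i ih =>
    obtain ⟨Q', h1, h2⟩ := ih
    have hp := (pt_maximal x).isPrime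
    obtain ⟨Q2, hQ2, hQ2M⟩ := Ideal.exists_minimalPrimes_le (I := Q' ⊔ Ideal.span {y i}) (J := vanishingIdeal n {x})
        (sup_le h2 ((Ideal.span_singleton_le_iff_mem _).2 (fun z hz => by rw [hz]; exact hy i x hx)))
    exact ⟨Q2, ⟨⟨Q', h1, hQ2⟩, x, hx, hQ2M⟩, hQ2M⟩

theorem Hf_pts (F : Finset (Fin n → ℂ)) (J : Ideal (MvPolynomial (Fin n) ℂ))
    (hJ : ∀ f ∈ J, ∀ x ∈ F, eval x f = 0) (D : ℕ) (hD : F.card ≤ D) : F.card ≤ Hf n J D := by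
  classical
  have hsep : ∀ p q : Fin n → ℂ, ∃ f : MvPolynomial (Fin n) ℂ, f.totalDegree ≤ 1 ∧
      (p ≠ q → eval p f = 1 ∧ eval q f = 0) := by
    intro p q
    by_cases hpq : p = q
    · exact ⟨0, by simp, fun h => absurd hpq h⟩
    · obtain ⟨j, hj⟩ := Function.ne_iff.1 hpq
      have hj' : p j - q j ≠ 0 := sub_ne_zero.2 hj
      refine ⟨C (p j - q j)⁻¹ * (X j - C (q j)), ?_, fun _ => ⟨?_, ?_⟩⟩
      · refine (totalDegree_mul _ _).trans ?_
        rw [totalDegree_C, zero_add]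
        refine (totalDegree_sub _ _).trans ?_
        simp
      · simp [hj']
      · simp
  choose g hg1 hg2 using hsep
  let f : (Fin n → ℂ) → MvPolynomial (Fin n) ℂ := fun p => ∏ q ∈ F.erase p, g p q
  have hf1 : ∀ p ∈ F, (f p).totalDegree ≤ D := by
    intro p hp
    refine (totalDegree_finset_prod _ _).trans ?_
    refine (Finset.sum_le_sum fun q _ => hg1 p q).trans ?_
    simp only [Finset.sum_const, smul_eq_mul, mul_one]
    exact (Finset.card_le_card (Finset.erase_subset _ _)).trans hD
  have hf2 : ∀ p ∈ F, ∀ q ∈ F, eval q (f p) = if p = q then 1 else 0 := by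
    intro p hp q hq
    simp only [f, eval_prod]
    split_ifs with h
    · subst h
      exact Finset.prod_eq_one fun q hq => (hg2 p q (Finset.ne_of_mem_erase hq).symm).1
    · exact Finset.prod_eq_zero (Finset.mem_erase.2 ⟨Ne.symm h, hq⟩) (hg2 p q h).2
  have hfd := Rd_fd n J D
  let w : F → Rd n J D := fun p => ⟨Ideal.Quotient.mk J (f p), (mem_Rd n).2 ⟨f p, hf1 p p.2, rfl⟩⟩
  have hli : LinearIndependent ℂ w := by
    rw [Fintype.linearIndependent_iff]
    intro c hc q
    have h1 : Ideal.Quotient.mk J (∑ p : F, C (c p) * f p) = 0 := by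
      have := congrArg Subtype.val hc
      rw [Submodule.coe_zero] at this
      rw [← this, map_sum, AddSubmonoidClass.coe_finset_sum]
      refine Finset.sum_congr rfl fun p _ => ?_
      rw [Submodule.coe_smul, C_mul']
      rfl
    have h2 := hJ _ (Ideal.Quotient.eq_zero_iff_mem.1 h1) q q.2
    rw [map_sum, Finset.sum_eq_single q] at h2
    · rw [map_mul, eval_C, hf2 q q.2 q q.2, if_pos rfl, mul_one] at h2
      exact h2
    · intro p _ hpq
      rw [map_mul, hf2 p p.2 q q.2, if_neg (fun h => hpq (Subtype.ext h)), mul_zero]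
    · simp
  have := hli.fintype_card_le_finrank
  rwa [Fintype.card_coe] at this

theorem degUp {Q : Ideal (MvPolynomial (Fin n) ℂ)} (hQ : Q.IsPrime) {e : ℕ} (he : HasDim n Q e)
    (F : Finset (Fin n → ℂ)) (y : ℕ → MvPolynomial (Fin n) ℂ) (hyd : ∀ i, (y i).totalDegree ≤ 1)
    (hy : ∀ i, ∀ x ∈ F, eval x (y i) = 0) (hFQ' : ∀ x ∈ F, x ∈ zeroLocus n Q)
    (hFQ : ∀ x ∈ zeroLocus n Q, (∀ i < e, eval x (y i) = 0) → x ∈ F) (D : ℕ) (hD : F.card ≤ D) :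
    D ^ e * F.card ≤ Hf n Q ((e + 1) * D) := by
  rcases F.eq_empty_or_nonempty with rfl | ⟨x0, hx0⟩
  · simp
  have hstep : ∀ i ≤ e, D ^ i * Hf n (sInf (QQ Q F y i)) D ≤ Hf n Q (D + i * D) := by
    have haux : ∀ i ≤ e, ∀ D', D ^ i * Hf n (sInf (QQ Q F y i)) D' ≤ Hf n Q (D' + i * D) := by
      intro i
      induction i with
      | zero =>
        intro _ D'
        rw [pow_zero, one_mul, zero_mul, add_zero]
        apply Hf_anti
        refine le_sInf ?_
        rintro _ ⟨rfl, _⟩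
        exact le_rfl
      | succ i ih =>
        intro hi D'
        have hP := QQ_prop hQ he F F.finite_toSet y (by simpa using hy) (by simpa using hFQ) i (by omega)
        have hm := Hf_mult n (J := sInf (QQ Q F y i)) (J' := sInf (QQ Q F y (i+1))) ?_ (y i) ?_ ?_ 1 (hyd i) D' D
        · rw [mul_one] at hm
          calc D ^ (i + 1) * Hf n (sInf (QQ Q F y (i+1))) D' = D ^ i * (D * Hf n (sInf (QQ Q F y (i+1))) D') := by ring
            _ ≤ D ^ i * Hf n (sInf (QQ Q F y i)) (D' + D) := Nat.mul_le_mul_left _ hm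
            _ ≤ _ := ih (by omega) _
            _ = _ := by congr 1; ring
        · refine le_sInf ?_
          rintro Q1 ⟨⟨Q', hQ', hmin⟩, _⟩
          exact (sInf_le hQ').trans (le_sup_left.trans hmin.le)
        · intro f hf
          rw [Ideal.mem_sInf] at hf ⊢
          intro Q' hQ'
          obtain ⟨h1, _, _, _, h5⟩ := hP Q' hQ'
          exact (h1.mem_or_mem (hf hQ')).resolve_right (h5 (by omega))
        · rw [Ideal.mem_sInf]
          rintro Q1 ⟨⟨Q', hQ', hmin⟩, _⟩
          exact hmin.le (Ideal.mem_sup_right (Ideal.mem_span_singleton_self _))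
    exact fun i hi => haux i hi D
  have h1 := hstep e le_rfl
  have h2 := Hf_pts F (sInf (QQ Q F y e)) (fun f hf x hx => by
    obtain ⟨Q', hQ', hle⟩ := QQ_pt (Q := Q) F y (by simpa using hy) x hx (hFQ' x hx) e
    rw [Ideal.mem_sInf] at hf
    exact hle (hf hQ') x rfl) D hD
  calc D ^ e * F.card ≤ _ := Nat.mul_le_mul_left _ h2
    _ ≤ _ := h1
    _ = _ := by congr 1; ring

end DegUp

section LinEq
variable {n}

def linP (φ : (Fin n → ℂ) →ₗ[ℂ] ℂ) (p : Fin n → ℂ) : MvPolynomial (Fin n) ℂ :=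
  ∑ j, C (φ (Pi.single j 1)) * (X j - C (p j))

theorem linP_deg (φ : (Fin n → ℂ) →ₗ[ℂ] ℂ) (p : Fin n → ℂ) : (linP φ p).totalDegree ≤ 1 := by
  refine totalDegree_finsetSum_le fun j _ => ?_
  refine (totalDegree_mul _ _).trans ?_
  rw [totalDegree_C, zero_add]
  refine (totalDegree_sub _ _).trans ?_
  simp

theorem linP_eval (φ : (Fin n → ℂ) →ₗ[ℂ] ℂ) (p x : Fin n → ℂ) : eval x (linP φ p) = φ (x - p) := by
  rw [linP, map_sum]
  conv_rhs => rw [pi_eq_sum_univ' (x - p), map_sum]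
  refine Finset.sum_congr rfl fun j _ => ?_
  rw [map_smul]
  simp [mul_comm]

theorem lin_eqs (L : AffineSubspace ℂ (Fin n → ℂ)) (p : Fin n → ℂ) (hp : p ∈ L) {e : ℕ} (he : e ≤ n)
    (hL : Module.finrank ℂ L.direction = n - e) :
    ∃ y : ℕ → MvPolynomial (Fin n) ℂ, (∀ i, (y i).totalDegree ≤ 1) ∧
      (∀ i, ∀ x ∈ L, eval x (y i) = 0) ∧ ∀ x, (∀ i < e, eval x (y i) = 0) → x ∈ L := by
  have h1 := Subspace.finrank_add_finrank_dualAnnihilator_eq L.direction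
  rw [hL, Module.finrank_fin_fun] at h1
  have h2 : Module.finrank ℂ L.direction.dualAnnihilator = e := by omega
  let b := Module.finBasisOfFinrankEq ℂ _ h2
  have hmem : ∀ x, x ∈ L ↔ x - p ∈ L.direction := fun x =>
    (AffineSubspace.vsub_right_mem_direction_iff_mem hp x).symm
  refine ⟨fun i => if h : i < e then linP (b ⟨i, h⟩ : Module.Dual ℂ (Fin n → ℂ)) p else 0, ?_, ?_, ?_⟩
  · intro i
    dsimp only
    split_ifs
    · exact linP_deg _ _
    · simp
  · intro i x hx
    dsimp only
    split_ifs with h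
    · rw [linP_eval]
      exact (Submodule.mem_dualAnnihilator _).1 (b ⟨i, h⟩).2 _ ((hmem x).1 hx)
    · simp
  · intro x hx
    rw [hmem, ← Subspace.forall_mem_dualAnnihilator_apply_eq_zero_iff]
    intro φ hφ
    have : (⟨φ, hφ⟩ : L.direction.dualAnnihilator) = ∑ i, b.repr ⟨φ, hφ⟩ i • b i := (b.sum_repr _).symm
    have h3 := congrArg Subtype.val this
    rw [AddSubmonoidClass.coe_finset_sum] at h3
    change φ = _ at h3
    rw [h3, LinearMap.sum_apply]
    refine Finset.sum_eq_zero fun i _ => ?_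
    have h4 := hx i i.2
    dsimp only at h4
    rw [dif_pos i.2, linP_eval] at h4
    rw [Submodule.coe_smul, LinearMap.smul_apply]
    erw [h4]
    simp

theorem deg_le {W : Set (Fin n → ℂ)} (hW : IsIrredVariety n W) {m : ℕ} (hmn : m ≤ n) (hd : dim n W = n - m)
    (η : ℕ → ℕ) (h : ∀ i, 1 ≤ i → i ≤ m → PD (vanishingIdeal n W) i (η i))
    (L : AffineSubspace ℂ (Fin n → ℂ)) (hL : Module.finrank ℂ L.direction = n - dim n W)
    (hf : (W ∩ ↑L).Finite) : (W ∩ ↑L).ncard ≤ (n+2)^n * (n+1)^n * ∏ i ∈ Finset.Icc 1 m, η i := by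
  rcases (W ∩ ↑L).eq_empty_or_nonempty with h0 | ⟨p, hpW, hpL⟩
  · simp [h0]
  have hQ := hW.prime
  have hdim := hasDim_dim hW
  obtain ⟨y, hy1, hy2, hy3⟩ := lin_eqs L p hpL (dim_le hW) hL
  have hpos : ∀ i ∈ Finset.Icc 1 m, 0 < η i := by
    intro i hi
    rw [Finset.mem_Icc] at hi
    exact (h i hi.1 hi.2).pos hQ (by omega) (by omega)
  have hPpos : 0 < ∏ i ∈ Finset.Icc 1 m, η i := Finset.prod_pos hpos
  set F := hf.toFinset with hF
  have hNc : (W ∩ ↑L).ncard = F.card := Set.ncard_eq_toFinset_card _ hf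
  rw [hNc]
  have hFpos : 0 < F.card := Finset.card_pos.2 ⟨p, by simp [hF]; exact ⟨hpW, hpL⟩⟩
  set D := F.card * ∏ i ∈ Finset.Icc 1 m, η i with hD
  have hDpos : 0 < D := Nat.mul_pos hFpos hPpos
  have hz : zeroLocus n (vanishingIdeal n W : Set _) = W := zl_vI hW.1
  have h1 := degUp hQ hdim F y hy1 (fun i x hx => hy2 i x (by simp [hF] at hx; exact hx.2))
    (fun x hx => by rw [hz]; simp [hF] at hx; exact hx.1)
    (fun x hx hx' => by rw [hz] at hx; simp [hF]; exact ⟨hx, hy3 x hx'⟩) D (Nat.le_mul_of_pos_right _ hPpos)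
  have h2 := U hQ η ((dim n W + 1) * D) m hmn (hd ▸ hdim) h
    (fun i h1 h2 => ((Finset.dvd_prod_of_mem η (Finset.mem_Icc.2 ⟨h1, h2⟩)).trans
      (Dvd.intro_left _ rfl)).trans (Dvd.intro_left _ rfl)) (by positivity)
  have h3 := h1.trans h2
  rw [← hd, mul_pow (dim n W + 1)] at h3
  have hle : (dim n W + 1)^(dim n W) ≤ (n+1)^n :=
    (Nat.pow_le_pow_left (by have := dim_le hW; omega) _).trans (Nat.pow_le_pow_right (by omega) (dim_le hW))
  refine Nat.le_of_mul_le_mul_left (h3.trans ?_) (pow_pos hDpos (dim n W))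
  calc (n + 2) ^ n * ((dim n W + 1) ^ dim n W * D ^ dim n W) * ∏ i ∈ Finset.Icc 1 m, η i
      ≤ (n + 2) ^ n * ((n + 1) ^ n * D ^ dim n W) * ∏ i ∈ Finset.Icc 1 m, η i := by gcongr
    _ = _ := by ring

end LinEq

section Fib
open Polynomial in
theorem lie_over {S R : Type*} [CommRing S] [IsDomain S] [IsIntegrallyClosed S] [CommRing R] [IsDomain R]
    [Algebra S R] [FaithfulSMul S R] [Algebra.IsIntegral S R] (θ : R) (φ : S →+* ℂ) (t : ℂ)
    (ht : (minpoly S θ).eval₂ φ t = 0) :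
    ∃ N : Ideal R, N.IsPrime ∧ ∀ f : S[X], f.eval₂ φ t = 0 → aeval θ f ∈ N := by
  have hint : IsIntegral S θ := Algebra.IsIntegral.isIntegral θ
  let _ := (aeval θ : S[X] →ₐ[S] R).toRingHom.toAlgebra
  have hst : IsScalarTower S S[X] R := IsScalarTower.of_algebraMap_eq fun s => by
    rw [RingHom.algebraMap_toAlgebra]; simp
  have : Algebra.IsIntegral S[X] R := Algebra.IsIntegral.tower_top S
  let P : Ideal S[X] := RingHom.ker (eval₂RingHom φ t)
  have hP : P.IsPrime := RingHom.ker_isPrime _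
  have htf : Module.IsTorsionFree S R := inferInstance
  obtain ⟨N, -, hN, hNP⟩ := Ideal.exists_ideal_over_prime_of_isIntegral P (⊥ : Ideal R) (by
    intro f hf
    have hf' : aeval θ f = 0 := hf
    obtain ⟨g, rfl⟩ := minpoly.isIntegrallyClosed_dvd hint hf'
    change eval₂RingHom φ t _ = 0
    rw [map_mul]
    change eval₂ φ t (minpoly S θ) * _ = 0
    rw [ht, zero_mul])
  refine ⟨N, hN, fun f hf => ?_⟩
  have : f ∈ N.comap (algebraMap S[X] R) := by rw [hNP]; exact hf
  exact this

open Polynomial in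
theorem sep_res {S R : Type*} [CommRing S] [IsDomain S] [CharZero S] [IsIntegrallyClosed S] [CommRing R] [IsDomain R]
    [Algebra S R] [FaithfulSMul S R] [Algebra.IsIntegral S R] (θ : R) :
    ∃ (s : S) (a b : S[X]), s ≠ 0 ∧ minpoly S θ * a + derivative (minpoly S θ) * b = Polynomial.C s := by
  have hint : IsIntegral S θ := Algebra.IsIntegral.isIntegral θ
  let F := FractionRing S
  have hmon := minpoly.monic hint
  have hirr : Irreducible ((minpoly S θ).map (algebraMap S F)) :=
    (hmon.irreducible_iff_irreducible_map_fraction_map).1 (minpoly.irreducible hint)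
  have : CharZero F := charZero_of_injective_algebraMap (IsFractionRing.injective S F)
  have hsep := hirr.separable
  obtain ⟨p, q, _, _, h⟩ := exists_mul_add_mul_eq_C_resultant (minpoly S θ) (derivative (minpoly S θ)) le_rfl le_rfl
    (Or.inl (minpoly.natDegree_pos hint).ne')
  refine ⟨_, p, q, ?_, h⟩
  intro h0
  refine resultant_ne_zero _ _ hsep ?_
  have h1 := resultant_map_map (f := minpoly S θ) (g := derivative (minpoly S θ))
    (m := (minpoly S θ).natDegree) (n := (derivative (minpoly S θ)).natDegree) (algebraMap S F)
  rw [h0, map_zero] at h1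
  rw [derivative_map, natDegree_map_eq_of_injective (IsFractionRing.injective S F),
    natDegree_map_eq_of_injective (IsFractionRing.injective S F)]
  exact h1

open Polynomial in
theorem prim_el {S R : Type*} [CommRing S] [IsDomain S] [CharZero S] [IsIntegrallyClosed S] [CommRing R] [IsDomain R]
    [Algebra S R] [FaithfulSMul S R] [Module.Finite S R] :
    ∃ θ : R, ∀ x : R, ∃ u : S, u ≠ 0 ∧ ∃ f : S[X], f.natDegree < (minpoly S θ).natDegree ∧
      u • x = aeval θ f := by
  let F := FractionRing S
  let K := FractionRing R
  let _ : Algebra F K := FractionRing.liftAlgebra S K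
  have hst : IsScalarTower S F K := inferInstance
  have hst2 : IsScalarTower S R K := inferInstance
  have : CharZero F := charZero_of_injective_algebraMap (IsFractionRing.injective S F)
  have hloc : IsLocalization (Algebra.algebraMapSubmonoid R (nonZeroDivisors S)) K := inferInstance
  have : FiniteDimensional F K := Module.Finite.of_isLocalization S R (nonZeroDivisors S)
  obtain ⟨α, hα⟩ := Field.exists_primitive_element F K
  obtain ⟨⟨θ, ⟨_, ⟨s, hs, rfl⟩⟩⟩, hθ⟩ := IsLocalization.surj (Algebra.algebraMapSubmonoid R (nonZeroDivisors S)) α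
  dsimp only at hθ
  have hint : IsIntegral S θ := Algebra.IsIntegral.isIntegral θ
  have hs0 : algebraMap S F s ≠ 0 := by
    intro h
    rw [map_eq_zero_iff _ (IsFractionRing.injective S F)] at h
    exact nonZeroDivisors.ne_zero hs h
  have hαθ : α = (algebraMap S F s)⁻¹ • algebraMap R K θ := by
    rw [← hθ, eq_inv_smul_iff₀ hs0, Algebra.smul_def, ← IsScalarTower.algebraMap_apply S F K,
      ← IsScalarTower.algebraMap_apply S R K, mul_comm]
  have htop : IntermediateField.adjoin F {algebraMap R K θ} = ⊤ := by
    rw [eq_top_iff, ← hα, IntermediateField.adjoin_le_iff]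
    rintro _ rfl
    rw [SetLike.mem_coe, hαθ]
    exact IntermediateField.smul_mem _ (IntermediateField.mem_adjoin_simple_self F _)
  refine ⟨θ, fun x => ?_⟩
  have hx : algebraMap R K x ∈ Algebra.adjoin F {algebraMap R K θ} := by
    rw [← IntermediateField.adjoin_simple_toSubalgebra_of_isAlgebraic (Algebra.IsAlgebraic.isAlgebraic _), htop]
    exact Algebra.mem_top
  rw [Algebra.adjoin_singleton_eq_range_aeval] at hx
  obtain ⟨g, hg⟩ := hx
  obtain ⟨u, hu, hug⟩ := IsLocalization.integerNormalization_spec (nonZeroDivisors S) g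
  set f := IsLocalization.integerNormalization (nonZeroDivisors S) g with hf
  refine ⟨u, nonZeroDivisors.ne_zero hu, f %ₘ minpoly S θ, ?_, ?_⟩
  · exact natDegree_modByMonic_lt _ (minpoly.monic hint) (fun h => by
      have := minpoly.natDegree_pos hint
      rw [h] at this; simp at this)
  · apply IsFractionRing.injective R K
    have h1 : aeval θ (f %ₘ minpoly S θ) = aeval θ f := aeval_modByMonic_eq_self_of_root (minpoly.aeval _ _)
    rw [h1, ← Polynomial.aeval_algebraMap_apply, ← Polynomial.aeval_map_algebraMap F, hug]
    rw [Algebra.smul_def, map_mul, ← hg, ← IsScalarTower.algebraMap_apply S R K]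
    simp [Algebra.smul_def, IsScalarTower.algebraMap_apply S F K]

end Fib

section Fib2

theorem Lam_le_pow {R : Type*} [CommRing R] [Algebra ℂ R] {e : ℕ} (y : Fin e → R) {a b : ℕ} (h : a ≤ b) :
    Lam y ^ a ≤ Lam y ^ b := by
  refine pow_le_pow_right' ?_ h
  rw [Submodule.one_le]
  exact one_mem_Lam y

theorem aeval_mem_Lam {R : Type*} [CommRing R] [Algebra ℂ R] {e : ℕ} (y : Fin e → R) (f : MvPolynomial (Fin e) ℂ) :
    aeval y f ∈ Lam y ^ f.totalDegree := by
  rw [Lam_pow_eq]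
  exact ⟨f, (mem_restrictTotalDegree _ _ _).2 le_rfl, rfl⟩

theorem deg_low_abs {R : Type*} [CommRing R] [IsDomain R] [Algebra ℂ R] {e : ℕ} (y : Fin e → R)
    (hy : AlgebraicIndependent ℂ y) (hfin : (aeval y : MvPolynomial (Fin e) ℂ →ₐ[ℂ] R).toRingHom.Finite)
    (B : Submodule ℂ R) (hB : FiniteDimensional ℂ B) :
    ∃ (θ : R) (c : ℕ) (p : Fin e → ℂ) (T : Finset ℂ), 
      (∀ D, Module.finrank ℂ ↥(Lam y ^ D * B) ≤ (D + c + 1) ^ e * T.card) ∧ T.Nonempty ∧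
      ∀ t ∈ T, ∃ N : Ideal R, N.IsPrime ∧ (∀ i, y i - algebraMap ℂ R (p i) ∈ N) ∧ θ - algebraMap ℂ R t ∈ N := by
  classical
  let _ := (aeval y : MvPolynomial (Fin e) ℂ →ₐ[ℂ] R).toRingHom.toAlgebra
  have hst : IsScalarTower ℂ (MvPolynomial (Fin e) ℂ) R := IsScalarTower.of_algebraMap_eq fun s => by
    rw [RingHom.algebraMap_toAlgebra]; simp
  have hal : ∀ f : MvPolynomial (Fin e) ℂ, algebraMap (MvPolynomial (Fin e) ℂ) R f = aeval y f := fun f => rfl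
  have hfin' : Module.Finite (MvPolynomial (Fin e) ℂ) R := hfin
  have hfs : FaithfulSMul (MvPolynomial (Fin e) ℂ) R := (faithfulSMul_iff_algebraMap_injective _ _).2 hy
  obtain ⟨θ, hθ⟩ := prim_el (S := MvPolynomial (Fin e) ℂ) (R := R)
  set q := minpoly (MvPolynomial (Fin e) ℂ) θ with hq
  have hint : IsIntegral (MvPolynomial (Fin e) ℂ) θ := Algebra.IsIntegral.isIntegral θ
  set Δ := q.natDegree with hΔ
  let Θ : Submodule ℂ R := Submodule.span ℂ (Set.range fun i : Fin Δ => θ ^ (i : ℕ))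
  have hΘ : Module.finrank ℂ Θ ≤ Δ := by
    have := finrank_range_le_card (R := ℂ) (fun i : Fin Δ => θ ^ (i : ℕ))
    rwa [Fintype.card_fin] at this
  have hΘf : FiniteDimensional ℂ Θ := FiniteDimensional.span_of_finite ℂ (Set.finite_range _)
  have key : ∃ u : MvPolynomial (Fin e) ℂ, u ≠ 0 ∧ ∃ c, ∀ x ∈ B, aeval y u * x ∈ Lam y ^ c * Θ := by
    refine Submodule.fg_induction (R := ℂ) (M := R) (motive := fun B _ => ∃ u : MvPolynomial (Fin e) ℂ, u ≠ 0 ∧ ∃ c, ∀ x ∈ B,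
      aeval y u * x ∈ Lam y ^ c * Θ) ?_ ?_ B (Module.Finite.iff_fg.1 hB)
    · intro x
      obtain ⟨u, hu, f, hf, hux⟩ := hθ x
      refine ⟨u, hu, (Finset.range Δ).sup fun i => (f.coeff i).totalDegree, ?_⟩
      intro z hz
      obtain ⟨a, rfl⟩ := Submodule.mem_span_singleton.1 hz
      rw [mul_smul_comm]
      refine Submodule.smul_mem _ _ ?_
      have : aeval y u * x = u • x := by rw [Algebra.smul_def, hal]
      rw [this, hux, Polynomial.aeval_eq_sum_range' hf]
      refine Submodule.sum_mem _ fun i hi => ?_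
      rw [Algebra.smul_def, hal]
      refine Submodule.mul_mem_mul (Lam_le_pow y (Finset.le_sup (f := fun i => (f.coeff i).totalDegree) hi)
        (aeval_mem_Lam y _)) (Submodule.subset_span ⟨⟨i, Finset.mem_range.1 hi⟩, rfl⟩)
    · rintro M1 M2 - - ⟨u1, h1, c1, H1⟩ ⟨u2, h2, c2, H2⟩
      refine ⟨u1 * u2, mul_ne_zero h1 h2, u2.totalDegree + c1 + (u1.totalDegree + c2), ?_⟩
      intro x hx
      obtain ⟨x1, hx1, x2, hx2, rfl⟩ := Submodule.mem_sup.1 hx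
      have e1 : aeval y (u1 * u2) * (x1 + x2) = aeval y u2 * (aeval y u1 * x1) + aeval y u1 * (aeval y u2 * x2) := by
        rw [map_mul]; ring
      have aux : ∀ (u : MvPolynomial (Fin e) ℂ) (c c' : ℕ) (z : R), u.totalDegree + c ≤ c' → z ∈ Lam y ^ c * Θ →
          aeval y u * z ∈ Lam y ^ c' * Θ := by
        intro u c c' z hc hz
        refine (mul_le_mul' (Lam_le_pow y hc) le_rfl : _ ≤ Lam y ^ c' * Θ) ?_
        rw [pow_add, mul_assoc]
        exact Submodule.mul_mem_mul (aeval_mem_Lam y u) hz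
      rw [e1]
      exact Submodule.add_mem _ (aux _ _ _ _ (by omega) (H1 x1 hx1)) (aux _ _ _ _ (by omega) (H2 x2 hx2))
  obtain ⟨u, hu, c, hc⟩ := key
  obtain ⟨s, a, b, hs, hab⟩ := sep_res (S := MvPolynomial (Fin e) ℂ) θ
  rw [← hq] at hab
  obtain ⟨p, hp⟩ : ∃ p, eval p s ≠ 0 := by
    by_contra! h
    exact hs (MvPolynomial.funext fun p => by rw [h p, map_zero])
  have hmon : q.Monic := minpoly.monic hint
  have hsep : (q.map (eval p)).Separable := by
    have h1 := congrArg (Polynomial.map (eval p)) hab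
    simp only [Polynomial.map_add, Polynomial.map_mul, Polynomial.map_C] at h1
    refine ⟨Polynomial.C (eval p s)⁻¹ * a.map (eval p), Polynomial.C (eval p s)⁻¹ * b.map (eval p), ?_⟩
    rw [Polynomial.derivative_map]
    calc _ = Polynomial.C (eval p s)⁻¹ * (Polynomial.map (eval p) q * Polynomial.map (eval p) a +
          Polynomial.map (eval p) (Polynomial.derivative q) * Polynomial.map (eval p) b) := by ring
      _ = 1 := by rw [h1, ← Polynomial.C_mul, inv_mul_cancel₀ hp, Polynomial.C_1]
  have hcard : (q.map (eval p)).roots.toFinset.card = Δ := by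
    rw [Multiset.toFinset_card_of_nodup (Polynomial.nodup_roots hsep),
      ← (IsAlgClosed.splits (q.map (eval p))).natDegree_eq_card_roots, hmon.natDegree_map]
  refine ⟨θ, c, p, (q.map (eval p)).roots.toFinset, ?_, ?_, ?_⟩
  · intro D
    rw [hcard]
    have hu' : aeval y u ≠ 0 := by
      intro h; exact hu (hy (by rw [h, map_zero]))
    have hinj : Function.Injective (LinearMap.mulLeft ℂ (aeval y u)) := fun x z h => mul_left_cancel₀ hu' h
    have i1 := pow_fd _ (Lam_fd y) (D + c)
    have hle : (Lam y ^ D * B).map (LinearMap.mulLeft ℂ (aeval y u)) ≤ Lam y ^ (D + c) * Θ := by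
      rw [Submodule.map_le_iff_le_comap, Submodule.mul_le]
      intro l hl b hb
      rw [Submodule.mem_comap, LinearMap.mulLeft_apply, mul_left_comm, pow_add, mul_assoc]
      exact Submodule.mul_mem_mul hl (hc b hb)
    have i2 : FiniteDimensional ℂ ↥(Lam y ^ (D + c) * Θ) :=
      Module.Finite.iff_fg.2 (Submodule.FG.mul (Module.Finite.iff_fg.1 i1) (Module.Finite.iff_fg.1 hΘf))
    calc _ = Module.finrank ℂ ↥((Lam y ^ D * B).map (LinearMap.mulLeft ℂ (aeval y u))) :=
          (Submodule.equivMapOfInjective _ hinj _).finrank_eq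
      _ ≤ _ := Submodule.finrank_mono hle
      _ ≤ _ := finrank_mul_le _ _ i1 hΘf
      _ ≤ _ := Nat.mul_le_mul (Lam_finrank_le y _) hΘ
  · rw [← Finset.card_pos, hcard]
    exact minpoly.natDegree_pos hint
  · intro t ht
    rw [Multiset.mem_toFinset, Polynomial.mem_roots (hmon.map _).ne_zero, Polynomial.IsRoot.def,
      Polynomial.eval_map] at ht
    obtain ⟨N, hN, hN'⟩ := lie_over θ (eval p) t ht
    refine ⟨N, hN, fun i => ?_, ?_⟩
    · have := hN' (Polynomial.C (X i - C (p i))) (by simp)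
      rw [Polynomial.aeval_C, hal] at this
      simpa using this
    · have := hN' (Polynomial.X - Polynomial.C (C t)) (by simp)
      rw [map_sub, Polynomial.aeval_C, Polynomial.aeval_X, hal] at this
      simpa using this

end Fib2

section Fib3
variable {n}

theorem deg_low {W : Set (Fin n → ℂ)} (hW : IsIrredVariety n W) :
    ∃ c Δ : ℕ, (∀ D, Hf n (vanishingIdeal n W) D ≤ (D + c + 1) ^ (dim n W) * Δ) ∧
      ∃ L : AffineSubspace ℂ (Fin n → ℂ), Module.finrank ℂ L.direction = n - dim n W ∧ (W ∩ ↑L).Finite ∧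
        Δ ≤ (W ∩ ↑L).ncard := by
  classical
  set Q := vanishingIdeal n W with hQdef
  have hQ : Q.IsPrime := hW.prime
  obtain ⟨y, hy⟩ := hasDim_dim hW
  have hyfin := hy.finite
  obtain ⟨hy1, hy2, B, hB, hB1, hB2⟩ := hy
  generalize he : dim n W = e at *
  have hen : e ≤ n := he ▸ dim_le hW
  have hz : zeroLocus n (Q : Set _) = W := zl_vI hW.1
  obtain ⟨θ, c, p, T, hT1, ⟨t0, ht0⟩, hT3⟩ := deg_low_abs y hy2 hyfin B hB
  -- linear forms
  have hlin : ∀ i, ∃ (a : ℂ) (b : Fin n → ℂ), y i = Ideal.Quotient.mk Q (C a + ∑ j, C (b j) * X j) := by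
    intro i
    have h1 := hy1 i
    rw [Rd_eq, pow_one, Lam, Submodule.mem_span_insert] at h1
    obtain ⟨a, z, hz, h2⟩ := h1
    rw [Submodule.mem_span_range_iff_exists_fun] at hz
    obtain ⟨b, rfl⟩ := hz
    refine ⟨a, b, ?_⟩
    rw [h2, map_add, map_sum, Algebra.smul_def, mul_one]
    congr 1
    refine Finset.sum_congr rfl fun j _ => ?_
    rw [C_mul']
    rfl
  choose a b hab using hlin
  let φ : Fin e → Module.Dual ℂ (Fin n → ℂ) := fun i => ∑ j, b i j • LinearMap.proj j
  have hφ : ∀ i x, φ i x = ∑ j, b i j * x j := by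
    intro i x; simp [φ]
  have hev : ∀ i x, eval x (C (a i) + ∑ j, C (b i j) * X j) = a i + φ i x := by
    intro i x; rw [hφ]; simp
  have hli : LinearIndependent ℂ φ := by
    rw [Fintype.linearIndependent_iff]
    intro d hd i
    have h0 : ∀ j, ∑ i, d i * b i j = 0 := by
      intro j
      have := congrArg (fun ψ : Module.Dual ℂ (Fin n → ℂ) => ψ (Pi.single j 1)) hd
      simpa [hφ, Pi.single_apply] using this
    have h1 : aeval y (∑ i, C (d i) * X i - C (∑ i, d i * a i)) = 0 := by
      have e1 : (∑ i, C (d i) * (C (a i) + ∑ j, C (b i j) * X j) - C (∑ i, d i * a i) : MvPolynomial (Fin n) ℂ) = 0 := by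
        have : (∑ i, C (d i) * ∑ j, C (b i j) * X j : MvPolynomial (Fin n) ℂ) = 0 := by
          simp_rw [Finset.mul_sum]
          rw [Finset.sum_comm]
          refine Finset.sum_eq_zero fun j _ => ?_
          simp_rw [← mul_assoc, ← C_mul]
          rw [← Finset.sum_mul, ← map_sum, h0 j, map_zero, zero_mul]
        simp_rw [mul_add]
        rw [Finset.sum_add_distrib, this, add_zero, map_sum]
        simp
      have e2 := congrArg (Ideal.Quotient.mk Q) e1
      rw [map_zero, map_sub, map_sum] at e2
      rw [← e2, map_sub, map_sum, aeval_C]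
      congr 1
      refine Finset.sum_congr rfl fun i _ => ?_
      rw [map_mul, map_mul, aeval_C, aeval_X, hab i]
      rfl
    have h2 : (∑ i, C (d i) * X i - C (∑ i, d i * a i) : MvPolynomial (Fin e) ℂ) = 0 := hy2 (by rw [h1, map_zero])
    have h3 := congrArg (eval (Pi.single i (1:ℂ))) h2
    have h4 := congrArg (eval (0 : Fin e → ℂ)) h2
    simp [Pi.single_apply] at h3 h4
    rwa [h4, sub_zero] at h3
  -- points
  obtain ⟨θ', rfl⟩ := Ideal.Quotient.mk_surjective θ
  have hpt : ∀ t ∈ T, ∃ x ∈ W, (∀ i, a i + φ i x = p i) ∧ eval x θ' = t := by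
    intro t ht
    obtain ⟨N, hN, hN1, hN2⟩ := hT3 t ht
    obtain ⟨M, hM, hNM⟩ := N.exists_le_maximal hN.ne_top
    have hMc : (M.comap (Ideal.Quotient.mk Q)).IsMaximal :=
      Ideal.comap_isMaximal_of_surjective _ Ideal.Quotient.mk_surjective
    obtain ⟨x, hx⟩ := MvPolynomial.eq_vanishingIdeal_singleton_of_isMaximal ℂ hMc
    have hx' : ∀ f, Ideal.Quotient.mk Q f ∈ M → eval x f = 0 := by
      intro f hf
      have : f ∈ MvPolynomial.vanishingIdeal ℂ {x} := hx ▸ hf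
      rw [MvPolynomial.mem_vanishingIdeal_iff] at this
      exact this x rfl
    refine ⟨x, ?_, ?_, ?_⟩
    · rw [← hz]
      intro f hf
      exact hx' f (by rw [Ideal.Quotient.eq_zero_iff_mem.2 hf]; exact M.zero_mem)
    · intro i
      have h1 := hx' (C (a i) + ∑ j, C (b i j) * X j - C (p i)) (by
        rw [map_sub, ← hab i]; exact hNM (hN1 i))
      rw [map_sub, hev, eval_C] at h1
      exact sub_eq_zero.1 h1
    · have h1 := hx' (θ' - C t) (by rw [map_sub]; exact hNM hN2)
      rw [map_sub, eval_C] at h1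
      exact sub_eq_zero.1 h1
  choose! x hx1 hx2 hx3 using hpt
  let E : Submodule ℂ (Fin n → ℂ) := (Submodule.span ℂ (Set.range φ)).dualCoannihilator
  have hE : ∀ v, v ∈ E ↔ ∀ i, φ i v = 0 := by
    intro v
    rw [Submodule.mem_dualCoannihilator]
    constructor
    · intro h i; exact h _ (Submodule.subset_span ⟨i, rfl⟩)
    · intro h ψ hψ
      induction hψ using Submodule.span_induction with
      | mem z hz => obtain ⟨i, rfl⟩ := hz; exact h i
      | zero => simp
      | add z w _ _ h1 h2 => rw [LinearMap.add_apply, h1, h2, add_zero]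
      | smul k z _ h1 => rw [LinearMap.smul_apply, h1, smul_zero]
  have hErank : Module.finrank ℂ E = n - e := by
    have h1 := Subspace.finrank_add_finrank_dualCoannihilator_eq (Submodule.span ℂ (Set.range φ))
    rw [finrank_span_eq_card hli, Fintype.card_fin, Module.finrank_fin_fun] at h1
    change e + Module.finrank ℂ E = n at h1
    omega
  let L : AffineSubspace ℂ (Fin n → ℂ) := AffineSubspace.mk' (x t0) E
  have hL : ∀ z, z ∈ L ↔ ∀ i, a i + φ i z = p i := by
    intro z
    rw [AffineSubspace.mem_mk', vsub_eq_sub, hE]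
    refine forall_congr' fun i => ?_
    rw [← hx2 t0 ht0 i, map_sub, sub_eq_zero]
    exact ⟨fun h => by rw [h], fun h => add_left_cancel h⟩
  have hfinite : (W ∩ ↑L).Finite := by
    have hgen : ∀ j, ∃ g : Polynomial (MvPolynomial (Fin e) ℂ), g.Monic ∧
        g.eval₂ (aeval y : MvPolynomial (Fin e) ℂ →ₐ[ℂ] _).toRingHom (gens n Q j) = 0 := fun j =>
      hyfin.to_isIntegral (gens n Q j)
    choose g hg1 hg2 using hgen
    refine (Set.Finite.pi' (t := fun j => {z | z ∈ ((g j).map (eval p)).roots.toFinset}) fun j => 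
      Finset.finite_toSet _).subset ?_
    rintro z ⟨hzW, hzL⟩ j
    have hzL' := (hL z).1 hzL
    let ev : MvPolynomial (Fin n) ℂ ⧸ Q →+* ℂ := Ideal.Quotient.lift Q (eval z) (fun f hf => hf z hzW)
    have hev2 : ev.comp (aeval y : MvPolynomial (Fin e) ℂ →ₐ[ℂ] _).toRingHom = eval p := by
      apply MvPolynomial.ringHom_ext
      · intro r
        simp only [AlgHom.toRingHom_eq_coe, RingHom.comp_apply, RingHom.coe_coe, eval_C, aeval_C]
        change ev (Ideal.Quotient.mk Q (C r)) = r
        simp [ev]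
      · intro i
        simp only [AlgHom.toRingHom_eq_coe, RingHom.comp_apply, RingHom.coe_coe, eval_X, aeval_X]
        rw [hab i, ← hzL' i, ← hev]
        rfl
    have h1 := congrArg ev (hg2 j)
    rw [map_zero, Polynomial.hom_eval₂, hev2] at h1
    have h2 : ev (gens n Q j) = z j := by
      change eval z (X j) = z j
      simp
    rw [h2] at h1
    change z j ∈ ((g j).map (eval p)).roots.toFinset
    rw [Multiset.mem_toFinset, Polynomial.mem_roots ((hg1 j).map _).ne_zero, Polynomial.IsRoot.def,
      Polynomial.eval_map]
    exact h1
  refine ⟨c, T.card, ?_, L, ?_, hfinite, ?_⟩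
  · intro D
    have i1 : FiniteDimensional ℂ ↥(Lam y ^ D * B) :=
      Module.Finite.iff_fg.2 (Submodule.FG.mul (Module.Finite.iff_fg.1 (pow_fd _ (Lam_fd y) D)) (Module.Finite.iff_fg.1 hB))
    exact (Submodule.finrank_mono (hB2 D)).trans (hT1 D)
  · rw [AffineSubspace.direction_mk', hErank]
  · rw [← Set.ncard_coe_finset]
    refine Set.ncard_le_ncard_of_injOn x (fun t ht => ⟨hx1 t ht, (hL _).2 (hx2 t ht)⟩) ?_ hfinite
    intro t ht t' ht' h
    rw [← hx3 t ht, ← hx3 t' ht', h]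

end Fib3

section Fin1
variable {n}

theorem pd_le {V : Set (Fin n → ℂ)} {i δ : ℕ} (hi : 1 ≤ i) (h : PD (vanishingIdeal n V) i δ) :
    partialDeg n V i ≤ δ := by
  rw [pd_set i (by omega)]; exact Nat.sInf_le h

theorem pd_mem {V : Set (Fin n → ℂ)} {i δ : ℕ} (hi : 1 ≤ i) (h : PD (vanishingIdeal n V) i δ) :
    PD (vanishingIdeal n V) i (partialDeg n V i) := by
  rw [pd_set i (by omega)]
  exact Nat.sInf_mem (s := {δ | PD (vanishingIdeal n V) i δ}) ⟨δ, h⟩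

theorem first_le {Q : Ideal (MvPolynomial (Fin n) ℂ)} (hQ : Q.IsPrime) (hn : 1 ≤ n)
    {f : MvPolynomial (Fin n) ℂ} (hf : f ∈ Q) (h0 : f ≠ 0) : PD Q 1 f.totalDegree := by
  refine ⟨{f}, by simp, by simpa using hf, ?_⟩
  have hle : Ideal.span (↑({f} : Finset (MvPolynomial (Fin n) ℂ)) : Set (MvPolynomial (Fin n) ℂ)) ≤ Q := by
    rw [Ideal.span_le]; intro g hg
    have : g = f := by simpa using hg
    rw [this]; exact hf
  obtain ⟨k, hk⟩ := mx_ex hQ hle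
  have h1 := Mx.card hQ {f} (by simpa using hf) k hk
  rw [Finset.card_singleton] at h1
  obtain ⟨Q1, p1, a1, b1, c1⟩ := hk.1
  have h2 : k < n := by
    refine HasDim.lt Ideal.isPrime_bot hasDim_bot c1 (bot_lt_iff_ne_bot.2 ?_)
    intro hb
    apply h0
    have : f ∈ Q1 := a1 (Ideal.subset_span (by simp))
    rw [hb] at this
    simpa using this
  have : k = n - 1 := by omega
  rwa [← this]

theorem upTo_eq (P : ℕ → MvPolynomial (Fin n) ℂ) (i : ℕ) :
    {f | ∃ j : ℕ, 1 ≤ j ∧ j ≤ i ∧ f = P j} =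
      (↑((Finset.Icc 1 i).image P) : Set (MvPolynomial (Fin n) ℂ)) := by
  ext f
  simp only [Set.mem_setOf_eq, Finset.coe_image, Set.mem_image, Finset.coe_Icc, Set.mem_Icc]
  constructor
  · rintro ⟨j, a, b, c⟩; exact ⟨j, ⟨a, b⟩, c.symm⟩
  · rintro ⟨j, ⟨a, b⟩, c⟩; exact ⟨j, a, b, c.symm⟩

theorem cancel_prod {s : Finset ℕ} {δ η : ℕ → ℕ} {K : ℕ} (hp : ∀ i ∈ s, 0 < η i)
    (hle : ∀ i ∈ s, η i ≤ δ i) (h : ∏ i ∈ s, δ i ≤ K * ∏ i ∈ s, η i) :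
    ∀ i ∈ s, δ i ≤ K * η i := by
  intro i hi
  rw [← Finset.mul_prod_erase s δ hi, ← Finset.mul_prod_erase s η hi] at h
  have h1 : ∏ j ∈ s.erase i, η j ≤ ∏ j ∈ s.erase i, δ j :=
    Finset.prod_le_prod' fun j hj => hle j (Finset.mem_of_mem_erase hj)
  have h2 : 0 < ∏ j ∈ s.erase i, η j :=
    Finset.prod_pos fun j hj => hp j (Finset.mem_of_mem_erase hj)
  refine le_of_mul_le_mul_right (a := ∏ j ∈ s.erase i, η j) ?_ h2
  calc _ ≤ δ i * ∏ j ∈ s.erase i, δ j := Nat.mul_le_mul_left _ h1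
    _ ≤ _ := h
    _ = _ := by ring

theorem core (V : Set (Fin n → ℂ)) (hV : IsIrredVariety n V) (P : ℕ → MvPolynomial (Fin n) ℂ)
    (hP : ∀ i ∈ Finset.Icc 1 (n - dim n V),
            (P i).totalDegree = partialDeg n V i ∧
            MaxCompDimEq n (zeroLocusUpTo n P i) V (n - i) ∧
            (∃ V', IsMinimalVariety n V V' i ∧ V' ⊆ zeroLocusUpTo n P i))
    (m : ℕ) (hm1 : 1 ≤ m) (hm : m ≤ n - dim n V) (W : Set (Fin n → ℂ)) (hW : IsIrredVariety n W)
    (hWs : W ⊆ zeroLocusUpTo n P m) (hWd : dim n W = n - m) (hVW : V ⊆ W) :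
    ∃ K : ℕ, K = (2 * (n + 1)) ^ (n * n) * (n + 2) ^ n * (n + 1) ^ n ∧
      ∏ i ∈ Finset.Icc 1 m, partialDeg n V i ≤ K * degree n W ∧
      degree n W ≤ K * ∏ i ∈ Finset.Icc 1 m, partialDeg n V i ∧
      ∀ i ∈ Finset.Icc 1 m, partialDeg n W i ≤ partialDeg n V i ∧
        partialDeg n V i ≤ K * partialDeg n W i := by
  have hQV := hV.prime
  have hQW := hW.prime
  have hle := vI_anti hVW
  set r := n - dim n V with hr
  have hrn : r ≤ n := by omega
  have hmn : m ≤ n := by omega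
  have hWin : ∀ j, 1 ≤ j → j ≤ m → P j ∈ vanishingIdeal n W := by
    intro j h1 h2
    exact sub_zl_iff.1 hWs ⟨j, h1, h2, rfl⟩
  have hVin : ∀ j, 1 ≤ j → j ≤ r → P j ∈ vanishingIdeal n V := by
    intro j h1 h2
    obtain ⟨_, ⟨⟨X, hX, hVX, _⟩, _⟩, _⟩ := hP j (Finset.mem_Icc.2 ⟨h1, h2⟩)
    exact sub_zl_iff.1 (hVX.trans hX.2.1) ⟨j, h1, le_rfl, rfl⟩
  have hMx : ∀ i, 1 ≤ i → i ≤ r →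
      Mx (Ideal.span (↑((Finset.Icc 1 i).image P) : Set (MvPolynomial (Fin n) ℂ)))
        (vanishingIdeal n V) (n - i) := by
    intro i h1 h2
    have := (hP i (Finset.mem_Icc.2 ⟨h1, h2⟩)).2.1
    unfold zeroLocusUpTo at this
    rw [upTo_eq] at this
    exact mx_of this
  have hPDV : ∀ i, 1 ≤ i → i ≤ r → PD (vanishingIdeal n V) i (partialDeg n V i) := by
    intro i h1 h2
    apply pd_mem h1 (δ := ((Finset.Icc 1 i).image P).sup MvPolynomial.totalDegree)
    refine ⟨(Finset.Icc 1 i).image P, fun f hf => Finset.le_sup (f := MvPolynomial.totalDegree) hf, ?_, hMx i h1 h2⟩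
    intro f hf
    obtain ⟨j, hj, rfl⟩ := Finset.mem_image.1 hf
    rw [Finset.mem_Icc] at hj
    exact hVin j hj.1 (by omega)
  have hmono : ∀ i j, 1 ≤ i → i ≤ j → j ≤ r → partialDeg n V i ≤ partialDeg n V j := by
    intro i j h1 h2 h3
    exact pd_le h1 (PD.mono hQV (hPDV j (by omega) h3) h2)
  have hpos : ∀ i, 1 ≤ i → i ≤ r → 0 < partialDeg n V i := by
    intro i h1 h2
    exact PD.pos hQV (hPDV i h1 h2) (by omega) (by omega)
  have hPDW0 : ∀ i, 1 ≤ i → i ≤ m → PD (vanishingIdeal n W) i (partialDeg n V i) := by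
    intro i h1 h2
    have hin : ∀ f ∈ (Finset.Icc 1 i).image P, f ∈ vanishingIdeal n W := by
      intro f hf
      obtain ⟨j, hj, rfl⟩ := Finset.mem_image.1 hf
      rw [Finset.mem_Icc] at hj
      exact hWin j hj.1 (by omega)
    refine ⟨(Finset.Icc 1 i).image P, ?_, hin, ?_⟩
    · intro f hf
      obtain ⟨j, hj, rfl⟩ := Finset.mem_image.1 hf
      rw [Finset.mem_Icc] at hj
      rw [(hP j (Finset.mem_Icc.2 ⟨hj.1, by omega⟩)).1]
      exact hmono j i hj.1 hj.2 (by omega)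
    · obtain ⟨k, hk⟩ := mx_ex hQW (J := Ideal.span (↑((Finset.Icc 1 i).image P) : Set (MvPolynomial (Fin n) ℂ)))
        (by rw [Ideal.span_le]; exact fun f hf => hin f hf)
      have a := Mx.card hQW _ hin k hk
      have b : ((Finset.Icc 1 i).image P).card ≤ i := by
        refine Finset.card_image_le.trans ?_
        simp
      obtain ⟨Q1, p1, a1, b1, c1⟩ := hk.1
      have c := (hMx i h1 (by omega)).2 Q1 k p1 a1 (b1.trans hle) c1
      have : k = n - i := by omega
      rwa [← this]
  have hηle : ∀ i ∈ Finset.Icc 1 m, partialDeg n W i ≤ partialDeg n V i := by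
    intro i hi
    rw [Finset.mem_Icc] at hi
    exact pd_le hi.1 (hPDW0 i hi.1 hi.2)
  have hPDW : ∀ i, 1 ≤ i → i ≤ m → PD (vanishingIdeal n W) i (partialDeg n W i) := by
    intro i h1 h2
    exact pd_mem h1 (hPDW0 i h1 h2)
  have hηpos : ∀ i ∈ Finset.Icc 1 m, 0 < partialDeg n W i := by
    intro i hi
    rw [Finset.mem_Icc] at hi
    exact PD.pos hQW (hPDW i hi.1 hi.2) (by omega) (by omega)
  have hL := L (Q := vanishingIdeal n V) (partialDeg n V) r hrn hpos
    (fun i h1 h2 => hmono i (i+1) h1 (by omega) h2)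
    (fun f hf h0 => pd_le le_rfl (first_le hQV (by omega) hf h0))
    (by
      intro i h1 h2
      obtain ⟨_, _, V', ⟨i1, i2, i3, i4⟩, _⟩ := hP i (Finset.mem_Icc.2 ⟨h1, by omega⟩)
      refine ⟨vanishingIdeal n V', i1.prime, vI_anti i2, i3 ▸ hasDim_dim i1, ?_⟩
      intro f hf hf'
      have := i4 f hf hf'
      unfold partialDegE at this
      rw [if_pos (by omega)] at this
      exact_mod_cast this) m hm1 hm
  have hdW : HasDim n (vanishingIdeal n W) (n - m) := hWd ▸ hasDim_dim hW
  set pδ := ∏ i ∈ Finset.Icc 1 m, partialDeg n V i with hpδ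
  set pη := ∏ i ∈ Finset.Icc 1 m, partialDeg n W i with hpη
  have hpη0 : 0 < pη := Finset.prod_pos hηpos
  have hple : pη ≤ pδ := Finset.prod_le_prod' hηle
  set x := partialDeg n V m with hx
  have hx0 : 0 < x := hpos m hm1 hm
  set e := n - m with he
  have hen : e ≤ n := by omega
  set A := (2 * (n + 1)) ^ (n * n) with hA
  have hA' : (2 * (n + 1)) ^ (n * m) ≤ A :=
    Nat.pow_le_pow_right (by omega) (Nat.mul_le_mul_left _ hmn)
  have hAp : 0 < A := by positivity
  -- main growth inequality
  have key : ∀ k, 0 < k → (k * x) ^ e * pδ ≤ A * Hf n (vanishingIdeal n W) (k * (x + e)) := by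
    intro k hk
    calc (k * x) ^ e * pδ = k ^ e * (x ^ e * pδ) := by rw [mul_pow]; ring
      _ ≤ k ^ e * (A * Hf n (vanishingIdeal n W) x) :=
        Nat.mul_le_mul_left _ (hL.trans (Nat.mul_le_mul hA' (Hf_anti n hle _)))
      _ = A * (k ^ e * Hf n (vanishingIdeal n W) x) := by ring
      _ ≤ _ := Nat.mul_le_mul_left _ (growthQ hQW hdW k hk x)
  have fin : ∀ k c X, 0 < k → A * Hf n (vanishingIdeal n W) (k * (x + e)) ≤ A * ((c * (k * x)) ^ e * X)
      → pδ ≤ A * c ^ e * X := by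
    intro k c X hk h
    have h1 := (key k hk).trans h
    have h2 : 0 < (k * x) ^ e := by positivity
    refine le_of_mul_le_mul_left (a := (k * x) ^ e) ?_ h2
    calc _ ≤ _ := h1
      _ = _ := by rw [mul_pow c]; ring
  have g1 : pδ ≤ A * (n + 1) ^ e * ((n + 2) ^ n * pη) := by
    apply fin pη (n + 1) ((n + 2) ^ n * pη) hpη0
    apply Nat.mul_le_mul_left
    have hT : 0 < (n + 1) * (pη * x) := by positivity
    have hm' : pη * (x + e) ≤ (n + 1) * (pη * x) := by
      have : x + e ≤ (n + 1) * x := by nlinarith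
      calc _ ≤ pη * ((n + 1) * x) := Nat.mul_le_mul_left _ this
        _ = _ := by ring
    refine (Hf_mono n _ hm').trans ?_
    refine (U hQW (partialDeg n W) _ m hmn hdW hPDW ?_ hT).trans (le_of_eq ?_)
    · intro i h1 h2
      exact Dvd.dvd.mul_left (Dvd.dvd.mul_right (Finset.dvd_prod_of_mem _ (Finset.mem_Icc.2 ⟨h1, h2⟩)) _) _
    · rw [← hpη, ← he]; ring
  have hbd : ∀ M ∈ { M | ∃ L : AffineSubspace ℂ (Fin n → ℂ),
      Module.finrank ℂ L.direction = n - dim n W ∧ (W ∩ ↑L).Finite ∧ (W ∩ ↑L).ncard = M },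
      M ≤ (n + 2) ^ n * (n + 1) ^ n * pη := by
    rintro M ⟨L, h1, h2, rfl⟩
    exact deg_le hW hmn hWd (partialDeg n W) hPDW L h1 h2
  have hdegle : degree n W ≤ (n + 2) ^ n * (n + 1) ^ n * pη := by
    unfold degree
    exact csSup_le' hbd
  obtain ⟨c, Δ, hc, L, l1, l2, l3⟩ := deg_low hW
  have hΔ : Δ ≤ degree n W := by
    refine l3.trans ?_
    unfold degree
    exact le_csSup ⟨_, hbd⟩ ⟨L, l1, l2, rfl⟩
  have g2 : pδ ≤ A * (n + 2) ^ e * Δ := by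
    apply fin (c + 1) (n + 2) Δ (by omega)
    apply Nat.mul_le_mul_left
    refine (hc _).trans ?_
    rw [hWd]
    apply Nat.mul_le_mul_right
    apply Nat.pow_le_pow_left
    have : x + e + 1 ≤ (n + 2) * x := by nlinarith
    calc _ = (c + 1) * (x + e + 1) := by ring
      _ ≤ (c + 1) * ((n + 2) * x) := Nat.mul_le_mul_left _ this
      _ = _ := by ring
  have e1 : (n + 1) ^ e ≤ (n + 1) ^ n := Nat.pow_le_pow_right (by omega) hen
  have e2 : (n + 2) ^ e ≤ (n + 2) ^ n := Nat.pow_le_pow_right (by omega) hen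
  refine ⟨_, rfl, ?_, ?_, ?_⟩
  · calc pδ ≤ A * (n + 2) ^ e * Δ := g2
      _ ≤ A * (n + 2) ^ n * degree n W := by gcongr
      _ = A * (n + 2) ^ n * 1 * degree n W := by ring
      _ ≤ _ := by gcongr; exact Nat.one_le_pow _ _ (by omega)
  · calc degree n W ≤ 1 * ((n + 2) ^ n * (n + 1) ^ n * pη) := by rw [one_mul]; exact hdegle
      _ ≤ A * ((n + 2) ^ n * (n + 1) ^ n * pδ) := by gcongr; exact hAp
      _ = _ := by ring
  · intro i hi
    refine ⟨hηle i hi, cancel_prod hηpos hηle ?_ i hi⟩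
    rw [← hpδ, ← hpη]
    calc pδ ≤ _ := g1
      _ ≤ A * (n + 1) ^ n * ((n + 2) ^ n * pη) := by gcongr
      _ = _ := by ring

end Fin1

/-- Theorem 5.5 of the paper: for polynomials `P₁, …, P_{n-d}` as in
Lemma 5.3, every `(n-m)`-dimensional irreducible component `W` of `Z(P₁, …, P_m)` containing
`V` satisfies `deg W ∼_n ∏_{i=1}^m δ_i(V)` and `δ_i(W) ∼_n δ_i(V)` for `1 ≤ i ≤ m`. -/
theorem statement17 (n : ℕ) :
    ∃ c C : ℝ, 0 < c ∧ 0 < C ∧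
      ∀ (V : Set (Fin n → ℂ)) (d : ℕ), IsIrredVariety n V → dim n V = d →
        ∀ P : ℕ → MvPolynomial (Fin n) ℂ,
          (∀ i ∈ Finset.Icc 1 (n - d),
            (P i).totalDegree = partialDeg n V i ∧
            MaxCompDimEq n (zeroLocusUpTo n P i) V (n - i) ∧
            (∃ V', IsMinimalVariety n V V' i ∧ V' ⊆ zeroLocusUpTo n P i)) →
          ∀ m ∈ Finset.Icc 1 (n - d),
            ∀ W, IsIrredComponent n W (zeroLocusUpTo n P m) → dim n W = n - m → V ⊆ W →
              (c * ∏ i ∈ Finset.Icc 1 m, (partialDeg n V i : ℝ) ≤ (degree n W : ℝ) ∧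
                (degree n W : ℝ) ≤ C * ∏ i ∈ Finset.Icc 1 m, (partialDeg n V i : ℝ)) ∧
              ∀ i ∈ Finset.Icc 1 m,
                c * (partialDeg n V i : ℝ) ≤ (partialDeg n W i : ℝ) ∧
                (partialDeg n W i : ℝ) ≤ C * (partialDeg n V i : ℝ) := by
  have hK0 : 0 < (2 * (n + 1)) ^ (n * n) * (n + 2) ^ n * (n + 1) ^ n := by positivity
  obtain ⟨K, hK⟩ : ∃ K, K = (2 * (n + 1)) ^ (n * n) * (n + 2) ^ n * (n + 1) ^ n := ⟨_, rfl⟩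
  rw [← hK] at hK0
  have hKr : (0 : ℝ) < K := by exact_mod_cast hK0
  have hK1 : (1 : ℝ) ≤ K := by exact_mod_cast hK0
  refine ⟨(K : ℝ)⁻¹, K, inv_pos.2 hKr, hKr, ?_⟩
  rintro V d hV rfl P hP m hm W hWc hWd hVW
  rw [Finset.mem_Icc] at hm
  obtain ⟨K', hK', h1, h2, h3⟩ := core V hV P hP m hm.1 hm.2 W hWc.1 hWc.2.1 hWd hVW
  rw [← hK] at hK'
  subst hK'
  refine ⟨⟨?_, ?_⟩, ?_⟩
  · rw [inv_mul_le_iff₀ hKr]; exact_mod_cast h1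
  · exact_mod_cast h2
  · intro i hi
    obtain ⟨a, b⟩ := h3 i hi
    refine ⟨?_, ?_⟩
    · rw [inv_mul_le_iff₀ hKr]; exact_mod_cast b
    · have a' : (partialDeg n W i : ℝ) ≤ partialDeg n V i := by exact_mod_cast a
      exact a'.trans (le_mul_of_one_le_left (Nat.cast_nonneg _) hK1)

end Paper
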